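/- Let $f_1,\dots,f_n$ be real analytic functions on a neighborhood of the origin in $\mathbb{R}^2$, none of them identically zero near the origin, and let $\gamma_1,\dots,\gamma_n$ be real numbers. Let $E\subseteq\mathbb{R}^2$ be either a disk $\{(x,y): x^2+y^2<r_0^2\}$ with $r_0>0$, or, for some $r_0>0$ and $m\ge 1$, a disjoint union of open sets $E_1,\dots,E_m$, where each $E_i$ is a connected region contained in the disk $x^2+y^2<r_0^2$ whose boundary consists of two curves joining the origin to the circle $x^2+y^2=r_0^2$ together with an arc of that circle. Here each such curve is an arc, starting at the origin and ending at its first point on the circle, of one half (of the form $x\ge 0$ or $x\le 0$, respectively $y\ge 0$ or $y\le 0$) of a graph $y=h(|x|^{1/N})$ or $x=h(|y|^{1/N})$, where $N$ is a positive integer and $h$ is real analytic with $h(0)=0$ ($N$ and $h$ may depend on the curve), and all $2m$ curves are pairwise disjoint apart from the origin. Suppose that $g(x,y)=\chi_E(x,y)\prod_{i=1}^n|f_i(x,y)|^{\gamma_i}$ is integrable on a neighborhood of the origin. Then there exist constants $c_1,c_2,c_3>0$, a real number $\epsilon>0$, and $d\in\{0,1\}$ such that for every $0<r<c_3$ one has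 $$c_1 r^{\epsilon}|\ln r|^d\le\int_{\{(x,y):\,x^2+y^2<r^2\}}g(x,y)\,dx\,dy\le c_2 r^{\epsilon}|\ln r|^d .$$ -/

import Mathlib

open MeasureTheory Real Set Filter
open scoped Topology

noncomputable section

/-- The open Euclidean disk `{(x,y) : x² + y² < r²}` (for `r > 0`). -/
def disk2 (r : ℝ) : Set (ℝ × ℝ) := {p : ℝ × ℝ | p.1 ^ 2 + p.2 ^ 2 < r ^ 2}

/-- The circle `{(x,y) : x² + y² = r²}`. -/
def circle2 (r : ℝ) : Set (ℝ × ℝ) := {p : ℝ × ℝ | p.1 ^ 2 + p.2 ^ 2 = r ^ 2}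

/-- The function `g = χ_E · ∏ᵢ |fᵢ|^(γᵢ)`. -/
def stdFun (n : ℕ) (f : Fin n → ℝ × ℝ → ℝ) (γ : Fin n → ℝ) (E : Set (ℝ × ℝ)) :
    ℝ × ℝ → ℝ :=
  E.indicator fun p => ∏ i, |f i p| ^ (γ i)

/-- `C` is an arc of one half of a graph `y = h(|x|^{1/N})` or `x = h(|y|^{1/N})`, with `h` real
analytic and `h 0 = 0`, that starts at the origin and ends where it first meets the circle of
radius `r₀`. The sign `σ` selects the half; `t` is the absolute value of the variable over which
the graph is taken. -/
def IsPuiseuxBdryCurve (r₀ : ℝ) (C : Set (ℝ × ℝ)) : Prop :=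
  ∃ (N : ℕ) (h : ℝ → ℝ) (σ a : ℝ) (c : ℝ → ℝ × ℝ),
    0 < N ∧ (σ = 1 ∨ σ = -1) ∧ 0 < a ∧
    AnalyticOnNhd ℝ h (Icc (0 : ℝ) (a ^ ((N : ℝ)⁻¹))) ∧ h 0 = 0 ∧
    ((∀ t, c t = (σ * t, h (t ^ ((N : ℝ)⁻¹)))) ∨ (∀ t, c t = (h (t ^ ((N : ℝ)⁻¹)), σ * t))) ∧
    (∀ t ∈ Ico (0 : ℝ) a, c t ∈ disk2 r₀) ∧ c a ∈ circle2 r₀ ∧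
    C = c '' Icc (0 : ℝ) a

/-- `D` is a region of the disk of radius `r₀` bounded by the curves `C₁`, `C₂` and an arc `A` of
the circle of radius `r₀`. (Both of the two regions cut out by `C₁` and `C₂` satisfy this.) -/
def IsRegionBoundedBy (r₀ : ℝ) (C₁ C₂ D : Set (ℝ × ℝ)) : Prop :=
  IsOpen D ∧ IsConnected D ∧ D ⊆ disk2 r₀ ∧
    ∃ A : Set (ℝ × ℝ), A ⊆ circle2 r₀ ∧ IsConnected A ∧ frontier D = C₁ ∪ C₂ ∪ A

/-- The admissible sets `E`: a disk centered at the origin, or a disjoint union of `m ≥ 1` open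
regions, each bounded by two curves joining the origin to the circle of radius `r₀` and an arc of
that circle, where all these curves are pairwise disjoint away from the origin. -/
def IsStdDomain (E : Set (ℝ × ℝ)) : Prop :=
  ∃ r₀ : ℝ, 0 < r₀ ∧
    (E = disk2 r₀ ∨
      ∃ (m : ℕ) (Es : Fin m → Set (ℝ × ℝ)) (Cs : Fin m → Fin 2 → Set (ℝ × ℝ)),
        0 < m ∧
        E = ⋃ i, Es i ∧
        (Pairwise fun i j => Disjoint (Es i) (Es j)) ∧
        (∀ i j, IsPuiseuxBdryCurve r₀ (Cs i j)) ∧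
        (∀ i, IsRegionBoundedBy r₀ (Cs i 0) (Cs i 1) (Es i)) ∧
        (Pairwise fun (q q' : Fin m × Fin 2) =>
          Disjoint (Cs q.1 q.2 \ {0}) (Cs q'.1 q'.2 \ {0})))

/-- The standard form of `g = χ_E ∏ |fᵢ|^(γᵢ)`. -/
structure StandardForm (n : ℕ) (f : Fin n → ℝ × ℝ → ℝ) (γ : Fin n → ℝ)
    (E : Set (ℝ × ℝ)) : Prop where
  analytic : ∃ U ∈ 𝓝 (0 : ℝ × ℝ), ∀ i, AnalyticOnNhd ℝ (f i) U
  nontriv : ∀ i, ¬ (∀ᶠ p in 𝓝 (0 : ℝ × ℝ), f i p = 0)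
  integ : ∃ U ∈ 𝓝 (0 : ℝ × ℝ), IntegrableOn (stdFun n f γ E) U
  domain : IsStdDomain E

end

/-!
For small `x > 0`, an analytic `f` is comparable to `x ^ k ∏ (|y - α(x)| + b(x))`, where `α` and
`b ≥ 0` are Puiseux germs. This is an induction on the order in `y`: after a Tschirnhaus shift, blow
up along the steepest slope of the Newton polygon. The limiting polynomial lacks its subleading term
without being a pure power, so its real roots have smaller multiplicity, and the induction
hypothesis applies at each of them.

The frontier of `E` lies on finitely many Puiseux graphs too, so these graphs and those of the `α`
cut a sector around the `x`-axis into regions on which `g` is comparable to a product of powers of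
`u + c(x)`, with `u` the height above the lower graph or below the upper one. Hence the integral of
`g` over a vertical slice is, for small `x`, either `0`, or `∞`, or comparable to
`x ^ s |log x| ^ d` with `d ≤ 1`. Integration in `x` and summation over the regions and over
reflected sectors preserve this trichotomy. Finally the mass of small disks is positive and finite
and tends to zero, which leaves only the third case, with a positive exponent.
-/

open Asymptotics

section Averaging

variable {E F : Type*} [NormedAddCommGroup E] [NormedSpace ℝ E]
  [NormedAddCommGroup F] [NormedSpace ℝ F]

/-- The average over `s ∈ [0, 1]` of the pullbacks of a formal multilinear series along a path of
linear maps `L s`; it represents `x ↦ ∫₀¹ g (L s x) ds` when `p` represents `g`. -/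
noncomputable def averagedSeries (p : FormalMultilinearSeries ℝ E F) (L : ℝ → E →L[ℝ] E) :
    FormalMultilinearSeries ℝ E F := fun n =>
  ∫ s in (0 : ℝ)..1, (p n).compContinuousLinearMap fun _ => L s

variable {p : FormalMultilinearSeries ℝ E F} {L : ℝ → E →L[ℝ] E}

theorem norm_averagedSeries_le (hL : ∀ s ∈ Ioc (0 : ℝ) 1, ‖L s‖ ≤ 1) (n : ℕ) :
    ‖averagedSeries p L n‖ ≤ ‖p n‖ := by
  have hbound : ∀ s ∈ uIoc (0 : ℝ) 1, ‖(p n).compContinuousLinearMap fun _ => L s‖ ≤ ‖p n‖ := by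
    intro s hs
    rw [uIoc_of_le zero_le_one] at hs
    refine (ContinuousMultilinearMap.norm_compContinuousLinearMap_le _ _).trans ?_
    exact mul_le_of_le_one_right (norm_nonneg _)
      (Finset.prod_le_one (fun _ _ => norm_nonneg _) fun _ _ => hL s hs)
  simpa only [averagedSeries, sub_zero, abs_one, mul_one] using
    intervalIntegral.norm_integral_le_of_norm_le_const hbound

theorem radius_le_radius_averagedSeries (hL : ∀ s ∈ Ioc (0 : ℝ) 1, ‖L s‖ ≤ 1) :
    p.radius ≤ (averagedSeries p L).radius := by
  refine ENNReal.le_of_forall_nnreal_lt fun ρ hρ => ?_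
  obtain ⟨C, -, hC⟩ := p.norm_mul_pow_le_of_lt_radius hρ
  refine (averagedSeries p L).le_radius_of_bound C fun n => le_trans ?_ (hC n)
  gcongr
  exact norm_averagedSeries_le hL n

theorem averagedSeries_apply_diag [CompleteSpace F] (hL : Continuous L) (n : ℕ) (y : E) :
    (averagedSeries p L n fun _ => y) = ∫ s in (0 : ℝ)..1, p n fun _ => L s y := by
  have hcont : Continuous fun s => (p n).compContinuousLinearMap fun _ => L s :=
    ((ContinuousMultilinearMap.compContinuousLinearMapContinuousMultilinear ℝ
      (fun _ : Fin n => E) (fun _ : Fin n => E) F).cont.comp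
        (continuous_pi fun _ => hL)).clm_apply continuous_const
  exact ((ContinuousMultilinearMap.apply ℝ (fun _ : Fin n => E) F
    fun _ => y).intervalIntegral_comp_comm (hcont.intervalIntegrable 0 1)).symm

theorem analyticAt_integral_comp_contraction [CompleteSpace F] {g : E → F}
    (hg : AnalyticAt ℝ g 0) (hLc : Continuous L) (hL : ∀ s ∈ Ioc (0 : ℝ) 1, ‖L s‖ ≤ 1) :
    AnalyticAt ℝ (fun x => ∫ s in (0 : ℝ)..1, g (L s x)) 0 := by
  obtain ⟨p, r, hp⟩ := hg
  refine ⟨averagedSeries p L, r, hp.r_le.trans (radius_le_radius_averagedSeries hL), hp.r_pos,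
    fun {y} hy => ?_⟩
  have hLy : ∀ s ∈ Ioc (0 : ℝ) 1, ‖L s y‖ ≤ ‖y‖ := fun s hs =>
    ((L s).le_of_opNorm_le (hL s hs) y).trans_eq (one_mul _)
  rw [Metric.mem_eball, edist_zero_right] at hy
  have hsummable : Summable fun n => ‖p n‖ * ‖y‖ ^ n :=
    p.summable_norm_mul_pow (r := ‖y‖₊) (hy.trans_le hp.r_le)
  simp only [averagedSeries_apply_diag hLc, zero_add]
  refine intervalIntegral.hasSum_integral_of_dominated_convergence
    (fun n _ => ‖p n‖ * ‖y‖ ^ n) (fun n => ?_) (fun n => ?_) (ae_of_all _ fun _ _ => hsummable)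
    intervalIntegrable_const (ae_of_all _ fun s hs => ?_)
  · exact ((p n).cont.comp (continuous_pi fun _ =>
      hLc.clm_apply continuous_const)).aestronglyMeasurable
  · refine ae_of_all _ fun s hs => ((p n).le_opNorm _).trans ?_
    rw [uIoc_of_le zero_le_one] at hs
    simp only [Finset.prod_const, Finset.card_univ, Fintype.card_fin]
    gcongr
    exact hLy s hs
  · rw [uIoc_of_le zero_le_one] at hs
    have hmem : L s y ∈ Metric.eball (0 : E) r := by
      rw [Metric.mem_eball, edist_zero_right]
      exact (enorm_le_iff_norm_le.2 (hLy s hs)).trans_lt hy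
    simpa only [zero_add] using hp.hasSum hmem

end Averaging

theorem norm_scale_snd_le {E : Type*} [SeminormedAddCommGroup E] {s : ℝ} (hs : |s| ≤ 1)
    (p : E × ℝ) : ‖(p.1, s * p.2)‖ ≤ ‖p‖ := by
  rw [Prod.norm_def, Prod.norm_def, norm_mul]
  exact max_le_max le_rfl (mul_le_of_le_one_left (norm_nonneg _) hs)

section Hadamard

variable {E F : Type*} [NormedAddCommGroup E] [NormedSpace ℝ E]
  [NormedAddCommGroup F] [NormedSpace ℝ F]

/-- The linear map `(x, y) ↦ (x, s y)`, which contracts the second variable when `|s| ≤ 1`. -/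
noncomputable def scaleSnd (s : ℝ) : E × ℝ →L[ℝ] E × ℝ :=
  (ContinuousLinearMap.inl ℝ E ℝ).comp (ContinuousLinearMap.fst ℝ E ℝ) +
    s • (ContinuousLinearMap.inr ℝ E ℝ).comp (ContinuousLinearMap.snd ℝ E ℝ)

theorem scaleSnd_apply (s : ℝ) (p : E × ℝ) : scaleSnd s p = (p.1, s * p.2) := by
  simp [scaleSnd]

theorem norm_scaleSnd_le_one {s : ℝ} (hs : |s| ≤ 1) : ‖scaleSnd (E := E) s‖ ≤ 1 := by
  refine ContinuousLinearMap.opNorm_le_bound _ zero_le_one fun p => ?_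
  rw [scaleSnd_apply, one_mul]
  exact norm_scale_snd_le hs p

theorem continuous_scaleSnd : Continuous (scaleSnd : ℝ → E × ℝ →L[ℝ] E × ℝ) := by
  unfold scaleSnd
  fun_prop

theorem analyticAt_comp_scaleSnd_average [CompleteSpace F] {g : E × ℝ → F}
    (hg : AnalyticAt ℝ g 0) :
    AnalyticAt ℝ (fun p : E × ℝ => ∫ s in (0 : ℝ)..1, g (p.1, s * p.2)) 0 := by
  simpa only [scaleSnd_apply] using analyticAt_integral_comp_contraction hg continuous_scaleSnd
    fun s hs => norm_scaleSnd_le_one (abs_le.2 ⟨by linarith [hs.1], hs.2⟩)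

theorem analyticAt_fderiv_snd [CompleteSpace F] {f : E × ℝ → F} {p : E × ℝ}
    (hf : AnalyticAt ℝ f p) : AnalyticAt ℝ (fun q => fderiv ℝ f q (0, 1)) p :=
  ((ContinuousLinearMap.apply ℝ F ((0, 1) : E × ℝ)).analyticAt _).fun_comp hf.fderiv

theorem hasDerivAt_snd_of_analyticAt {f : E × ℝ → F} {p : E × ℝ} (hf : AnalyticAt ℝ f p) :
    HasDerivAt (fun y => f (p.1, y)) (fderiv ℝ f p (0, 1)) p.2 :=
  HasFDerivAt.comp_hasDerivAt (f := fun y => (p.1, y)) p.2 hf.differentiableAt.hasFDerivAt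
    ((hasDerivAt_const _ _).prodMk (hasDerivAt_id _))

/-- Hadamard's lemma, from `f (x, y) - f (x, 0) = y ∫₀¹ ∂_y f (x, s y) ds`. -/
theorem exists_eventually_eq_add_snd_smul [CompleteSpace F] {f : E × ℝ → F}
    (hf : AnalyticAt ℝ f 0) :
    ∃ u : E × ℝ → F, AnalyticAt ℝ u 0 ∧ ∀ᶠ p in 𝓝 0, f p = f (p.1, 0) + p.2 • u p := by
  refine ⟨_, analyticAt_comp_scaleSnd_average (analyticAt_fderiv_snd hf), ?_⟩
  obtain ⟨ε, hε, hball⟩ := Metric.eventually_nhds_iff_ball.1 hf.eventually_analyticAt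
  filter_upwards [Metric.ball_mem_nhds _ hε] with p hp
  have hanalytic : ∀ s ∈ uIcc (0 : ℝ) 1, AnalyticAt ℝ f (p.1, s * p.2) := by
    intro s hs
    rw [uIcc_of_le zero_le_one] at hs
    refine hball _ ?_
    rw [mem_ball_zero_iff] at hp ⊢
    exact (norm_scale_snd_le (abs_le.2 ⟨by linarith [hs.1], hs.2⟩) p).trans_lt hp
  have hderiv : ∀ s ∈ uIcc (0 : ℝ) 1, HasDerivAt (fun s => f (p.1, s * p.2))
      (p.2 • fderiv ℝ f (p.1, s * p.2) (0, 1)) s := fun s hs =>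
    HasDerivAt.scomp (g₁ := fun y => f (p.1, y)) s
      (hasDerivAt_snd_of_analyticAt (hanalytic s hs)) (hasDerivAt_mul_const p.2)
  have hcont : ContinuousOn (fun s => p.2 • fderiv ℝ f (p.1, s * p.2) (0, 1)) (uIcc (0 : ℝ) 1) :=
    fun s hs => (continuousAt_const.smul (ContinuousAt.comp (f := fun s : ℝ => (p.1, s * p.2))
      (analyticAt_fderiv_snd (hanalytic s hs)).continuousAt (by fun_prop))).continuousWithinAt
  have hftc := intervalIntegral.integral_eq_sub_of_hasDerivAt hderiv hcont.intervalIntegrable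
  rw [intervalIntegral.integral_smul, one_mul, zero_mul] at hftc
  rw [hftc, add_sub_cancel]

theorem exists_eventually_eq_add_fst_smul [CompleteSpace F] {f : ℝ × E → F}
    (hf : AnalyticAt ℝ f 0) :
    ∃ u : ℝ × E → F, AnalyticAt ℝ u 0 ∧ ∀ᶠ p in 𝓝 0, f p = f (0, p.2) + p.1 • u p := by
  obtain ⟨u, hu, hfu⟩ := exists_eventually_eq_add_snd_smul (f := f ∘ Prod.swap)
    (AnalyticAt.comp (g := f) (f := Prod.swap) hf (analyticAt_snd.prod analyticAt_fst))
  have htendsto : Tendsto (Prod.swap : ℝ × E → E × ℝ) (𝓝 0) (𝓝 0) :=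
    Continuous.tendsto' continuous_swap _ _ rfl
  exact ⟨u ∘ Prod.swap, AnalyticAt.comp (g := u) (f := Prod.swap) hu
    (analyticAt_snd.prod analyticAt_fst), htendsto.eventually hfu⟩

end Hadamard

theorem eventually_eq_zero_of_forall_isBigO_pow {E F : Type*} [NormedAddCommGroup E]
    [NormedSpace ℝ E] [NormedAddCommGroup F] [NormedSpace ℝ F] {f : E → F}
    (hf : AnalyticAt ℝ f 0) (hflat : ∀ n : ℕ, f =O[𝓝 0] fun x => ‖x‖ ^ n) :
    ∀ᶠ x in 𝓝 0, f x = 0 := by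
  obtain ⟨p, hp⟩ := hf
  have hcoeff : ∀ n y, (p n fun _ => y) = 0 := by
    intro n
    induction n using Nat.strong_induction_on with
    | _ n ih =>
      have hpartial : ∀ y, p.partialSum (n + 1) y = p n fun _ => y := fun y =>
        Finset.sum_eq_single n
          (fun k hk hkn => ih k ((Finset.mem_range_succ_iff.1 hk).lt_of_ne hkn) y) (by simp)
      have hO := (hflat (n + 1)).sub (hp.isBigO_sub_partialSum_pow (n + 1))
      simp only [zero_add, hpartial, sub_sub_cancel] at hO
      exact hO.continuousMultilinearMap_apply_eq_zero
  filter_upwards [hp.eventually_hasSum] with y hy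
  simpa only [hcoeff, zero_add] using hy.unique (by simpa only [hcoeff] using hasSum_zero)

theorem exists_eventually_eq_pow_fst_mul {f : ℝ × ℝ → ℝ} (hf : AnalyticAt ℝ f 0)
    (hf0 : ¬ ∀ᶠ p in 𝓝 0, f p = 0) :
    ∃ (k d : ℕ) (g : ℝ × ℝ → ℝ), AnalyticAt ℝ g 0 ∧
      analyticOrderAt (fun y => g (0, y)) 0 = d ∧ ∀ᶠ p in 𝓝 0, f p = p.1 ^ k * g p := by
  by_contra hno
  have hdiv : ∀ k : ℕ, ∃ g : ℝ × ℝ → ℝ, AnalyticAt ℝ g 0 ∧ ∀ᶠ p in 𝓝 0, f p = p.1 ^ k * g p := by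
    intro k
    induction k with
    | zero => exact ⟨f, hf, by simp⟩
    | succ k ih =>
      obtain ⟨g, hg, hfg⟩ := ih
      have htop : analyticOrderAt (fun y => g (0, y)) 0 = ⊤ := by
        by_contra hne
        obtain ⟨d, hd⟩ := ENat.ne_top_iff_exists.1 hne
        exact hno ⟨k, d, g, hg, hd.symm, hfg⟩
      have hsnd : Tendsto (Prod.snd : ℝ × ℝ → ℝ) (𝓝 0) (𝓝 0) :=
        Continuous.tendsto' continuous_snd _ _ rfl
      obtain ⟨u, hu, hgu⟩ := exists_eventually_eq_add_fst_smul hg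
      refine ⟨u, hu, ?_⟩
      filter_upwards [hfg, hgu, hsnd.eventually (analyticOrderAt_eq_top.1 htop)] with p h1 h2 h3
      rw [h1, h2, h3, zero_add, smul_eq_mul, pow_succ, mul_assoc]
  refine hf0 (eventually_eq_zero_of_forall_isBigO_pow hf fun k => ?_)
  obtain ⟨g, hg, hfg⟩ := hdiv k
  have hfst : (Prod.fst : ℝ × ℝ → ℝ) =O[𝓝 0] fun p => ‖p‖ :=
    isBigO_of_le _ fun p => (norm_fst_le p).trans_eq (norm_norm p).symm
  calc f =ᶠ[𝓝 0] fun p => p.1 ^ k * g p := hfg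
    _ =O[𝓝 0] fun p => ‖p‖ ^ k * (1 : ℝ) := (hfst.pow k).mul (hg.continuousAt.isBigO_one ℝ)
    _ =ᶠ[𝓝 0] fun p => ‖p‖ ^ k := by simp only [mul_one, EventuallyEq.refl]

section Taylor

variable {E : Type*} [NormedAddCommGroup E] [NormedSpace ℝ E]

/-- The `k`-th Taylor coefficient of `y ↦ f (x, y)` at `y = 0`, as a function of `x`. -/
noncomputable def taylorCoeffSnd (f : E × ℝ → ℝ) (k : ℕ) (x : E) : ℝ :=
  iteratedDeriv k (fun y => f (x, y)) 0 / k.factorial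

theorem analyticAt_iteratedDeriv_snd (k : ℕ) {f : E × ℝ → ℝ} {p : E × ℝ}
    (hf : AnalyticAt ℝ f p) :
    AnalyticAt ℝ (fun q : E × ℝ => iteratedDeriv k (fun y => f (q.1, y)) q.2) p := by
  induction k with
  | zero => simpa only [iteratedDeriv_zero] using hf
  | succ k ih =>
    refine (analyticAt_fderiv_snd ih).congr ?_
    filter_upwards [ih.eventually_analyticAt] with q hq
    rw [iteratedDeriv_succ]
    exact (hasDerivAt_snd_of_analyticAt hq).deriv.symm

theorem analyticAt_taylorCoeffSnd (k : ℕ) {f : E × ℝ → ℝ} (hf : AnalyticAt ℝ f 0) :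
    AnalyticAt ℝ (taylorCoeffSnd f k) 0 :=
  (AnalyticAt.along_fst (p := ((0 : E), (0 : ℝ))) (analyticAt_iteratedDeriv_snd k hf)).div_const

theorem iteratedDeriv_sum_add_pow_mul {d k : ℕ} (hk : k < d) {f v : ℝ → ℝ} (a : ℕ → ℝ)
    (hv : AnalyticAt ℝ v 0)
    (hf : ∀ᶠ y in 𝓝 (0 : ℝ), f y = ∑ j ∈ Finset.range d, a j * y ^ j + y ^ d * v y) :
    iteratedDeriv k f 0 = k.factorial * a k := by
  rw [EventuallyEq.iteratedDeriv_eq k hf]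
  have hremainder : AnalyticAt ℝ (fun y => y ^ d * v y) 0 := by fun_prop
  have hremainder_zero : iteratedDeriv k (fun y => y ^ d * v y) 0 = 0 :=
    (natCast_le_analyticOrderAt_iff_iteratedDeriv_eq_zero hremainder).1
      ((natCast_le_analyticOrderAt hremainder).2 ⟨v, hv, by simp⟩) k hk
  rw [iteratedDeriv_fun_add (by fun_prop) hremainder.contDiffAt, hremainder_zero, add_zero,
    iteratedDeriv_fun_sum fun j _ => by fun_prop, Finset.sum_eq_single_of_mem k
      (Finset.mem_range.2 hk)]
  · rw [iteratedDeriv_const_mul_field, iteratedDeriv_pow]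
    simp [Nat.descFactorial_self, mul_comm]
  · intro j _ hj
    rw [iteratedDeriv_const_mul_field, iteratedDeriv_pow]
    rcases lt_or_gt_of_ne hj with h | h
    · simp [Nat.descFactorial_of_lt h]
    · simp [Nat.sub_ne_zero_of_lt h]

theorem eventually_taylorCoeffSnd_eq {d k : ℕ} (hk : k < d) {f u : E × ℝ → ℝ}
    {c : ℕ → E → ℝ} (hu : AnalyticAt ℝ u 0)
    (hf : ∀ᶠ p in 𝓝 (0 : E × ℝ),
      f p = ∑ k ∈ Finset.range d, c k p.1 * p.2 ^ k + p.2 ^ d * u p) :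
    ∀ᶠ x in 𝓝 0, taylorCoeffSnd f k x = c k x := by
  have hslice : ∀ᶠ x in 𝓝 (0 : E), ∀ᶠ y in 𝓝 (0 : ℝ),
      f (x, y) = ∑ k ∈ Finset.range d, c k x * y ^ k + y ^ d * u (x, y) := by
    rw [Prod.zero_eq_mk, nhds_prod_eq] at hf
    exact hf.curry
  have haxis : Tendsto (fun x : E => (x, (0 : ℝ))) (𝓝 0) (𝓝 0) :=
    Continuous.tendsto' (by fun_prop) _ _ rfl
  filter_upwards [hslice, haxis.eventually hu.eventually_analyticAt] with x hfx hux
  rw [taylorCoeffSnd, iteratedDeriv_sum_add_pow_mul hk (fun k => c k x) hux.along_snd hfx,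
    mul_div_cancel_left₀ _ (by positivity)]

theorem exists_eventually_eq_sum_mul_pow_snd_add (d : ℕ) {f : E × ℝ → ℝ}
    (hf : AnalyticAt ℝ f 0) :
    ∃ (c : ℕ → E → ℝ) (u : E × ℝ → ℝ), AnalyticAt ℝ u 0 ∧ ∀ᶠ p in 𝓝 (0 : E × ℝ),
      f p = ∑ k ∈ Finset.range d, c k p.1 * p.2 ^ k + p.2 ^ d * u p := by
  induction d with
  | zero => exact ⟨fun _ _ => 0, f, hf, by simp⟩
  | succ d ih =>
    obtain ⟨c, u, hu, hfu⟩ := ih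
    obtain ⟨v, hv, huv⟩ := exists_eventually_eq_add_snd_smul hu
    refine ⟨Function.update c d fun x => u (x, 0), v, hv, ?_⟩
    filter_upwards [hfu, huv] with p hfp hup
    have hlow : ∀ k ∈ Finset.range d,
        Function.update c d (fun x => u (x, 0)) k p.1 * p.2 ^ k = c k p.1 * p.2 ^ k := by
      intro k hk
      rw [Function.update_of_ne (Finset.mem_range.1 hk).ne]
    rw [hfp, hup, Finset.sum_range_succ, Finset.sum_congr rfl hlow, Function.update_self,
      smul_eq_mul]
    ring

theorem exists_eventually_eq_taylor_snd (d : ℕ) {f : E × ℝ → ℝ} (hf : AnalyticAt ℝ f 0) :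
    ∃ u : E × ℝ → ℝ, AnalyticAt ℝ u 0 ∧ ∀ᶠ p in 𝓝 (0 : E × ℝ),
      f p = ∑ k ∈ Finset.range d, taylorCoeffSnd f k p.1 * p.2 ^ k + p.2 ^ d * u p := by
  obtain ⟨c, u, hu, hfu⟩ := exists_eventually_eq_sum_mul_pow_snd_add d hf
  have hcoeff : ∀ᶠ x in 𝓝 (0 : E), ∀ k ∈ Finset.range d, taylorCoeffSnd f k x = c k x :=
    (Finset.eventually_all _).2 fun k hk =>
      eventually_taylorCoeffSnd_eq (Finset.mem_range.1 hk) hu hfu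
  have hfst : Tendsto (Prod.fst : E × ℝ → E) (𝓝 0) (𝓝 0) :=
    Continuous.tendsto' continuous_fst _ _ rfl
  refine ⟨u, hu, ?_⟩
  filter_upwards [hfu, hfst.eventually hcoeff] with p hfp hp
  rw [hfp, Finset.sum_congr rfl fun k hk => by rw [← hp k hk]]

theorem exists_analytic_implicit_snd [CompleteSpace E] {g : E × ℝ → ℝ} (hg : AnalyticAt ℝ g 0)
    (hg0 : g 0 = 0) (hderiv : deriv (fun y => g (0, y)) 0 ≠ 0) :
    ∃ ψ : E → ℝ, AnalyticAt ℝ ψ 0 ∧ ψ 0 = 0 ∧ ∀ᶠ x in 𝓝 0, g (x, ψ x) = 0 := by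
  have hfderiv : deriv (fun y => g (0, y)) 0 = fderiv ℝ g 0 (0, 1) :=
    (hasDerivAt_snd_of_analyticAt hg).deriv
  rw [hfderiv] at hderiv
  have hcd : ContDiffAt ℝ ⊤ g 0 := hg.contDiffAt
  have hinv : (fderiv ℝ g 0 ∘SL ContinuousLinearMap.inr ℝ E ℝ).IsInvertible :=
    ⟨ContinuousLinearEquiv.unitsEquivAut ℝ (Units.mk0 _ hderiv), by ext; simp⟩
  refine ⟨hcd.implicitFunction (by simp) hinv, ?_, hcd.implicitFunction_apply_self (by simp) hinv,
    ?_⟩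
  · exact (hcd.contDiffAt_implicitFunction (by simp) hinv).analyticAt
  · filter_upwards [hcd.eventually_apply_implicitFunction (by simp) hinv] with x hx
    rw [hx, hg0]

end Taylor

section Comparison

variable {α β E F : Type*} {l : Filter α}

theorem isTheta_of_eventually_bounds [Norm E] [SeminormedAddCommGroup F] {f : α → E} {g : α → F}
    {c C : ℝ} (hc : 0 < c) (h : ∀ᶠ p in l, c * ‖g p‖ ≤ ‖f p‖ ∧ ‖f p‖ ≤ C * ‖g p‖) :
    f =Θ[l] g :=
  ⟨IsBigO.of_bound C (h.mono fun _ hp => hp.2),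
    IsBigO.of_bound c⁻¹ (h.mono fun _ hp => (le_inv_mul_iff₀ hc).2 hp.1)⟩

theorem isTheta_comp_tendsto [Norm E] [Norm F] {l' : Filter β} {f : α → E} {g : α → F}
    (h : f =Θ[l] g) {k : β → α} (hk : Tendsto k l' l) :
    (fun x => f (k x)) =Θ[l'] fun x => g (k x) :=
  ⟨h.1.comp_tendsto hk, h.2.comp_tendsto hk⟩

theorem isTheta_one_of_tendsto {𝕜 : Type*} [NormedField 𝕜] {f : α → 𝕜} {c : 𝕜}
    (h : Tendsto f l (𝓝 c)) (hc : c ≠ 0) : f =Θ[l] fun _ => (1 : 𝕜) :=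
  (isTheta_of_div_tendsto_nhds_ne_zero (by simpa only [div_one] using h) hc).symm

theorem isTheta_of_inf_principal_compl [SeminormedAddCommGroup E] [SeminormedAddCommGroup F]
    {f : α → E} {g : α → F} (s : Set α) (hs : f =Θ[l ⊓ 𝓟 s] g) (hsc : f =Θ[l ⊓ 𝓟 sᶜ] g) :
    f =Θ[l] g := by
  have h := hs.sup hsc
  rwa [← inf_sup_left, sup_principal, union_compl_self, principal_univ, inf_top_eq] at h

theorem isTheta_prod_principal_of_isCompact [TopologicalSpace β] [SeminormedAddCommGroup E]
    [SeminormedAddCommGroup F] {f : α × β → E} {g : α × β → F} {K : Set β} (hK : IsCompact K)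
    (h : ∀ z ∈ K, f =Θ[l ×ˢ 𝓝 z] g) : f =Θ[l ×ˢ 𝓟 K] g := by
  refine hK.induction_on (p := fun s => f =Θ[l ×ˢ 𝓟 s] g) ?_ ?_ ?_ ?_
  · simp
  · exact fun s t hst ht => ht.mono (prod_mono le_rfl (principal_mono.2 hst))
  · intro s t hs ht
    rw [← sup_principal, prod_sup]
    exact hs.sup ht
  · intro z hz
    obtain ⟨⟨c, hc⟩, ⟨c', hc'⟩⟩ := (h z hz).imp IsBigO.bound IsBigO.bound
    obtain ⟨P, hP, Q, hQ, hPQ⟩ := eventually_prod_iff.1 (hc.and hc')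
    refine ⟨{y | Q y}, mem_nhdsWithin_of_mem_nhds hQ, ?_⟩
    have hbounds : ∀ᶠ q in l ×ˢ 𝓟 {y | Q y}, ‖f q‖ ≤ c * ‖g q‖ ∧ ‖g q‖ ≤ c' * ‖f q‖ :=
      eventually_prod_iff.2 ⟨P, hP, Q, eventually_principal.2 fun _ hy => hy,
        fun hx _ hy => hPQ hx hy⟩
    exact ⟨IsBigO.of_bound c (hbounds.mono fun _ hq => hq.1),
      IsBigO.of_bound c' (hbounds.mono fun _ hq => hq.2)⟩

end Comparison

theorem nhdsGT_zero_prod_nhds_zero_le : 𝓝[>] (0 : ℝ) ×ˢ 𝓝 (0 : ℝ) ≤ 𝓝 (0 : ℝ × ℝ) := by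
  rw [Prod.zero_eq_mk, nhds_prod_eq]
  exact prod_mono nhdsWithin_le_nhds le_rfl

theorem tendsto_pow_nhdsGT_zero {N : ℕ} (hN : 0 < N) :
    Tendsto (fun t : ℝ => t ^ N) (𝓝[>] 0) (𝓝[>] 0) := by
  have hcont : Continuous fun t : ℝ => t ^ N := continuous_pow N
  exact tendsto_nhdsWithin_iff.2 ⟨(hcont.tendsto' _ _ (zero_pow hN.ne')).mono_left
    nhdsWithin_le_nhds, eventually_mem_nhdsWithin.mono fun _ ht => pow_pos (mem_Ioi.1 ht) N⟩

theorem tendsto_root_nhdsGT_zero {N : ℕ} (hN : 0 < N) :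
    Tendsto (fun x : ℝ => x ^ (N : ℝ)⁻¹) (𝓝[>] 0) (𝓝[>] 0) := by
  have hexp : (0 : ℝ) < (N : ℝ)⁻¹ := by positivity
  have hcont : Continuous fun x : ℝ => x ^ (N : ℝ)⁻¹ := Real.continuous_rpow_const hexp.le
  exact tendsto_nhdsWithin_iff.2 ⟨(hcont.tendsto' _ _ (Real.zero_rpow hexp.ne')).mono_left
    nhdsWithin_le_nhds, eventually_mem_nhdsWithin.mono fun _ ht => rpow_pos_of_pos ht _⟩

/-- The germs at `0+` of Puiseux series, that is, of functions `x ↦ A (x ^ (1 / N))` with `A` real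
analytic at `0`. The substitution `x = t ^ N` avoids fractional powers in the definition. -/
def IsPuiseux (a : ℝ → ℝ) : Prop :=
  ∃ N : ℕ, 0 < N ∧ ∃ A : ℝ → ℝ, AnalyticAt ℝ A 0 ∧ ∀ᶠ t in 𝓝[>] (0 : ℝ), a (t ^ N) = A t

namespace IsPuiseux

variable {a b : ℝ → ℝ}

theorem exists_eq_comp_root (ha : IsPuiseux a) : ∃ N : ℕ, 0 < N ∧ ∃ A : ℝ → ℝ,
    AnalyticAt ℝ A 0 ∧ ∀ᶠ x in 𝓝[>] (0 : ℝ), a x = A (x ^ (N : ℝ)⁻¹) := by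
  obtain ⟨N, hN, A, hA, haA⟩ := ha
  refine ⟨N, hN, A, hA, ?_⟩
  filter_upwards [(tendsto_root_nhdsGT_zero hN).eventually haA, self_mem_nhdsWithin]
    with x hx (hx0 : 0 < x)
  rwa [Real.rpow_inv_natCast_pow hx0.le hN.ne'] at hx

theorem congr (ha : IsPuiseux a) (hab : b =ᶠ[𝓝[>] 0] a) : IsPuiseux b := by
  obtain ⟨N, hN, A, hA, haA⟩ := ha
  refine ⟨N, hN, A, hA, ?_⟩
  filter_upwards [(tendsto_pow_nhdsGT_zero hN).eventually hab, haA] with t hba haA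
  rw [hba, haA]

theorem exists_common_root (ha : IsPuiseux a) (hb : IsPuiseux b) : ∃ N : ℕ, 0 < N ∧
    ∃ A B : ℝ → ℝ, AnalyticAt ℝ A 0 ∧ AnalyticAt ℝ B 0 ∧
      ∀ᶠ t in 𝓝[>] (0 : ℝ), a (t ^ N) = A t ∧ b (t ^ N) = B t := by
  obtain ⟨N, hN, A, hA, haA⟩ := ha
  obtain ⟨M, hM, B, hB, hbB⟩ := hb
  refine ⟨N * M, Nat.mul_pos hN hM, fun t => A (t ^ M), fun t => B (t ^ N), ?_, ?_, ?_⟩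
  · exact AnalyticAt.fun_comp (f := fun t : ℝ => t ^ M) (by simpa [hM.ne'] using hA)
      (by fun_prop)
  · exact AnalyticAt.fun_comp (f := fun t : ℝ => t ^ N) (by simpa [hN.ne'] using hB)
      (by fun_prop)
  · filter_upwards [(tendsto_pow_nhdsGT_zero hM).eventually haA,
      (tendsto_pow_nhdsGT_zero hN).eventually hbB] with t haA hbB
    exact ⟨by rw [mul_comm N M, pow_mul, haA], by rw [pow_mul, hbB]⟩

theorem of_analyticAt (ha : AnalyticAt ℝ a 0) : IsPuiseux a :=
  ⟨1, one_pos, a, ha, by simp⟩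

theorem const (c : ℝ) : IsPuiseux fun _ => c :=
  of_analyticAt analyticAt_const

theorem id : IsPuiseux fun x => x :=
  of_analyticAt analyticAt_id

theorem add (ha : IsPuiseux a) (hb : IsPuiseux b) : IsPuiseux fun x => a x + b x := by
  obtain ⟨N, hN, A, B, hA, hB, h⟩ := exists_common_root ha hb
  exact ⟨N, hN, fun t => A t + B t, by fun_prop, h.mono fun t ht => by simp only [ht.1, ht.2]⟩

theorem mul (ha : IsPuiseux a) (hb : IsPuiseux b) : IsPuiseux fun x => a x * b x := by
  obtain ⟨N, hN, A, B, hA, hB, h⟩ := exists_common_root ha hb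
  exact ⟨N, hN, fun t => A t * B t, by fun_prop, h.mono fun t ht => by simp only [ht.1, ht.2]⟩

theorem neg (ha : IsPuiseux a) : IsPuiseux fun x => -a x := by
  simpa only [neg_one_mul] using (const (-1)).mul ha

theorem sub (ha : IsPuiseux a) (hb : IsPuiseux b) : IsPuiseux fun x => a x - b x := by
  simpa only [sub_eq_add_neg] using ha.add hb.neg

theorem comp_root (ha : IsPuiseux a) {q : ℕ} (hq : 0 < q) :
    IsPuiseux fun x => a (x ^ (q : ℝ)⁻¹) := by
  obtain ⟨N, hN, A, hA, haA⟩ := ha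
  refine ⟨N * q, Nat.mul_pos hN hq, A, hA, ?_⟩
  filter_upwards [haA, self_mem_nhdsWithin] with t haA (ht : 0 < t)
  rw [pow_mul, Real.pow_rpow_inv_natCast (by positivity) hq.ne', haA]

theorem exists_tendsto (ha : IsPuiseux a) : ∃ l, Tendsto a (𝓝[>] 0) (𝓝 l) := by
  obtain ⟨N, hN, A, hA, haA⟩ := ha.exists_eq_comp_root
  exact ⟨A 0, ((hA.continuousAt.mono_left nhdsWithin_le_nhds).comp
    (tendsto_root_nhdsGT_zero hN)).congr' (haA.mono fun _ hx => hx.symm)⟩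

theorem eventually_eq_zero_or_exists_tendsto_div_rpow (ha : IsPuiseux a) :
    (∀ᶠ x in 𝓝[>] (0 : ℝ), a x = 0) ∨
      ∃ q c : ℝ, c ≠ 0 ∧ Tendsto (fun x => a x / x ^ q) (𝓝[>] 0) (𝓝 c) := by
  obtain ⟨N, hN, A, hA, haA⟩ := ha.exists_eq_comp_root
  have hroot := tendsto_root_nhdsGT_zero hN
  by_cases htop : analyticOrderAt A 0 = ⊤
  · left
    filter_upwards [haA, hroot.eventually
      ((analyticOrderAt_eq_top.1 htop).filter_mono nhdsWithin_le_nhds)] with x haA hA0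
    rw [haA, hA0]
  · right
    obtain ⟨m, hm⟩ := ENat.ne_top_iff_exists.1 htop
    obtain ⟨g, hg, hg0, hAg⟩ := (hA.analyticOrderAt_eq_natCast).1 hm.symm
    refine ⟨(N : ℝ)⁻¹ * m, g 0, hg0, ?_⟩
    refine ((hg.continuousAt.mono_left nhdsWithin_le_nhds).comp hroot).congr' ?_
    filter_upwards [haA, hroot.eventually (hAg.filter_mono nhdsWithin_le_nhds),
      self_mem_nhdsWithin] with x haA hAg (hx : 0 < x)
    have hpos : 0 < x ^ (N : ℝ)⁻¹ := rpow_pos_of_pos hx _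
    rw [haA, hAg, sub_zero, Real.rpow_mul hx.le, Real.rpow_natCast, smul_eq_mul, Function.comp,
      mul_div_cancel_left₀ _ (pow_ne_zero m hpos.ne')]

theorem eventually_sign (ha : IsPuiseux a) : (∀ᶠ x in 𝓝[>] (0 : ℝ), a x = 0) ∨
    (∀ᶠ x in 𝓝[>] (0 : ℝ), 0 < a x) ∨ ∀ᶠ x in 𝓝[>] (0 : ℝ), a x < 0 := by
  refine ha.eventually_eq_zero_or_exists_tendsto_div_rpow.imp_right ?_
  rintro ⟨q, c, hc, hlim⟩
  have hrpow : ∀ᶠ x in 𝓝[>] (0 : ℝ), 0 < x ^ q :=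
    eventually_mem_nhdsWithin.mono fun x hx => rpow_pos_of_pos hx q
  rcases lt_or_gt_of_ne hc with hc | hc
  · right
    filter_upwards [hlim.eventually_lt_const hc, hrpow] with x hx hxq
    exact (div_lt_iff₀ hxq).1 hx |>.trans_eq (zero_mul _)
  · left
    filter_upwards [hlim.eventually_const_lt hc, hrpow] with x hx hxq
    exact (div_pos_iff_of_pos_right hxq).1 hx

theorem eventually_lt_or_le (ha : IsPuiseux a) (hb : IsPuiseux b) :
    (∀ᶠ x in 𝓝[>] (0 : ℝ), a x < b x) ∨ ∀ᶠ x in 𝓝[>] (0 : ℝ), b x ≤ a x := by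
  rcases (hb.sub ha).eventually_sign with h | h | h
  · exact Or.inr (h.mono fun x hx => (sub_eq_zero.1 hx).le)
  · exact Or.inl (h.mono fun x hx => sub_pos.1 hx)
  · exact Or.inr (h.mono fun x hx => (sub_neg.1 hx).le)

theorem abs (ha : IsPuiseux a) : IsPuiseux fun x => |a x| := by
  rcases ha.eventually_lt_or_le (const 0) with h | h
  · exact ha.neg.congr (h.mono fun x hx => abs_of_neg hx)
  · exact ha.congr (h.mono fun x hx => abs_of_nonneg hx)

theorem exists_isTheta_rpow (ha : IsPuiseux a) (hpos : ∀ᶠ x in 𝓝[>] (0 : ℝ), 0 < a x) :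
    ∃ q : ℝ, a =Θ[𝓝[>] 0] fun x => x ^ q := by
  rcases ha.eventually_eq_zero_or_exists_tendsto_div_rpow with h | ⟨q, c, hc, h⟩
  · obtain ⟨x, hx0, hxpos⟩ := (h.and hpos).exists
    exact absurd hx0 hxpos.ne'
  · exact ⟨q, (isTheta_of_div_tendsto_nhds_ne_zero h hc).symm⟩

theorem eventually_continuousAt (ha : IsPuiseux a) :
    ∀ᶠ x in 𝓝[>] (0 : ℝ), ContinuousAt a x := by
  obtain ⟨N, hN, A, hA, haA⟩ := ha.exists_eq_comp_root
  filter_upwards [eventually_eventually_nhdsWithin.2 haA, (tendsto_root_nhdsGT_zero hN).eventually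
    (hA.eventually_analyticAt.filter_mono nhdsWithin_le_nhds), self_mem_nhdsWithin]
    with x haA hAx (hx : 0 < x)
  rw [isOpen_Ioi.nhdsWithin_eq hx] at haA
  refine ContinuousAt.congr ?_ (haA.mono fun _ h => h.symm)
  exact ContinuousAt.comp (f := fun x : ℝ => x ^ (N : ℝ)⁻¹) hAx.continuousAt
    (Real.continuousAt_rpow_const _ _ (Or.inl hx.ne'))

end IsPuiseux

theorem isTheta_finsetProd_of_isTheta_one {α ι 𝕜 : Type*} [NormedField 𝕜]
    {l : Filter α} {f : ι → α → 𝕜} {s : Finset ι} {i : ι}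
    (hone : ∀ j ∈ s, j ≠ i → f j =Θ[l] fun _ => (1 : 𝕜))
    (hi : i ∉ s → f i =Θ[l] fun _ => (1 : 𝕜)) : (fun p => ∏ j ∈ s, f j p) =Θ[l] f i := by
  classical
  have hprod : (fun p => ∏ j ∈ s, f j p) =Θ[l] fun p => ∏ j ∈ s, if j = i then f i p else 1 := by
    refine IsTheta.finsetProd fun j hj => ?_
    by_cases hji : j = i
    · simpa only [hji, if_true] using isTheta_rfl
    · simpa only [hji, if_false] using hone j hj hji
  simp only [Finset.prod_ite_eq'] at hprod
  by_cases his : i ∈ s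
  · simpa only [his, if_true] using hprod
  · simp only [his, if_false] at hprod
    exact hprod.trans (hi his).symm

theorem analyticOrderAt_polynomial_eval_const_add {Q : Polynomial ℝ} (hQ : Q ≠ 0) (z : ℝ) :
    analyticOrderAt (fun w => Q.eval (z + w)) 0 = Q.rootMultiplicity z := by
  have hanalytic : ∀ R : Polynomial ℝ, AnalyticAt ℝ (fun w => R.eval (z + w)) 0 := fun R => by
    simpa only [Polynomial.coe_aeval_eq_eval] using
      AnalyticAt.aeval_polynomial (f := fun w : ℝ => z + w) (z := 0) (by fun_prop) R
  obtain ⟨R, hR, hdvd⟩ := Polynomial.exists_eq_pow_rootMultiplicity_mul_and_not_dvd Q hQ z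
  rw [(hanalytic Q).analyticOrderAt_eq_natCast]
  refine ⟨fun w => R.eval (z + w), hanalytic R, ?_, Eventually.of_forall fun w => ?_⟩
  · simpa only [add_zero, Polynomial.dvd_iff_isRoot, Polynomial.IsRoot.def] using hdvd
  · conv_lhs => rw [hR]
    simp

section RootProducts

/-- A factor `|y - α(x)| + b(x)`, given by Puiseux germs `α` and `b ≥ 0`. Such a factor is
comparable to the absolute value of `y` minus a complex Puiseux root with real part `α` and
imaginary part `± b`. -/
structure PuiseuxFactor where
  center : ℝ → ℝ
  width : ℝ → ℝ
  isPuiseux_center : IsPuiseux center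
  isPuiseux_width : IsPuiseux width
  width_nonneg : ∀ᶠ x in 𝓝[>] (0 : ℝ), 0 ≤ width x

namespace PuiseuxFactor

/-- The function `(x, y) ↦ |y - α(x)| + b(x)`. -/
def eval (ρ : PuiseuxFactor) (p : ℝ × ℝ) : ℝ := |p.2 - ρ.center p.1| + ρ.width p.1

/-- The factor with constant center `a` and width `b`. -/
def const (a : ℝ) {b : ℝ} (hb : 0 ≤ b) : PuiseuxFactor where
  center _ := a
  width _ := b
  isPuiseux_center := .const a
  isPuiseux_width := .const b
  width_nonneg := Eventually.of_forall fun _ => hb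

/-- The factor translated along the graph of `ψ`. -/
def translate {ψ : ℝ → ℝ} (hψ : IsPuiseux ψ) (ρ : PuiseuxFactor) : PuiseuxFactor where
  center x := ψ x + ρ.center x
  width := ρ.width
  isPuiseux_center := hψ.add ρ.isPuiseux_center
  isPuiseux_width := ρ.isPuiseux_width
  width_nonneg := ρ.width_nonneg

theorem tendsto_eval (ρ : PuiseuxFactor) {a b : ℝ} (ha : Tendsto ρ.center (𝓝[>] 0) (𝓝 a))
    (hb : Tendsto ρ.width (𝓝[>] 0) (𝓝 b)) (z : ℝ) :
    Tendsto ρ.eval (𝓝[>] 0 ×ˢ 𝓝 z) (𝓝 (|z - a| + b)) :=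
  ((tendsto_snd.sub (ha.comp tendsto_fst)).abs).add (hb.comp tendsto_fst)

theorem isTheta_eval_one_of_ne (ρ : PuiseuxFactor) {a z : ℝ}
    (ha : Tendsto ρ.center (𝓝[>] 0) (𝓝 a)) (hz : z ≠ a) :
    ρ.eval =Θ[𝓝[>] 0 ×ˢ 𝓝 z] fun _ => (1 : ℝ) := by
  obtain ⟨b, hb⟩ := ρ.isPuiseux_width.exists_tendsto
  have hb0 : 0 ≤ b := ge_of_tendsto hb ρ.width_nonneg
  exact isTheta_one_of_tendsto (ρ.tendsto_eval ha hb z)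
    (add_pos_of_pos_of_nonneg (abs_pos.2 (sub_ne_zero.2 hz)) hb0).ne'

theorem isTheta_eval_const_one (a z : ℝ) {b : ℝ} (hb : 0 < b) :
    (const a hb.le).eval =Θ[𝓝[>] 0 ×ˢ 𝓝 z] fun _ => (1 : ℝ) :=
  isTheta_one_of_tendsto ((const a hb.le).tendsto_eval tendsto_const_nhds tendsto_const_nhds z)
    (by positivity)

theorem exists_forall_eventually_abs_le (M : Multiset PuiseuxFactor) : ∃ C : ℝ,
    ∀ ρ ∈ M, ∀ᶠ x in 𝓝[>] (0 : ℝ), |ρ.center x| ≤ C ∧ |ρ.width x| ≤ C := by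
  induction M using Multiset.induction_on with
  | empty => exact ⟨0, by simp⟩
  | cons ρ M ih =>
    obtain ⟨C, hC⟩ := ih
    obtain ⟨a, ha⟩ := ρ.isPuiseux_center.exists_tendsto
    obtain ⟨b, hb⟩ := ρ.isPuiseux_width.exists_tendsto
    refine ⟨max C (max (|a| + 1) (|b| + 1)), fun ρ' hρ' => ?_⟩
    rcases Multiset.mem_cons.1 hρ' with rfl | hρ'
    · filter_upwards [ha.abs.eventually_lt_const (lt_add_one _),
        hb.abs.eventually_lt_const (lt_add_one _)] with x hax hbx
      exact ⟨hax.le.trans ((le_max_left _ _).trans (le_max_right _ _)),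
        hbx.le.trans ((le_max_right _ _).trans (le_max_right _ _))⟩
    · filter_upwards [hC ρ' hρ'] with x hx
      exact ⟨hx.1.trans (le_max_left _ _), hx.2.trans (le_max_left _ _)⟩

end PuiseuxFactor

/-- The product of the factors `|y - α(x)| + b(x)` in a multiset. -/
def rootProd (M : Multiset PuiseuxFactor) (p : ℝ × ℝ) : ℝ :=
  (M.map fun ρ => ρ.eval p).prod

/-- `f` is comparable, for small `x > 0` and small `y`, to a product of `d` factors
`|y - α(x)| + b(x)` with `α(0+) = 0`. -/
def HasRootForm (d : ℕ) (f : ℝ × ℝ → ℝ) : Prop :=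
  ∃ M : Multiset PuiseuxFactor, M.card = d ∧ (∀ ρ ∈ M, Tendsto ρ.center (𝓝[>] 0) (𝓝 0)) ∧
    f =Θ[𝓝[>] 0 ×ˢ 𝓝 0] rootProd M

theorem rootProd_add (M M' : Multiset PuiseuxFactor) (p : ℝ × ℝ) :
    rootProd (M + M') p = rootProd M p * rootProd M' p := by
  simp [rootProd]

theorem rootProd_sum {ι : Type*} (s : Finset ι) (M : ι → Multiset PuiseuxFactor) (p : ℝ × ℝ) :
    rootProd (∑ i ∈ s, M i) p = ∏ i ∈ s, rootProd (M i) p := by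
  classical
  induction s using Finset.induction_on with
  | empty => simp [rootProd]
  | insert i s hi ih => rw [Finset.sum_insert hi, rootProd_add, ih, Finset.prod_insert hi]

theorem rootProd_map_translate {ψ : ℝ → ℝ} (hψ : IsPuiseux ψ) (M : Multiset PuiseuxFactor)
    (p : ℝ × ℝ) :
    rootProd (M.map (PuiseuxFactor.translate hψ)) p = rootProd M (p.1, p.2 - ψ p.1) := by
  rw [rootProd, rootProd, Multiset.map_map]
  refine congrArg _ (Multiset.map_congr rfl fun ρ _ => ?_)
  simp only [Function.comp_apply, PuiseuxFactor.eval, PuiseuxFactor.translate, sub_sub]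

theorem isTheta_rootProd_pow_card {l : Filter (ℝ × ℝ)} {g : ℝ × ℝ → ℝ} {M : Multiset PuiseuxFactor}
    (h : ∀ ρ ∈ M, ρ.eval =Θ[l] g) : rootProd M =Θ[l] fun p => g p ^ M.card := by
  have hprod := IsTheta.multisetProd (g := fun _ => g) h
  simp only [Multiset.map_const', Multiset.prod_replicate] at hprod
  exact hprod

theorem isTheta_rootProd_one {l : Filter (ℝ × ℝ)} {M : Multiset PuiseuxFactor}
    (h : ∀ ρ ∈ M, ρ.eval =Θ[l] fun _ => (1 : ℝ)) : rootProd M =Θ[l] fun _ => (1 : ℝ) := by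
  simpa only [one_pow] using isTheta_rootProd_pow_card h

theorem HasRootForm.of_comp_add {d : ℕ} {f : ℝ × ℝ → ℝ} {ψ : ℝ → ℝ} (hψ : AnalyticAt ℝ ψ 0)
    (hψ0 : ψ 0 = 0) (h : HasRootForm d fun p => f (p.1, p.2 + ψ p.1)) : HasRootForm d f := by
  obtain ⟨M, hcard, hcenter, hM⟩ := h
  have hψlim : Tendsto ψ (𝓝[>] 0) (𝓝 0) := by
    simpa only [hψ0] using hψ.continuousAt.tendsto.mono_left nhdsWithin_le_nhds
  refine ⟨M.map (PuiseuxFactor.translate (.of_analyticAt hψ)), by simpa using hcard, ?_, ?_⟩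
  · intro ρ hρ
    obtain ⟨ρ', hρ', rfl⟩ := Multiset.mem_map.1 hρ
    simpa only [add_zero, PuiseuxFactor.translate] using hψlim.add (hcenter ρ' hρ')
  · have hshift : Tendsto (fun p : ℝ × ℝ => (p.1, p.2 - ψ p.1)) (𝓝[>] 0 ×ˢ 𝓝 0)
        (𝓝[>] 0 ×ˢ 𝓝 0) := by
      refine tendsto_fst.prodMk ?_
      simpa only [sub_zero, Function.comp_def] using tendsto_snd.sub (hψlim.comp tendsto_fst)
    simpa only [sub_add_cancel, ← rootProd_map_translate (.of_analyticAt hψ)] using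
      isTheta_comp_tendsto hM hshift

theorem hasRootForm_of_eventually_eq_pow_snd_mul {d : ℕ} {f u : ℝ × ℝ → ℝ}
    (hu : ContinuousAt u 0) (hu0 : u 0 ≠ 0) (hf : ∀ᶠ p in 𝓝 0, f p = p.2 ^ d * u p) :
    HasRootForm d f := by
  refine ⟨Multiset.replicate d (.const 0 le_rfl), Multiset.card_replicate _ _, ?_, ?_⟩
  · intro ρ hρ
    rw [Multiset.eq_of_mem_replicate hρ]
    exact tendsto_const_nhds
  · have hf' : f =ᶠ[𝓝[>] 0 ×ˢ 𝓝 0] fun p => p.2 ^ d * u p :=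
      hf.filter_mono nhdsGT_zero_prod_nhds_zero_le
    have hu1 : u =Θ[𝓝[>] 0 ×ˢ 𝓝 0] fun _ => (1 : ℝ) :=
      isTheta_one_of_tendsto (hu.mono_left nhdsGT_zero_prod_nhds_zero_le) hu0
    have hpow : (fun p : ℝ × ℝ => p.2 ^ d) =Θ[𝓝[>] 0 ×ˢ 𝓝 0] fun p => |p.2| ^ d :=
      .of_norm_eventuallyEq_norm (Eventually.of_forall fun p => by simp)
    refine hf'.trans_isTheta ((hpow.mul hu1).trans_eventuallyEq (Eventually.of_forall fun p => ?_))
    simp [rootProd, PuiseuxFactor.eval, PuiseuxFactor.const]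

/-- Away from the finitely many `z ∈ s`, the shifted products contribute bounded factors, so local
products at the points of the line `x = 0` multiply up to one that serves all of them. -/
theorem exists_rootProd_of_forall_hasRootForm {F : ℝ × ℝ → ℝ} {d : ℕ} {μ : ℝ → ℕ}
    (hF : ∀ z, HasRootForm (μ z) fun p => F (p.1, z + p.2)) {s : Finset ℝ}
    (hs : ∀ z ∉ s, μ z = 0) (hsum : ∑ z ∈ s, μ z ≤ d) :
    ∃ M : Multiset PuiseuxFactor, M.card = d ∧ ∀ z, F =Θ[𝓝[>] 0 ×ˢ 𝓝 z] rootProd M := by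
  choose M hcard hcenter hM using hF
  let N : ℝ → Multiset PuiseuxFactor := fun z => (M z).map (PuiseuxFactor.translate (.const z))
  let ones := Multiset.replicate (d - ∑ z ∈ s, μ z) (PuiseuxFactor.const 0 zero_le_one)
  refine ⟨∑ z ∈ s, N z + ones, ?_, fun z => ?_⟩
  · simp only [N, ones, Multiset.card_add, Multiset.card_sum, Multiset.card_map,
      Multiset.card_replicate, hcard]
    omega
  have hlocal : F =Θ[𝓝[>] 0 ×ˢ 𝓝 z] rootProd (N z) := by
    have hshift : Tendsto (fun p : ℝ × ℝ => (p.1, p.2 - z)) (𝓝[>] 0 ×ˢ 𝓝 z)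
        (𝓝[>] 0 ×ˢ 𝓝 0) := by
      refine tendsto_fst.prodMk ?_
      simpa only [sub_self] using (tendsto_snd (f := 𝓝[>] (0 : ℝ)) (g := 𝓝 z)).sub_const z
    simpa only [add_sub_cancel, ← rootProd_map_translate (.const z)] using
      isTheta_comp_tendsto (hM z) hshift
  have hother : ∀ w ∈ s, w ≠ z → rootProd (N w) =Θ[𝓝[>] 0 ×ˢ 𝓝 z] fun _ => (1 : ℝ) := by
    refine fun w _ hwz => isTheta_rootProd_one fun ρ hρ => ?_
    obtain ⟨ρ', hρ', rfl⟩ := Multiset.mem_map.1 hρ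
    refine PuiseuxFactor.isTheta_eval_one_of_ne _ ?_ hwz.symm
    simpa only [add_zero, PuiseuxFactor.translate] using (hcenter w ρ' hρ').const_add w
  have hself : z ∉ s → rootProd (N z) =Θ[𝓝[>] 0 ×ˢ 𝓝 z] fun _ => (1 : ℝ) := fun hz =>
    isTheta_rootProd_one fun ρ hρ => by
      simp [N, Multiset.card_eq_zero.1 ((hcard z).trans (hs z hz))] at hρ
  have hones : rootProd ones =Θ[𝓝[>] 0 ×ˢ 𝓝 z] fun _ => (1 : ℝ) :=
    isTheta_rootProd_one fun ρ hρ => by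
      rw [Multiset.eq_of_mem_replicate hρ]
      exact PuiseuxFactor.isTheta_eval_const_one 0 z one_pos
  have hprod := (isTheta_finsetProd_of_isTheta_one hother hself).mul hones
  simp only [mul_one, ← rootProd_sum, ← rootProd_add] at hprod
  exact hlocal.trans hprod.symm

end RootProducts

section BlowUp

namespace PuiseuxFactor

/-- The factor `|y - α(x ^ (1 / q))| + b(x ^ (1 / q))`. -/
noncomputable def compRoot {q : ℕ} (hq : 0 < q) (ρ : PuiseuxFactor) : PuiseuxFactor where
  center x := ρ.center (x ^ (q : ℝ)⁻¹)
  width x := ρ.width (x ^ (q : ℝ)⁻¹)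
  isPuiseux_center := ρ.isPuiseux_center.comp_root hq
  isPuiseux_width := ρ.isPuiseux_width.comp_root hq
  width_nonneg := (tendsto_root_nhdsGT_zero hq).eventually ρ.width_nonneg

/-- The factor `|y - x ^ p α(x)| + x ^ p b(x)`. -/
def dilate (p : ℕ) (ρ : PuiseuxFactor) : PuiseuxFactor where
  center x := x ^ p * ρ.center x
  width x := x ^ p * ρ.width x
  isPuiseux_center := .mul (.of_analyticAt (by fun_prop)) ρ.isPuiseux_center
  isPuiseux_width := .mul (.of_analyticAt (by fun_prop)) ρ.isPuiseux_width
  width_nonneg := by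
    filter_upwards [ρ.width_nonneg, self_mem_nhdsWithin] with x hb (hx : 0 < x)
    positivity

theorem eval_dilate (p : ℕ) (ρ : PuiseuxFactor) (w : ℝ × ℝ) :
    (ρ.dilate p).eval w = |w.2 - w.1 ^ p * ρ.center w.1| + w.1 ^ p * ρ.width w.1 :=
  rfl

theorem tendsto_center_dilate {p : ℕ} (hp : 0 < p) (ρ : PuiseuxFactor) :
    Tendsto (ρ.dilate p).center (𝓝[>] 0) (𝓝 0) := by
  obtain ⟨a, ha⟩ := ρ.isPuiseux_center.exists_tendsto
  have hpow := tendsto_nhds_of_tendsto_nhdsWithin (tendsto_pow_nhdsGT_zero hp)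
  simpa only [zero_mul, dilate] using hpow.mul ha

end PuiseuxFactor

theorem rootProd_map_compRoot {q : ℕ} (hq : 0 < q) (M : Multiset PuiseuxFactor) (p : ℝ × ℝ) :
    rootProd (M.map (PuiseuxFactor.compRoot hq)) p = rootProd M (p.1 ^ (q : ℝ)⁻¹, p.2) := by
  rw [rootProd, rootProd, Multiset.map_map]
  rfl

theorem HasRootForm.of_comp_pow {d q : ℕ} (hq : 0 < q) {f : ℝ × ℝ → ℝ}
    (h : HasRootForm d fun p => f (p.1 ^ q, p.2)) : HasRootForm d f := by
  obtain ⟨M, hcard, hcenter, hM⟩ := h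
  refine ⟨M.map (PuiseuxFactor.compRoot hq), by simpa using hcard, fun ρ hρ => ?_, ?_⟩
  · obtain ⟨ρ', hρ', rfl⟩ := Multiset.mem_map.1 hρ
    exact (hcenter ρ' hρ').comp (tendsto_root_nhdsGT_zero hq)
  have hroot : Tendsto (fun p : ℝ × ℝ => (p.1 ^ (q : ℝ)⁻¹, p.2)) (𝓝[>] 0 ×ˢ 𝓝 0)
      (𝓝[>] 0 ×ˢ 𝓝 0) :=
    ((tendsto_root_nhdsGT_zero hq).comp tendsto_fst).prodMk tendsto_snd
  have hf : f =ᶠ[𝓝[>] 0 ×ˢ 𝓝 0] fun p => f ((p.1 ^ (q : ℝ)⁻¹) ^ q, p.2) := by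
    filter_upwards [tendsto_fst.eventually (self_mem_nhdsWithin (a := (0 : ℝ)))]
      with p (hp : 0 < p.1)
    rw [Real.rpow_inv_natCast_pow hp.le hq.ne']
  refine hf.trans_isTheta ((isTheta_comp_tendsto hM hroot).trans_eventuallyEq ?_)
  exact Eventually.of_forall fun p => (rootProd_map_compRoot hq M p).symm

theorem rootProd_map_dilate {p : ℕ} (M : Multiset PuiseuxFactor) {w : ℝ × ℝ} (hw : 0 < w.1) :
    rootProd (M.map (PuiseuxFactor.dilate p)) w =
      (w.1 ^ p) ^ M.card * rootProd M (w.1, w.2 / w.1 ^ p) := by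
  have hpow : 0 < w.1 ^ p := by positivity
  rw [rootProd, rootProd, Multiset.map_map, ← Multiset.prod_replicate, ← Multiset.map_const',
    ← Multiset.prod_map_mul]
  refine congrArg _ (Multiset.map_congr rfl fun ρ _ => ?_)
  have hsplit : w.2 - w.1 ^ p * ρ.center w.1 = w.1 ^ p * (w.2 / w.1 ^ p - ρ.center w.1) := by
    field_simp
  rw [Function.comp_apply, PuiseuxFactor.eval_dilate, hsplit, abs_mul, abs_of_pos hpow,
    PuiseuxFactor.eval, mul_add]

/-- The zone `|y| ≤ K x ^ p`, which `(x, z) ↦ (x, x ^ p z)` covers by a strip `|z| ≤ K`. -/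
def innerZone (p : ℕ) (K : ℝ) : Set (ℝ × ℝ) := {w | |w.2| ≤ K * w.1 ^ p}

/-- For `h(x, y) = ∑ x ^ (p (d - k)) a_k(x) y ^ k + y ^ d u(x, y)`, summed over `k < d`, this is
the function `F` with `h(x, x ^ p z) = x ^ (p d) F(x, z)`. -/
def blowUp (d p : ℕ) (a : ℕ → ℝ → ℝ) (u : ℝ × ℝ → ℝ) (w : ℝ × ℝ) : ℝ :=
  ∑ k ∈ Finset.range d, a k w.1 * w.2 ^ k + w.2 ^ d * u (w.1, w.1 ^ p * w.2)

theorem sum_pow_sub_mul_add_eq_pow_mul_blowUp (d p : ℕ) (a : ℕ → ℝ → ℝ) (u : ℝ × ℝ → ℝ)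
    {w : ℝ × ℝ} (hw : 0 < w.1) :
    ∑ k ∈ Finset.range d, (w.1 ^ p) ^ (d - k) * a k w.1 * w.2 ^ k + w.2 ^ d * u w =
      (w.1 ^ p) ^ d * blowUp d p a u (w.1, w.2 / w.1 ^ p) := by
  have hpow : w.1 ^ p ≠ 0 := by positivity
  simp only [blowUp, mul_div_cancel₀ _ hpow, mul_add, Finset.mul_sum]
  congr 1
  · refine Finset.sum_congr rfl fun k hk => ?_
    rw [← pow_sub_mul_pow (w.1 ^ p) (Finset.mem_range.1 hk).le, div_pow]
    field_simp
  · rw [div_pow]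
    field_simp

variable {d p : ℕ} {a : ℕ → ℝ → ℝ} {u h : ℝ × ℝ → ℝ} {M : Multiset PuiseuxFactor}

theorem analyticAt_blowUp (hp : 0 < p) (ha : ∀ k, AnalyticAt ℝ (a k) 0) (hu : AnalyticAt ℝ u 0)
    (z : ℝ) : AnalyticAt ℝ (blowUp d p a u) (0, z) := by
  have hak : ∀ k, AnalyticAt ℝ (fun w : ℝ × ℝ => a k w.1) (0, z) := fun k =>
    AnalyticAt.fun_comp (f := Prod.fst) (ha k) analyticAt_fst
  have hu' : AnalyticAt ℝ (fun w : ℝ × ℝ => u (w.1, w.1 ^ p * w.2)) (0, z) := by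
    refine AnalyticAt.fun_comp (f := fun w : ℝ × ℝ => (w.1, w.1 ^ p * w.2)) ?_
      (analyticAt_fst.prod ((analyticAt_fst.pow p).mul analyticAt_snd))
    simpa only [zero_pow hp.ne', zero_mul, Prod.mk_zero_zero] using hu
  exact (Finset.analyticAt_fun_sum _ fun k _ => (hak k).mul (analyticAt_snd.pow k)).add
    ((analyticAt_snd.pow d).mul hu')

theorem isTheta_rootProd_innerZone
    (hh : ∀ᶠ w in 𝓝 (0 : ℝ × ℝ),
      h w = ∑ k ∈ Finset.range d, (w.1 ^ p) ^ (d - k) * a k w.1 * w.2 ^ k + w.2 ^ d * u w)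
    (hcard : M.card = d) (hM : ∀ z, blowUp d p a u =Θ[𝓝[>] 0 ×ˢ 𝓝 z] rootProd M) (K : ℝ) :
    h =Θ[(𝓝[>] 0 ×ˢ 𝓝 0) ⊓ 𝓟 (innerZone p K)] rootProd (M.map (PuiseuxFactor.dilate p)) := by
  have hpos : ∀ᶠ w : ℝ × ℝ in (𝓝[>] 0 ×ˢ 𝓝 0) ⊓ 𝓟 (innerZone p K), 0 < w.1 :=
    (tendsto_fst.eventually self_mem_nhdsWithin).filter_mono inf_le_left
  have hscale : Tendsto (fun w : ℝ × ℝ => (w.1, w.2 / w.1 ^ p))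
      ((𝓝[>] 0 ×ˢ 𝓝 0) ⊓ 𝓟 (innerZone p K)) (𝓝[>] 0 ×ˢ 𝓟 (Icc (-K) K)) := by
    refine (tendsto_fst.mono_left inf_le_left).prodMk (tendsto_principal.2 ?_)
    filter_upwards [hpos, mem_inf_of_right (mem_principal_self _)]
      with w hw (hzone : |w.2| ≤ K * w.1 ^ p)
    rw [mem_Icc, ← abs_le, abs_div, abs_of_pos (pow_pos hw p), div_le_iff₀ (pow_pos hw p)]
    exact hzone
  have hstrip := isTheta_comp_tendsto
    (isTheta_prod_principal_of_isCompact (isCompact_Icc (a := -K) (b := K)) fun z _ => hM z) hscale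
  have hprod := (isTheta_refl (fun w : ℝ × ℝ => (w.1 ^ p) ^ d) _).mul hstrip
  refine EventuallyEq.trans_isTheta ?_ (hprod.trans_eventuallyEq ?_)
  · filter_upwards [hpos, hh.filter_mono (inf_le_left.trans nhdsGT_zero_prod_nhds_zero_le)]
      with w hw hhw
    rw [hhw, sum_pow_sub_mul_add_eq_pow_mul_blowUp d p a u hw]
  · filter_upwards [hpos] with w hw
    rw [rootProd_map_dilate M hw, hcard]

theorem isTheta_eval_dilate_outerZone (ρ : PuiseuxFactor) {C K : ℝ}
    (hC : ∀ᶠ x in 𝓝[>] (0 : ℝ), |ρ.center x| ≤ C ∧ |ρ.width x| ≤ C) (hK : 2 * C ≤ K) :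
    (ρ.dilate p).eval =Θ[(𝓝[>] 0 ×ˢ 𝓝 0) ⊓ 𝓟 (innerZone p K)ᶜ] fun w => w.2 := by
  refine isTheta_of_eventually_bounds (c := 1 / 2) (C := 2) (by norm_num) ?_
  have hx : Tendsto Prod.fst ((𝓝[>] (0 : ℝ) ×ˢ 𝓝 (0 : ℝ)) ⊓ 𝓟 (innerZone p K)ᶜ) (𝓝[>] 0) :=
    tendsto_fst.mono_left inf_le_left
  filter_upwards [hx.eventually self_mem_nhdsWithin, hx.eventually hC,
    hx.eventually ρ.width_nonneg, mem_inf_of_right (mem_principal_self _)]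
    with w (hw : 0 < w.1) ⟨hcenter, hwidth⟩ hnonneg hzone
  have hpow : 0 < w.1 ^ p := pow_pos hw p
  have hy : K * w.1 ^ p < |w.2| := not_le.1 hzone
  have hcenter' : |w.1 ^ p * ρ.center w.1| ≤ |w.2| / 2 := by
    rw [abs_mul, abs_of_pos hpow]
    nlinarith
  have hwidth' : w.1 ^ p * ρ.width w.1 ≤ |w.2| / 2 := by
    nlinarith [le_of_abs_le hwidth]
  have hwidth0 : 0 ≤ w.1 ^ p * ρ.width w.1 := by positivity
  have hlower := abs_sub_abs_le_abs_sub w.2 (w.1 ^ p * ρ.center w.1)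
  have hupper := abs_sub w.2 (w.1 ^ p * ρ.center w.1)
  rw [Real.norm_eq_abs, Real.norm_eq_abs, PuiseuxFactor.eval_dilate,
    abs_of_nonneg (add_nonneg (abs_nonneg _) hwidth0)]
  constructor <;> linarith

theorem eventually_isTheta_rootProd_outerZone (p : ℕ) (M : Multiset PuiseuxFactor) :
    ∀ᶠ K in atTop, rootProd (M.map (PuiseuxFactor.dilate p))
      =Θ[(𝓝[>] 0 ×ˢ 𝓝 0) ⊓ 𝓟 (innerZone p K)ᶜ] fun w => w.2 ^ M.card := by
  obtain ⟨C, hC⟩ := PuiseuxFactor.exists_forall_eventually_abs_le M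
  filter_upwards [eventually_ge_atTop (2 * C)] with K hK
  simpa only [Multiset.card_map] using
    isTheta_rootProd_pow_card (M := M.map (PuiseuxFactor.dilate p)) fun ρ hρ => by
      obtain ⟨ρ', hρ', rfl⟩ := Multiset.mem_map.1 hρ
      exact isTheta_eval_dilate_outerZone ρ' (hC ρ' hρ') hK

theorem abs_sum_pow_mul_le_of_abs_le {s : Finset ℕ} {b : ℕ → ℝ} {t ε : ℝ} {n : ℕ → ℕ}
    (hn : ∀ k ∈ s, n k ≠ 0) (ht : |t| ≤ ε) (hε : ε ≤ 1) :
    |∑ k ∈ s, t ^ n k * b k| ≤ ε * ∑ k ∈ s, |b k| := by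
  rw [Finset.mul_sum]
  refine (Finset.abs_sum_le_sum_abs _ _).trans (Finset.sum_le_sum fun k hk => ?_)
  rw [abs_mul, abs_pow]
  gcongr
  exact (pow_le_of_le_one (abs_nonneg t) (ht.trans hε) (hn k hk)).trans ht

theorem eventually_abs_sum_le_outerZone (ha : ∀ k, ContinuousAt (a k) 0) {ε : ℝ} (hε : 0 < ε) :
    ∀ᶠ K in atTop, ∀ᶠ w in (𝓝[>] (0 : ℝ) ×ˢ 𝓝 (0 : ℝ)) ⊓ 𝓟 (innerZone p K)ᶜ,
      |∑ k ∈ Finset.range d, (w.1 ^ p / w.2) ^ (d - k) * a k w.1| ≤ ε := by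
  set C := ∑ k ∈ Finset.range d, |a k 0| + 1
  have hsum : Tendsto (fun x => ∑ k ∈ Finset.range d, |a k x|) (𝓝 0)
      (𝓝 (∑ k ∈ Finset.range d, |a k 0|)) := tendsto_finsetSum _ fun k _ => (ha k).tendsto.abs
  filter_upwards [eventually_ge_atTop 1, eventually_ge_atTop (C / ε)] with K hK1 hKC
  have hK0 : 0 < K := by positivity
  have hx : Tendsto Prod.fst ((𝓝[>] (0 : ℝ) ×ˢ 𝓝 (0 : ℝ)) ⊓ 𝓟 (innerZone p K)ᶜ) (𝓝[>] 0) :=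
    tendsto_fst.mono_left inf_le_left
  filter_upwards [(tendsto_nhds_of_tendsto_nhdsWithin hx).eventually
    (hsum.eventually_lt_const (lt_add_one _)), hx.eventually self_mem_nhdsWithin,
    mem_inf_of_right (mem_principal_self _)] with w hsumw (hw : 0 < w.1) hzone
  have hy : K * w.1 ^ p < |w.2| := not_le.1 hzone
  have hratio : |w.1 ^ p / w.2| ≤ K⁻¹ := by
    rw [abs_div, abs_of_pos (pow_pos hw p), div_le_iff₀ (lt_of_le_of_lt (by positivity) hy),
      le_inv_mul_iff₀ hK0]
    exact hy.le
  calc |∑ k ∈ Finset.range d, (w.1 ^ p / w.2) ^ (d - k) * a k w.1|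
    _ ≤ K⁻¹ * ∑ k ∈ Finset.range d, |a k w.1| :=
      abs_sum_pow_mul_le_of_abs_le (fun k hk => (Nat.sub_pos_of_lt (Finset.mem_range.1 hk)).ne')
        hratio (inv_le_one_of_one_le₀ hK1)
    _ ≤ K⁻¹ * C := by gcongr
    _ ≤ ε := by rwa [inv_mul_le_iff₀ hK0, ← div_le_iff₀ hε]

/-- Where `|y| > K x ^ p`, the `k`-th term of the expansion is `y ^ d` times
`(x ^ p / y) ^ (d - k) a_k(x)`, which is small for large `K`. -/
theorem eventually_isTheta_pow_outerZone (ha : ∀ k, ContinuousAt (a k) 0) (hu : ContinuousAt u 0)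
    (hu0 : u 0 ≠ 0)
    (hh : ∀ᶠ w in 𝓝 (0 : ℝ × ℝ),
      h w = ∑ k ∈ Finset.range d, (w.1 ^ p) ^ (d - k) * a k w.1 * w.2 ^ k + w.2 ^ d * u w) :
    ∀ᶠ K in atTop, h =Θ[(𝓝[>] 0 ×ˢ 𝓝 0) ⊓ 𝓟 (innerZone p K)ᶜ] fun w => w.2 ^ d := by
  have hu0' : 0 < |u 0| := abs_pos.2 hu0
  filter_upwards [eventually_abs_sum_le_outerZone (d := d) (p := p) ha
    (show 0 < |u 0| / 4 by positivity), eventually_ge_atTop 0] with K hsum hK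
  have hle : (𝓝[>] (0 : ℝ) ×ˢ 𝓝 (0 : ℝ)) ⊓ 𝓟 (innerZone p K)ᶜ ≤ 𝓝 0 :=
    inf_le_left.trans nhdsGT_zero_prod_nhds_zero_le
  refine isTheta_of_eventually_bounds (c := |u 0| / 2) (C := 2 * |u 0|) (by positivity) ?_
  filter_upwards [hle hh, hsum, hle (hu.eventually (Metric.ball_mem_nhds (u 0)
    (show 0 < |u 0| / 4 by positivity))), mem_inf_of_right (mem_principal_self _),
    tendsto_fst.mono_left inf_le_left self_mem_nhdsWithin] with w hhw hsumw huw hzone (hw : 0 < w.1)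
  have hy0 : w.2 ≠ 0 := abs_pos.1 (lt_of_le_of_lt (by positivity) (not_le.1 hzone))
  set S := ∑ k ∈ Finset.range d, (w.1 ^ p / w.2) ^ (d - k) * a k w.1
  have hfactor : h w = (S + u w) * w.2 ^ d := by
    rw [hhw, add_mul, Finset.sum_mul, mul_comm (u w)]
    congr 1
    refine Finset.sum_congr rfl fun k hk => ?_
    rw [← pow_sub_mul_pow w.2 (Finset.mem_range.1 hk).le, div_pow]
    field_simp
  have hnear : |u 0 - (S + u w)| ≤ |u 0| / 2 := calc
    |u 0 - (S + u w)| ≤ |u 0 - u w| + |S| := by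
      rw [sub_add_eq_sub_sub_swap]
      exact abs_sub _ _
    _ ≤ |u 0| / 4 + |u 0| / 4 := by
      rw [abs_sub_comm]
      exact add_le_add huw.le hsumw
    _ = |u 0| / 2 := by ring
  have hlower := abs_sub_abs_le_abs_sub (u 0) (u 0 - (S + u w))
  have hupper := abs_sub (u 0) (u 0 - (S + u w))
  rw [sub_sub_cancel] at hlower hupper
  rw [hfactor, norm_mul, Real.norm_eq_abs (S + u w)]
  exact ⟨by gcongr; linarith, by gcongr; linarith⟩

theorem hasRootForm_of_blowUp (hp : 0 < p) (ha : ∀ k, ContinuousAt (a k) 0)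
    (hu : ContinuousAt u 0) (hu0 : u 0 ≠ 0)
    (hh : ∀ᶠ w in 𝓝 (0 : ℝ × ℝ),
      h w = ∑ k ∈ Finset.range d, (w.1 ^ p) ^ (d - k) * a k w.1 * w.2 ^ k + w.2 ^ d * u w)
    (hcard : M.card = d) (hM : ∀ z, blowUp d p a u =Θ[𝓝[>] 0 ×ˢ 𝓝 z] rootProd M) :
    HasRootForm d h := by
  obtain ⟨K, hrootProd, hpow⟩ := ((eventually_isTheta_rootProd_outerZone p M).and
    (eventually_isTheta_pow_outerZone ha hu hu0 hh)).exists
  rw [hcard] at hrootProd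
  refine ⟨M.map (PuiseuxFactor.dilate p), by simpa using hcard, fun ρ hρ => ?_, ?_⟩
  · obtain ⟨ρ', -, rfl⟩ := Multiset.mem_map.1 hρ
    exact ρ'.tendsto_center_dilate hp
  · exact isTheta_of_inf_principal_compl _ (isTheta_rootProd_innerZone hh hcard hM K)
      (hpow.trans hrootProd.symm)

end BlowUp

section NewtonPolygon

theorem rootMultiplicity_lt_of_coeff {K : Type*} [Field K] [CharZero K] {d k₀ : ℕ}
    {Q : Polynomial K} (hk₀ : k₀ < d) (hdeg : Q.natDegree = d) (hd1 : Q.coeff (d - 1) = 0)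
    (hk : Q.coeff k₀ ≠ 0) (z : K) : Q.rootMultiplicity z < d := by
  have hQ : Q ≠ 0 := by rintro rfl; simp at hk
  by_contra! hle
  obtain ⟨R, hR⟩ := (Polynomial.le_rootMultiplicity_iff hQ).1 hle
  have hR0 : R ≠ 0 := right_ne_zero_of_mul (hR ▸ hQ)
  have hdegR : R.natDegree = 0 := by
    have h := congrArg Polynomial.natDegree hR
    rw [Polynomial.natDegree_mul (pow_ne_zero _ (Polynomial.X_sub_C_ne_zero z)) hR0,
      Polynomial.natDegree_pow, Polynomial.natDegree_X_sub_C, hdeg] at h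
    omega
  obtain ⟨b, rfl⟩ := Polynomial.natDegree_eq_zero.1 hdegR
  have hb : b ≠ 0 := Polynomial.C_ne_zero.1 hR0
  have hcoeff : ∀ j, Q.coeff j = (-z) ^ (d - j) * d.choose j * b := fun j => by
    rw [hR, Polynomial.coeff_mul_C, sub_eq_add_neg, ← Polynomial.C_neg,
      Polynomial.coeff_X_add_C_pow]
  have hchoose : (d.choose (d - 1) : K) ≠ 0 :=
    Nat.cast_ne_zero.2 (Nat.choose_pos (Nat.sub_le d 1)).ne'
  have hz : z = 0 := by
    rw [hcoeff, Nat.sub_sub_self (by omega), pow_one] at hd1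
    simpa [hb, hchoose] using hd1
  exact hk (by simp [hcoeff, hz, (Nat.sub_pos_of_lt hk₀).ne'])

variable {d p : ℕ} {a : ℕ → ℝ → ℝ} {u : ℝ × ℝ → ℝ}

/-- The restriction of `blowUp d p a u` to the exceptional line `x = 0`. -/
noncomputable def blowUpPolynomial (d : ℕ) (a : ℕ → ℝ → ℝ) (u : ℝ × ℝ → ℝ) : Polynomial ℝ :=
  ∑ k ∈ Finset.range d, Polynomial.C (a k 0) * Polynomial.X ^ k +
    Polynomial.C (u 0) * Polynomial.X ^ d

theorem blowUp_zero_left (hp : 0 < p) (z : ℝ) :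
    blowUp d p a u (0, z) = (blowUpPolynomial d a u).eval z := by
  simp [blowUp, blowUpPolynomial, Polynomial.eval_finsetSum, hp.ne', mul_comm (u 0),
    Prod.mk_zero_zero]

theorem coeff_blowUpPolynomial (k : ℕ) : (blowUpPolynomial d a u).coeff k =
    (if k < d then a k 0 else 0) + if k = d then u 0 else 0 := by
  simp only [blowUpPolynomial, Polynomial.coeff_add, Polynomial.finsetSum_coeff,
    Polynomial.coeff_C_mul_X_pow, Finset.sum_ite_eq, Finset.mem_range]

theorem natDegree_blowUpPolynomial (hu0 : u 0 ≠ 0) : (blowUpPolynomial d a u).natDegree = d := by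
  refine Polynomial.natDegree_eq_of_le_of_coeff_ne_zero
    (Polynomial.natDegree_le_iff_coeff_eq_zero.2 fun k hk => ?_) ?_
  · rw [coeff_blowUpPolynomial, if_neg hk.not_gt, if_neg hk.ne', add_zero]
  · simpa only [coeff_blowUpPolynomial, lt_irrefl, if_true, if_false, zero_add] using hu0

theorem rootMultiplicity_blowUpPolynomial_lt (hu0 : u 0 ≠ 0) {k₀ : ℕ} (hk₀ : k₀ < d)
    (hk₀a : a k₀ 0 ≠ 0) (hd1 : a (d - 1) 0 = 0) (z : ℝ) :
    (blowUpPolynomial d a u).rootMultiplicity z < d := by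
  refine rootMultiplicity_lt_of_coeff hk₀ (natDegree_blowUpPolynomial hu0) ?_ ?_ z
  · rw [coeff_blowUpPolynomial, if_pos (by omega), if_neg (by omega), hd1, add_zero]
  · rwa [coeff_blowUpPolynomial, if_pos hk₀, if_neg hk₀.ne, add_zero]

theorem exists_rootProd_blowUp (hp : 0 < p) (ha : ∀ k, AnalyticAt ℝ (a k) 0)
    (hu : AnalyticAt ℝ u 0) (hu0 : u 0 ≠ 0)
    (ih : ∀ (z : ℝ) (f : ℝ × ℝ → ℝ), AnalyticAt ℝ f 0 → analyticOrderAt (fun y => f (0, y)) 0 =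
      (blowUpPolynomial d a u).rootMultiplicity z →
        HasRootForm ((blowUpPolynomial d a u).rootMultiplicity z) f) :
    ∃ M : Multiset PuiseuxFactor, M.card = d ∧
      ∀ z, blowUp d p a u =Θ[𝓝[>] 0 ×ˢ 𝓝 z] rootProd M := by
  have hdeg := natDegree_blowUpPolynomial (d := d) (a := a) hu0
  have hQ : blowUpPolynomial d a u ≠ 0 := by
    intro h
    have hcoeff := coeff_blowUpPolynomial (d := d) (a := a) (u := u) d
    simp [h, hu0.symm] at hcoeff
  have hlocal : ∀ z, HasRootForm ((blowUpPolynomial d a u).rootMultiplicity z)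
      fun w => blowUp d p a u (w.1, z + w.2) := fun z => by
    refine ih z _ ?_ ?_
    · refine AnalyticAt.fun_comp (f := fun w : ℝ × ℝ => (w.1, z + w.2)) ?_
        (analyticAt_fst.prod (analyticAt_const.add analyticAt_snd))
      simpa only [Prod.fst_zero, Prod.snd_zero, add_zero] using analyticAt_blowUp hp ha hu z
    · simpa only [blowUp_zero_left hp] using analyticOrderAt_polynomial_eval_const_add hQ z
  refine exists_rootProd_of_forall_hasRootForm hlocal
    (s := (blowUpPolynomial d a u).roots.toFinset) (fun z hz => ?_) ?_
  · rwa [← Polynomial.count_roots, Multiset.count_eq_zero, ← Multiset.mem_toFinset]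
  · simp only [← Polynomial.count_roots, Multiset.toFinset_sum_count_eq]
    exact (Polynomial.card_roots' _).trans hdeg.le

theorem exists_steepest_slope {d : ℕ} {S : Finset ℕ} (hS : S.Nonempty) (hSd : ∀ k ∈ S, k < d)
    (m : ℕ → ℕ) : ∃ k₀ ∈ S, ∀ k ∈ S, m k₀ * (d - k) ≤ (d - k₀) * m k := by
  obtain ⟨k₀, hk₀, hmin⟩ := S.exists_min_image (fun k => (m k : ℚ) / ((d - k : ℕ) : ℚ)) hS
  refine ⟨k₀, hk₀, fun k hk => ?_⟩
  have hle := hmin k hk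
  rw [div_le_div_iff₀ (by exact_mod_cast Nat.sub_pos_of_lt (hSd k₀ hk₀))
    (by exact_mod_cast Nat.sub_pos_of_lt (hSd k hk))] at hle
  rw [mul_comm (d - k₀)]
  exact_mod_cast hle

theorem exists_comp_pow_eq_pow_mul {c e : ℝ → ℝ} {m n q : ℕ} (hq : 0 < q) (he : AnalyticAt ℝ e 0)
    (hce : ∀ᶠ x in 𝓝 0, c x = x ^ m * e x) (hle : p * n ≤ q * m) :
    ∃ a : ℝ → ℝ, AnalyticAt ℝ a 0 ∧ (∀ᶠ t in 𝓝 0, c (t ^ q) = (t ^ p) ^ n * a t) ∧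
      (p * n = q * m → a 0 = e 0) := by
  have hpow : Tendsto (fun t : ℝ => t ^ q) (𝓝 0) (𝓝 0) :=
    (continuous_pow _).tendsto' _ _ (zero_pow hq.ne')
  refine ⟨fun t => t ^ (q * m - p * n) * e (t ^ q), ?_, ?_, fun h => by simp [h, hq.ne']⟩
  · refine (analyticAt_id.pow _).mul (AnalyticAt.fun_comp (g := e) ?_ (analyticAt_id.pow _))
    simpa [hq.ne'] using he
  · filter_upwards [hpow.eventually hce] with t ht
    rw [ht, ← mul_assoc, ← pow_mul, ← pow_mul, ← pow_add, Nat.add_sub_cancel' hle]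

/-- The slope `p / q` of the steepest edge of the Newton polygon: after `x = t ^ q` the coefficient
`c_k` is divisible by `t ^ (p (d - k))`, with a unit quotient at some vertex `k`. -/
theorem exists_newton_slope {c : ℕ → ℝ → ℝ} (hc : ∀ k, AnalyticAt ℝ (c k) 0)
    (hc0 : ∀ k < d, c k 0 = 0) (hne : ∃ k < d, ¬ ∀ᶠ x in 𝓝 0, c k x = 0) :
    ∃ (p q : ℕ) (a : ℕ → ℝ → ℝ), 0 < p ∧ 0 < q ∧ (∀ k, AnalyticAt ℝ (a k) 0) ∧
      (∀ k < d, ∀ᶠ t in 𝓝 0, c k (t ^ q) = (t ^ p) ^ (d - k) * a k t) ∧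
      (∀ k, (∀ᶠ x in 𝓝 0, c k x = 0) → a k 0 = 0) ∧ ∃ k < d, a k 0 ≠ 0 := by
  classical
  let S := (Finset.range d).filter fun k => ¬ ∀ᶠ x in 𝓝 0, c k x = 0
  have hmemS : ∀ {k}, k ∈ S ↔ k < d ∧ ¬ ∀ᶠ x in 𝓝 0, c k x = 0 := by
    simp only [S, Finset.mem_filter, Finset.mem_range, implies_true]
  have hfactor : ∀ k ∈ S, ∃ (m : ℕ) (e : ℝ → ℝ), AnalyticAt ℝ e 0 ∧ e 0 ≠ 0 ∧
      ∀ᶠ x in 𝓝 0, c k x = x ^ m * e x := fun k hk => by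
    simpa only [sub_zero, smul_eq_mul] using
      (hc k).exists_eventuallyEq_pow_smul_nonzero_iff.2 (hmemS.1 hk).2
  choose! m e he he0 hce using hfactor
  obtain ⟨k₁, hk₁⟩ := hne
  obtain ⟨k₀, hk₀, hslope⟩ :=
    exists_steepest_slope ⟨k₁, hmemS.2 hk₁⟩ (fun k hk => (hmemS.1 hk).1) m
  have hk₀d : k₀ < d := (hmemS.1 hk₀).1
  have hm₀ : 0 < m k₀ := Nat.pos_of_ne_zero fun h => he0 k₀ hk₀ <| by
    simpa [h, hc0 k₀ hk₀d] using (hce k₀ hk₀).self_of_nhds.symm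
  have hq : 0 < d - k₀ := Nat.sub_pos_of_lt hk₀d
  have hquot : ∀ k, ∃ a : ℝ → ℝ, AnalyticAt ℝ a 0 ∧
      (k < d → ∀ᶠ t in 𝓝 0, c k (t ^ (d - k₀)) = (t ^ m k₀) ^ (d - k) * a t) ∧
      ((∀ᶠ x in 𝓝 0, c k x = 0) → a 0 = 0) ∧ (k = k₀ → a 0 ≠ 0) := fun k => by
    by_cases hk : k ∈ S
    · obtain ⟨a, ha, hca, hae⟩ := exists_comp_pow_eq_pow_mul hq (he k hk) (hce k hk) (hslope k hk)
      refine ⟨a, ha, fun _ => hca, fun h => absurd h (hmemS.1 hk).2, ?_⟩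
      rintro rfl
      rw [hae (mul_comm _ _)]
      exact he0 k hk
    · have hpow : Tendsto (fun t : ℝ => t ^ (d - k₀)) (𝓝 0) (𝓝 0) :=
        (continuous_pow _).tendsto' _ _ (zero_pow hq.ne')
      refine ⟨0, analyticAt_const, fun hkd => ?_, fun _ => rfl, fun h => absurd (h ▸ hk₀) hk⟩
      have hck : ∀ᶠ x in 𝓝 0, c k x = 0 := not_not.1 fun h => hk (hmemS.2 ⟨hkd, h⟩)
      simpa only [Pi.zero_apply, mul_zero] using hpow.eventually hck
  choose a ha hca ha0 hak₀ using hquot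
  exact ⟨m k₀, d - k₀, a, hm₀, hq, ha, hca, ha0, k₀, hk₀d, hak₀ k₀ rfl⟩

/-- The Tschirnhaus shift removes the coefficient of `y ^ (d - 1)`. -/
theorem exists_shift_eq_sum_add {d : ℕ} (hd : 0 < d) {f : ℝ × ℝ → ℝ} (hf : AnalyticAt ℝ f 0)
    (hord : analyticOrderAt (fun y => f (0, y)) 0 = d) :
    ∃ (ψ : ℝ → ℝ) (c : ℕ → ℝ → ℝ) (u : ℝ × ℝ → ℝ), AnalyticAt ℝ ψ 0 ∧ ψ 0 = 0 ∧
      (∀ k, AnalyticAt ℝ (c k) 0) ∧ AnalyticAt ℝ u 0 ∧ u 0 ≠ 0 ∧ (∀ k < d, c k 0 = 0) ∧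
      (∀ᶠ x in 𝓝 0, c (d - 1) x = 0) ∧ ∀ᶠ w in 𝓝 (0 : ℝ × ℝ),
        f (w.1, w.2 + ψ w.1) = ∑ k ∈ Finset.range d, c k w.1 * w.2 ^ k + w.2 ^ d * u w := by
  have hf0 : AnalyticAt ℝ (fun y => f (0, y)) 0 := AnalyticAt.along_snd (p := (0, 0)) hf
  obtain ⟨hlow, htop⟩ := (analyticOrderAt_eq_nat_iff_iteratedDeriv_eq_zero hf0).1 hord
  obtain ⟨ψ, hψ, hψ0, hψf⟩ := exists_analytic_implicit_snd
    (analyticAt_iteratedDeriv_snd (d - 1) hf) (hlow (d - 1) (by omega)) (by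
      change deriv (iteratedDeriv (d - 1) fun y => f (0, y)) 0 ≠ 0
      rwa [← iteratedDeriv_succ, Nat.sub_add_cancel hd])
  have hshift : AnalyticAt ℝ (fun w : ℝ × ℝ => f (w.1, w.2 + ψ w.1)) 0 := by
    refine AnalyticAt.fun_comp (f := fun w : ℝ × ℝ => (w.1, w.2 + ψ w.1)) ?_
      (analyticAt_fst.prod (analyticAt_snd.add
        (AnalyticAt.fun_comp (f := Prod.fst) hψ analyticAt_fst)))
    simpa only [Prod.fst_zero, Prod.snd_zero, hψ0, add_zero, Prod.mk_zero_zero] using hf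
  have hcoeff : ∀ k x, taylorCoeffSnd (fun w : ℝ × ℝ => f (w.1, w.2 + ψ w.1)) k x =
      iteratedDeriv k (fun y => f (x, y)) (ψ x) / k.factorial := fun k x => by
    change iteratedDeriv k (fun y => f (x, y + ψ x)) 0 / _ = _
    simp only [iteratedDeriv_comp_add_const k (fun y => f (x, y)), zero_add]
  obtain ⟨v, hv, hfv⟩ := exists_eventually_eq_taylor_snd (d + 1) hshift
  have hc := fun k => analyticAt_taylorCoeffSnd k hshift
  refine ⟨ψ, _, fun w => taylorCoeffSnd (fun w => f (w.1, w.2 + ψ w.1)) d w.1 + w.2 * v w, hψ, hψ0,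
    hc, ?_, ?_, fun k hk => ?_, ?_, ?_⟩
  · exact (AnalyticAt.fun_comp (f := Prod.fst) (hc d) analyticAt_fst).add (analyticAt_snd.mul hv)
  · simpa [hcoeff, hψ0, Nat.factorial_ne_zero] using htop
  · rw [hcoeff, hψ0, hlow k hk, zero_div]
  · filter_upwards [hψf] with x hx
    rw [hcoeff, hx, zero_div]
  · filter_upwards [hfv] with w hw
    rw [hw, Finset.sum_range_succ]
    ring

/-- Since the limiting polynomial has no root of multiplicity `d`, the blow-up has lower order at
every point of the exceptional line. -/
theorem hasRootForm_of_eventually_eq_sum_add {d : ℕ} {f u : ℝ × ℝ → ℝ} {c : ℕ → ℝ → ℝ}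
    (ih : ∀ d' < d, ∀ f : ℝ × ℝ → ℝ, AnalyticAt ℝ f 0 →
      analyticOrderAt (fun y => f (0, y)) 0 = d' → HasRootForm d' f)
    (hc : ∀ k, AnalyticAt ℝ (c k) 0) (hu : AnalyticAt ℝ u 0) (hu0 : u 0 ≠ 0)
    (hc0 : ∀ k < d, c k 0 = 0) (hd1 : ∀ᶠ x in 𝓝 0, c (d - 1) x = 0)
    (hf : ∀ᶠ w in 𝓝 (0 : ℝ × ℝ),
      f w = ∑ k ∈ Finset.range d, c k w.1 * w.2 ^ k + w.2 ^ d * u w) :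
    HasRootForm d f := by
  have hfst : Tendsto (Prod.fst : ℝ × ℝ → ℝ) (𝓝 0) (𝓝 0) := continuous_fst.tendsto' _ _ rfl
  by_cases hne : ∃ k < d, ¬ ∀ᶠ x in 𝓝 0, c k x = 0
  · obtain ⟨p, q, a, hp, hq, ha, hca, ha0, k₀, hk₀, hak₀⟩ := exists_newton_slope hc hc0 hne
    have hpow : Tendsto (fun w : ℝ × ℝ => (w.1 ^ q, w.2)) (𝓝 0) (𝓝 0) :=
      Continuous.tendsto' (by fun_prop) _ _ (by simp [hq.ne'])
    have hu' : AnalyticAt ℝ (fun w : ℝ × ℝ => u (w.1 ^ q, w.2)) 0 := by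
      refine AnalyticAt.fun_comp (f := fun w : ℝ × ℝ => (w.1 ^ q, w.2)) ?_
        ((analyticAt_fst.pow q).prod analyticAt_snd)
      simpa [hq.ne', Prod.mk_zero_zero] using hu
    have hu0' : u ((0 : ℝ × ℝ).1 ^ q, (0 : ℝ × ℝ).2) ≠ 0 := by
      simpa [hq.ne', Prod.mk_zero_zero] using hu0
    have hmult := rootMultiplicity_blowUpPolynomial_lt (u := fun w => u (w.1 ^ q, w.2)) hu0' hk₀
      hak₀ (ha0 _ hd1)
    obtain ⟨M, hcard, hM⟩ := exists_rootProd_blowUp hp ha hu' hu0' fun z => ih _ (hmult z)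
    refine HasRootForm.of_comp_pow hq
      (hasRootForm_of_blowUp hp (fun k => (ha k).continuousAt) hu'.continuousAt hu0' ?_ hcard hM)
    filter_upwards [hpow.eventually hf, hfst.eventually ((Finset.eventually_all _).2
      fun k hk => hca k (Finset.mem_range.1 hk))] with w hw hcw
    rw [hw, Finset.sum_congr rfl fun k hk => by rw [hcw k hk]]
  · push Not at hne
    refine hasRootForm_of_eventually_eq_pow_snd_mul hu.continuousAt hu0 ?_
    filter_upwards [hf, hfst.eventually ((Finset.eventually_all _).2
      fun k hk => hne k (Finset.mem_range.1 hk))] with w hw hcw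
    rw [hw, Finset.sum_eq_zero fun k hk => by rw [hcw k hk, zero_mul], zero_add]

theorem hasRootForm_of_analyticOrderAt (d : ℕ) : ∀ f : ℝ × ℝ → ℝ, AnalyticAt ℝ f 0 →
    analyticOrderAt (fun y => f (0, y)) 0 = d → HasRootForm d f := by
  induction d using Nat.strong_induction_on with
  | _ d ih =>
    intro f hf hord
    rcases Nat.eq_zero_or_pos d with rfl | hd
    · have hf0 : AnalyticAt ℝ (fun y => f (0, y)) 0 := AnalyticAt.along_snd (p := (0, 0)) hf
      exact hasRootForm_of_eventually_eq_pow_snd_mul hf.continuousAt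
        (hf0.analyticOrderAt_eq_zero.1 hord) (Eventually.of_forall fun w => by simp)
    · obtain ⟨ψ, c, u, hψ, hψ0, hc, hu, hu0, hc0, hd1, hfc⟩ := exists_shift_eq_sum_add hd hf hord
      exact (hasRootForm_of_eventually_eq_sum_add ih hc hu hu0 hc0 hd1 hfc).of_comp_add hψ hψ0

theorem exists_isTheta_pow_fst_mul_rootProd {f : ℝ × ℝ → ℝ} (hf : AnalyticAt ℝ f 0)
    (hf0 : ¬ ∀ᶠ p in 𝓝 0, f p = 0) : ∃ (k : ℕ) (M : Multiset PuiseuxFactor),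
      f =Θ[𝓝[>] 0 ×ˢ 𝓝 0] fun p => p.1 ^ k * rootProd M p := by
  obtain ⟨k, d, g, hg, hord, hfg⟩ := exists_eventually_eq_pow_fst_mul hf hf0
  obtain ⟨M, -, -, hM⟩ := hasRootForm_of_analyticOrderAt d g hg hord
  have hfg' : f =ᶠ[𝓝[>] 0 ×ˢ 𝓝 0] fun p => p.1 ^ k * g p :=
    hfg.filter_mono nhdsGT_zero_prod_nhds_zero_le
  exact ⟨k, M, hfg'.trans_isTheta ((isTheta_refl _ _).mul hM)⟩

end NewtonPolygon

open scoped ENNReal NNReal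

section EComparable

variable {α : Type*} {l : Filter α}

/-- Two-sided comparability, up to a constant factor, of `[0, ∞]`-valued functions along a
filter. -/
def EComparable (l : Filter α) (J K : α → ℝ≥0∞) : Prop :=
  ∃ C : ℝ≥0, ∀ᶠ x in l, J x ≤ C * K x ∧ K x ≤ C * J x

theorem enorm_le_of_norm_le {E F : Type*} [SeminormedAddCommGroup E] [SeminormedAddCommGroup F]
    {a : E} {b : F} {C : ℝ} (h : ‖a‖ ≤ C * ‖b‖) : ‖a‖ₑ ≤ C.toNNReal * ‖b‖ₑ := by
  have hnn : ‖a‖₊ ≤ C.toNNReal * ‖b‖₊ := NNReal.coe_le_coe.1 <|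
    h.trans (mul_le_mul_of_nonneg_right (Real.le_coe_toNNReal C) (norm_nonneg b))
  have hcoe := ENNReal.coe_le_coe.2 hnn
  rwa [ENNReal.coe_mul] at hcoe

theorem norm_le_of_enorm_le {E F : Type*} [SeminormedAddCommGroup E] [SeminormedAddCommGroup F]
    {a : E} {b : F} {C : ℝ≥0} (h : ‖a‖ₑ ≤ C * ‖b‖ₑ) : ‖a‖ ≤ C * ‖b‖ := by
  simp only [enorm_eq_nnnorm] at h
  exact_mod_cast h

namespace EComparable

variable {J J' J'' K K' : α → ℝ≥0∞}

theorem of_eventuallyEq (h : J =ᶠ[l] K) : EComparable l J K :=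
  ⟨1, h.mono fun x hx => by simp [hx]⟩

theorem of_isTheta {E F : Type*} [SeminormedAddCommGroup E] [SeminormedAddCommGroup F]
    {f : α → E} {g : α → F} (h : f =Θ[l] g) :
    EComparable l (fun x => ‖f x‖ₑ) fun x => ‖g x‖ₑ := by
  obtain ⟨c, hc⟩ := h.1.bound
  obtain ⟨c', hc'⟩ := h.2.bound
  refine ⟨c.toNNReal + c'.toNNReal, ?_⟩
  filter_upwards [hc, hc'] with x hfg hgf
  exact ⟨(enorm_le_of_norm_le hfg).trans (by gcongr; simp),
    (enorm_le_of_norm_le hgf).trans (by gcongr; simp)⟩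

theorem isTheta {E F : Type*} [SeminormedAddCommGroup E] [SeminormedAddCommGroup F] {f : α → E}
    {g : α → F} (h : EComparable l (fun x => ‖f x‖ₑ) fun x => ‖g x‖ₑ) : f =Θ[l] g := by
  obtain ⟨C, hC⟩ := h
  exact ⟨.of_bound C (hC.mono fun x hx => norm_le_of_enorm_le hx.1),
    .of_bound C (hC.mono fun x hx => norm_le_of_enorm_le hx.2)⟩

theorem trans (h : EComparable l J J') (h' : EComparable l J' J'') : EComparable l J J'' := by
  obtain ⟨C, hC⟩ := h
  obtain ⟨D, hD⟩ := h'
  refine ⟨C * D, ?_⟩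
  filter_upwards [hC, hD] with x hCx hDx
  push_cast
  constructor
  · rw [mul_assoc]
    exact hCx.1.trans (by gcongr; exact hDx.1)
  · rw [mul_comm (C : ℝ≥0∞), mul_assoc]
    exact hDx.2.trans (by gcongr; exact hCx.2)

theorem mul (h : EComparable l J K) (h' : EComparable l J' K') :
    EComparable l (fun x => J x * J' x) fun x => K x * K' x := by
  obtain ⟨C, hC⟩ := h
  obtain ⟨D, hD⟩ := h'
  refine ⟨C * D, ?_⟩
  filter_upwards [hC, hD] with x hCx hDx
  push_cast
  constructor
  · rw [mul_mul_mul_comm]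
    exact mul_le_mul' hCx.1 hDx.1
  · rw [mul_mul_mul_comm]
    exact mul_le_mul' hCx.2 hDx.2

theorem add_of_eventually_le {C : ℝ≥0} (h : EComparable l J K)
    (hJ' : ∀ᶠ x in l, J' x ≤ C * K x) : EComparable l (fun x => J x + J' x) K := by
  obtain ⟨D, hD⟩ := h
  refine ⟨D + C, ?_⟩
  filter_upwards [hD, hJ'] with x hDx hJx
  push_cast
  rw [add_mul, add_mul]
  exact ⟨add_le_add hDx.1 hJx,
    (hDx.2.trans (mul_le_mul_right le_self_add _)).trans le_self_add⟩

end EComparable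

end EComparable

section Tame

/-- The model functions `x ^ s |log x| ^ d`. -/
noncomputable def powLog (s : ℝ) (d : ℕ) (x : ℝ) : ℝ := x ^ s * |log x| ^ d

theorem eventually_abs_log_ge (c : ℝ) : ∀ᶠ x in 𝓝[>] (0 : ℝ), c ≤ |log x| :=
  (tendsto_abs_atBot_atTop.comp tendsto_log_nhdsGT_zero).eventually_ge_atTop c

theorem powLog_isBigO_of_lt {s s' : ℝ} (hs : s < s') (d d' : ℕ) :
    powLog s' d' =O[𝓝[>] 0] powLog s d := by
  have hlog : (fun x => |log x| ^ d') =O[𝓝[>] 0] fun x => x ^ (s - s') * |log x| ^ d := by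
    have hpow := (isLittleO_abs_log_rpow_rpow_nhdsGT_zero (d' : ℝ) (sub_neg.2 hs)).isBigO
    simp only [rpow_natCast] at hpow
    refine hpow.trans (IsBigO.of_bound 1 ?_)
    filter_upwards [eventually_abs_log_ge 1] with x hx
    rw [one_mul, norm_mul]
    refine le_mul_of_one_le_right (norm_nonneg _) ?_
    rw [norm_pow, norm_eq_abs, abs_abs]
    exact one_le_pow₀ hx
  refine ((isBigO_refl (fun x : ℝ => x ^ s') _).mul hlog).congr' EventuallyEq.rfl ?_
  filter_upwards [self_mem_nhdsWithin] with x (hx : 0 < x)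
  rw [powLog, ← mul_assoc, ← rpow_add hx, add_sub_cancel]

theorem powLog_isBigO_of_le (s : ℝ) {d d' : ℕ} (hd : d' ≤ d) :
    powLog s d' =O[𝓝[>] 0] powLog s d := by
  refine (isBigO_refl (fun x : ℝ => x ^ s) _).mul (IsBigO.of_bound 1 ?_)
  filter_upwards [eventually_abs_log_ge 1] with x hx
  rw [one_mul, norm_pow, norm_pow, norm_eq_abs, abs_abs]
  exact pow_le_pow_right₀ hx hd

theorem powLog_isBigO_or (s s' : ℝ) (d d' : ℕ) :
    powLog s' d' =O[𝓝[>] 0] powLog s d ∨ powLog s d =O[𝓝[>] 0] powLog s' d' := by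
  rcases lt_trichotomy s s' with h | rfl | h
  · exact Or.inl (powLog_isBigO_of_lt h d d')
  · exact (le_total d' d).imp (powLog_isBigO_of_le s) (powLog_isBigO_of_le s)
  · exact Or.inr (powLog_isBigO_of_lt h d' d)

theorem pos_of_tendsto_powLog_zero {s : ℝ} {d : ℕ}
    (h : Tendsto (powLog s d) (𝓝[>] 0) (𝓝 0)) : 0 < s := by
  by_contra! hs
  obtain ⟨x, hlt, hlog, hx0, hx1⟩ := ((h.eventually_lt_const one_pos).and
    ((eventually_abs_log_ge 1).and (Ioo_mem_nhdsGT one_pos))).exists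
  exact hlt.not_ge <| one_le_mul_of_one_le_of_one_le
    (one_le_rpow_of_pos_of_le_one_of_nonpos hx0 hx1.le hs) (one_le_pow₀ hlog)

/-- Functions which near `0+` are identically `0`, identically `∞`, or comparable to
`x ^ s |log x| ^ d` with `d ∈ {0, 1}`. -/
def Tame (J : ℝ → ℝ≥0∞) : Prop :=
  (∀ᶠ x in 𝓝[>] (0 : ℝ), J x = 0) ∨ (∀ᶠ x in 𝓝[>] (0 : ℝ), J x = ∞) ∨
    ∃ (s : ℝ) (d : ℕ), d ≤ 1 ∧ EComparable (𝓝[>] 0) J fun x => ‖powLog s d x‖ₑ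

namespace Tame

variable {J K : ℝ → ℝ≥0∞}

theorem of_eventually_eq_zero (h : ∀ᶠ x in 𝓝[>] (0 : ℝ), J x = 0) : Tame J :=
  Or.inl h

theorem of_eventually_eq_top (h : ∀ᶠ x in 𝓝[>] (0 : ℝ), J x = ∞) : Tame J :=
  Or.inr (Or.inl h)

theorem of_eComparable_powLog {s : ℝ} {d : ℕ} (hd : d ≤ 1)
    (h : EComparable (𝓝[>] 0) J fun x => ‖powLog s d x‖ₑ) : Tame J :=
  Or.inr (Or.inr ⟨s, d, hd, h⟩)

theorem of_isTheta_powLog {f : ℝ → ℝ} {s : ℝ} {d : ℕ} (hd : d ≤ 1)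
    (h : f =Θ[𝓝[>] 0] powLog s d) : Tame fun x => ‖f x‖ₑ :=
  of_eComparable_powLog hd (.of_isTheta h)

theorem of_isTheta_rpow {f : ℝ → ℝ} {s : ℝ} (h : f =Θ[𝓝[>] 0] fun x => x ^ s) :
    Tame fun x => ‖f x‖ₑ := by
  refine of_isTheta_powLog (s := s) zero_le_one ?_
  simpa only [funext fun x => show powLog s 0 x = x ^ s by rw [powLog, pow_zero, mul_one]] using h

theorem congr (hK : Tame K) (h : EComparable (𝓝[>] 0) J K) : Tame J := by
  rcases hK with hK | hK | ⟨s, d, hd, hK⟩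
  · obtain ⟨C, hC⟩ := h
    refine of_eventually_eq_zero ?_
    filter_upwards [hK, hC] with x hKx hCx
    simpa [hKx] using hCx.1
  · obtain ⟨C, hC⟩ := h
    refine of_eventually_eq_top ?_
    filter_upwards [hK, hC] with x hKx hCx
    by_contra hne
    exact ENNReal.mul_ne_top ENNReal.coe_ne_top hne (top_le_iff.1 (hKx ▸ hCx.2))
  · exact of_eComparable_powLog hd (h.trans hK)

theorem congr' (hK : Tame K) (h : J =ᶠ[𝓝[>] 0] K) : Tame J :=
  hK.congr (.of_eventuallyEq h)

theorem add (hJ : Tame J) (hK : Tame K) : Tame fun x => J x + K x := by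
  rcases hJ with hJ | hJ | ⟨s, d, hd, hJ⟩
  · exact hK.congr' (hJ.mono fun x hx => by simp only [hx, zero_add])
  · exact of_eventually_eq_top (hJ.mono fun x hx => by rw [hx, top_add])
  rcases hK with hK | hK | ⟨s', d', hd', hK⟩
  · exact (of_eComparable_powLog hd hJ).congr' (hK.mono fun x hx => by simp only [hx, add_zero])
  · exact of_eventually_eq_top (hK.mono fun x hx => by rw [hx, add_top])
  have habsorb : ∀ {s s' d d'} {J K : ℝ → ℝ≥0∞},
      EComparable (𝓝[>] 0) J (fun x => ‖powLog s d x‖ₑ) →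
      EComparable (𝓝[>] 0) K (fun x => ‖powLog s' d' x‖ₑ) →
      powLog s' d' =O[𝓝[>] 0] powLog s d →
        EComparable (𝓝[>] 0) (fun x => J x + K x) fun x => ‖powLog s d x‖ₑ := by
    rintro s s' d d' J K hJ ⟨C, hC⟩ hO
    obtain ⟨c, hc⟩ := hO.bound
    refine hJ.add_of_eventually_le (C := C * c.toNNReal) ?_
    filter_upwards [hC, hc] with x hCx hcx
    rw [ENNReal.coe_mul, mul_assoc]
    exact hCx.1.trans (by gcongr; exact enorm_le_of_norm_le hcx)
  rcases powLog_isBigO_or s s' d d' with hO | hO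
  · exact of_eComparable_powLog hd (habsorb hJ hK hO)
  · simp only [add_comm (J _)]
    exact of_eComparable_powLog hd' (habsorb hK hJ hO)

theorem enorm_mul {f : ℝ → ℝ} {r : ℝ} (hJ : Tame J) (hf : f =Θ[𝓝[>] 0] fun x => x ^ r) :
    Tame fun x => ‖f x‖ₑ * J x := by
  rcases hJ with hJ | hJ | ⟨s, d, hd, hJ⟩
  · exact of_eventually_eq_zero (hJ.mono fun x hx => by rw [hx, mul_zero])
  · refine of_eventually_eq_top ?_
    filter_upwards [hJ, hf.eq_zero_iff, self_mem_nhdsWithin] with x hJx hfx (hx : 0 < x)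
    have hfx0 : f x ≠ 0 := fun h => (rpow_pos_of_pos hx r).ne' (hfx.1 h)
    rw [hJx, ENNReal.mul_top (enorm_ne_zero.2 hfx0)]
  · refine of_eComparable_powLog (s := r + s) hd
      (((EComparable.of_isTheta hf).mul hJ).trans (.of_eventuallyEq ?_))
    filter_upwards [self_mem_nhdsWithin] with x (hx : 0 < x)
    rw [← _root_.enorm_mul, powLog, powLog, rpow_add hx, mul_assoc]

end Tame

end Tame

theorem isTheta_sub_of_isBigOWith {α E : Type*} [SeminormedAddCommGroup E] {l : Filter α}
    {f g : α → E} {c : ℝ} (h : IsBigOWith c l g f) (hc : c < 1) :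
    (fun x => f x - g x) =Θ[l] f :=
  ⟨(isBigO_refl f l).sub h.isBigO, (h.right_le_sub_of_lt_one hc).isBigO⟩

section PowerIntegrals

variable {a b e : ℝ}

theorem setLIntegral_Ioo_enorm_eq_enorm_intervalIntegral {f : ℝ → ℝ} (hab : a ≤ b)
    (hf : IntervalIntegrable f volume a b) (hnn : ∀ u ∈ Ioo a b, 0 ≤ f u) :
    ∫⁻ u in Ioo a b, ‖f u‖ₑ = ‖∫ u in a..b, f u‖ₑ := by
  rw [intervalIntegral.integral_of_le hab, integral_Ioc_eq_integral_Ioo,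
    Real.enorm_of_nonneg (setIntegral_nonneg measurableSet_Ioo hnn),
    ofReal_integral_eq_lintegral_ofReal ((intervalIntegrable_iff_integrableOn_Ioo_of_le hab).1 hf)
      ((ae_restrict_iff' measurableSet_Ioo).2 (ae_of_all _ hnn))]
  exact setLIntegral_congr_fun measurableSet_Ioo fun u hu => Real.enorm_of_nonneg (hnn u hu)

theorem setLIntegral_Ioo_enorm_rpow (ha : 0 ≤ a) (hab : a ≤ b)
    (h : -1 < e ∨ e ≠ -1 ∧ 0 < a) :
    ∫⁻ u in Ioo a b, ‖u ^ e‖ₑ = ‖(b ^ (e + 1) - a ^ (e + 1)) / (e + 1)‖ₑ := by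
  have h' : -1 < e ∨ e ≠ -1 ∧ (0 : ℝ) ∉ uIcc a b :=
    h.imp_right (And.imp_right (notMem_uIcc_of_lt · (by linarith)))
  rw [← integral_rpow h']
  refine setLIntegral_Ioo_enorm_eq_enorm_intervalIntegral hab ?_
    fun u hu => rpow_nonneg (ha.trans hu.1.le) e
  exact h'.elim intervalIntegral.intervalIntegrable_rpow'
    fun h => intervalIntegral.intervalIntegrable_rpow (Or.inr h.2)

theorem setLIntegral_Ioo_enorm_rpow_neg_one (ha : 0 < a) (hab : a ≤ b) :
    ∫⁻ u in Ioo a b, ‖u ^ (-1 : ℝ)‖ₑ = ‖log (b / a)‖ₑ := by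
  have h0 : (0 : ℝ) ∉ uIcc a b := notMem_uIcc_of_lt ha (ha.trans_le hab)
  simp only [rpow_neg_one]
  rw [← integral_inv h0]
  exact setLIntegral_Ioo_enorm_eq_enorm_intervalIntegral hab
    (intervalIntegral.intervalIntegrable_inv (fun u hu hu0 => h0 (hu0 ▸ hu)) continuousOn_id)
    fun u hu => inv_nonneg.2 (ha.trans hu.1).le

theorem setLIntegral_Ioo_zero_enorm_rpow_eq_top (hb : 0 < b) (he : e ≤ -1) :
    ∫⁻ u in Ioo 0 b, ‖u ^ e‖ₑ = ∞ := by
  by_contra hne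
  have hint : IntegrableOn (fun u : ℝ => u ^ e) (Ioo 0 b) :=
    ⟨Measurable.aestronglyMeasurable (by fun_prop), lt_top_iff_ne_top.2 hne⟩
  exact absurd ((intervalIntegral.integrableOn_Ioo_rpow_iff hb).1 hint) (not_lt.2 he)

end PowerIntegrals

theorem isTheta_rpow_of_isTheta_rpow {f : ℝ → ℝ} {q : ℝ} (hf : ∀ᶠ x in 𝓝[>] (0 : ℝ), 0 ≤ f x)
    (h : f =Θ[𝓝[>] 0] fun x => x ^ q) (e : ℝ) :
    (fun x => f x ^ e) =Θ[𝓝[>] 0] fun x => x ^ (q * e) := by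
  refine (IsTheta.rpow hf ?_ h).trans_eventuallyEq ?_
  · filter_upwards [self_mem_nhdsWithin] with x (hx : 0 < x) using rpow_nonneg hx.le q
  · filter_upwards [self_mem_nhdsWithin] with x (hx : 0 < x)
    exact (rpow_mul hx.le q e).symm

theorem isTheta_sub_rpow_of_pos {α : Type*} {l : Filter α} {f g : α → ℝ} {r : ℝ} (hr : 0 < r)
    (hf : ∀ᶠ x in l, 0 < f x) (hfg : ∀ᶠ x in l, 2 * f x ≤ g x) :
    (fun x => g x ^ r - f x ^ r) =Θ[l] fun x => g x ^ r := by
  refine isTheta_sub_of_isBigOWith (c := (1 / 2) ^ r) (IsBigOWith.of_bound ?_)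
    (rpow_lt_one (by norm_num) (by norm_num) hr)
  filter_upwards [hf, hfg] with x hfx hfgx
  have hgx : 0 < g x := by linarith
  rw [norm_of_nonneg (by positivity), norm_of_nonneg (by positivity),
    ← mul_rpow (by norm_num) hgx.le]
  exact rpow_le_rpow hfx.le (by linarith) hr.le

theorem isTheta_sub_rpow_of_neg {α : Type*} {l : Filter α} {f g : α → ℝ} {r : ℝ} (hr : r < 0)
    (hf : ∀ᶠ x in l, 0 < f x) (hfg : ∀ᶠ x in l, 2 * f x ≤ g x) :
    (fun x => g x ^ r - f x ^ r) =Θ[l] fun x => f x ^ r := by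
  have hbound : IsBigOWith (2 ^ r) l (fun x => g x ^ r) fun x => f x ^ r := by
    refine IsBigOWith.of_bound ?_
    filter_upwards [hf, hfg] with x hfx hfgx
    have hgx : 0 < g x := by linarith
    rw [norm_of_nonneg (by positivity), norm_of_nonneg (by positivity),
      ← mul_rpow two_pos.le hfx.le]
    exact rpow_le_rpow_of_nonpos (by positivity) hfgx hr.le
  refine IsTheta.trans (.of_norm_eventuallyEq_norm (.of_forall fun x => norm_sub_rev _ _))
    (isTheta_sub_of_isBigOWith hbound (rpow_lt_one_of_one_lt_of_neg one_lt_two hr))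

theorem isBigO_log_sub_log_one {α : Type*} {l : Filter α} {f g : α → ℝ}
    (hf : ∀ᶠ x in l, 0 < f x) (hg : ∀ᶠ x in l, 0 < g x) (h : f =Θ[l] g) :
    (fun x => log (f x) - log (g x)) =O[l] fun _ => (1 : ℝ) := by
  obtain ⟨C, hC⟩ := h.1.bound
  obtain ⟨D, hD⟩ := h.2.bound
  have hlog : ∀ {a b K : ℝ}, 0 < a → 0 < b → ‖a‖ ≤ K * ‖b‖ → log a - log b ≤ K := by
    intro a b K ha hb hab
    rw [norm_of_nonneg ha.le, norm_of_nonneg hb.le, ← div_le_iff₀ hb] at hab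
    rw [← log_div ha.ne' hb.ne']
    exact (log_le_self (div_pos ha hb).le).trans hab
  refine IsBigO.of_bound (max C D) ?_
  filter_upwards [hf, hg, hC, hD] with x hfx hgx hCx hDx
  rw [norm_one, mul_one, norm_eq_abs, abs_sub_le_iff]
  exact ⟨(hlog hfx hgx hCx).trans (le_max_left _ _), (hlog hgx hfx hDx).trans (le_max_right _ _)⟩

theorem exists_isTheta_powLog_log {f : ℝ → ℝ} {r : ℝ} (h2 : ∀ᶠ x in 𝓝[>] (0 : ℝ), 2 ≤ f x)
    (h : f =Θ[𝓝[>] 0] fun x => x ^ r) :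
    ∃ d ≤ 1, (fun x => log (f x)) =Θ[𝓝[>] 0] powLog 0 d := by
  have hdiff : (fun x => log (f x) - r * log x) =O[𝓝[>] 0] fun _ => (1 : ℝ) := by
    refine (isBigO_log_sub_log_one (h2.mono fun x hx => by linarith) ?_ h).congr' ?_ .rfl
    · filter_upwards [self_mem_nhdsWithin] with x (hx : 0 < x) using rpow_pos_of_pos hx r
    · filter_upwards [self_mem_nhdsWithin] with x (hx : 0 < x)
      rw [log_rpow hx]
  rcases eq_or_ne r 0 with rfl | hr
  · refine ⟨0, zero_le_one, ?_⟩
    simp only [zero_mul, sub_zero] at hdiff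
    have hone : (fun _ => (1 : ℝ)) =O[𝓝[>] 0] fun x => log (f x) := by
      refine IsBigO.of_bound (log 2)⁻¹ (h2.mono fun x hx => ?_)
      have hlog := log_le_log two_pos hx
      rw [norm_one, norm_of_nonneg ((log_pos one_lt_two).le.trans hlog)]
      exact (one_le_inv_mul₀ (log_pos one_lt_two)).2 hlog
    rw [show powLog 0 0 = fun _ => 1 from funext fun x => by simp [powLog]]
    exact ⟨hdiff, hone⟩
  · refine ⟨1, le_rfl, ?_⟩
    have hsmall : (fun x => log (f x) - r * log x) =o[𝓝[>] 0] log :=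
      hdiff.trans_isLittleO ((isLittleO_const_left_of_ne one_ne_zero).2
        (tendsto_abs_atBot_atTop.comp tendsto_log_nhdsGT_zero))
    have hmain : (fun x => r * log x) =Θ[𝓝[>] 0] log :=
      (isTheta_const_mul_left hr).2 isTheta_rfl
    have hlog : (fun x => log (f x)) =Θ[𝓝[>] 0] fun x => r * log x := by
      simpa only [Pi.add_def, sub_add_cancel] using
        (hsmall.trans_isTheta hmain.symm).add_isTheta isTheta_rfl
    exact (hlog.trans hmain).trans
      (.of_norm_eventuallyEq_norm (.of_forall fun x => by simp [powLog]))

section Slices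

variable {W W' : ℝ × ℝ → ℝ} {β γ β' A B : ℝ → ℝ} {x : ℝ}

/-- The integral of `|W|` over the vertical slice at abscissa `x` of the region between the graphs
of `β` and `β'`. -/
noncomputable def sliceLIntegral (W : ℝ × ℝ → ℝ) (β β' : ℝ → ℝ) (x : ℝ) : ℝ≥0∞ :=
  ∫⁻ y in Ioo (β x) (β' x), ‖W (x, y)‖ₑ

/-- The filter of points with small positive abscissa between the graphs of `β` and `β'`. -/
def betweenFilter (β β' : ℝ → ℝ) : Filter (ℝ × ℝ) :=
  comap Prod.fst (𝓝[>] 0) ⊓ 𝓟 {p | p.2 ∈ Ioo (β p.1) (β' p.1)}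

theorem eventually_betweenFilter {P : ℝ × ℝ → Prop} : (∀ᶠ p in betweenFilter β β', P p) ↔
    ∀ᶠ x in 𝓝[>] (0 : ℝ), ∀ y ∈ Ioo (β x) (β' x), P (x, y) := by
  rw [betweenFilter, eventually_inf_principal, eventually_comap]
  refine eventually_congr (.of_forall fun x => ⟨fun h y => h (x, y) rfl, ?_⟩)
  rintro h ⟨_, y⟩ rfl
  exact h y

theorem tendsto_fst_betweenFilter : Tendsto Prod.fst (betweenFilter β β') (𝓝[>] 0) :=
  tendsto_comap.mono_left inf_le_left

theorem eventually_mem_betweenFilter :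
    ∀ᶠ p in betweenFilter β β', p.2 ∈ Ioo (β p.1) (β' p.1) :=
  mem_inf_of_right (mem_principal_self _)

theorem isTheta_betweenFilter_comp_fst {f g : ℝ → ℝ} (h : f =Θ[𝓝[>] 0] g) :
    (fun p : ℝ × ℝ => f p.1) =Θ[betweenFilter β β'] fun p => g p.1 :=
  isTheta_comp_tendsto h tendsto_fst_betweenFilter

theorem EComparable.sliceLIntegral (h : W =Θ[betweenFilter β β'] W') :
    EComparable (𝓝[>] 0) (sliceLIntegral W β β') (sliceLIntegral W' β β') := by
  obtain ⟨C, hC⟩ := EComparable.of_isTheta h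
  refine ⟨C, (eventually_betweenFilter.1 hC).mono fun x hx => ?_⟩
  simp only [_root_.sliceLIntegral, ← lintegral_const_mul' _ _ ENNReal.coe_ne_top]
  exact ⟨setLIntegral_mono' measurableSet_Ioo fun y hy => (hx y hy).1,
    setLIntegral_mono' measurableSet_Ioo fun y hy => (hx y hy).2⟩

theorem sliceLIntegral_fst_mul (c : ℝ → ℝ) :
    sliceLIntegral (fun p => c p.1 * W p) β β' x = ‖c x‖ₑ * sliceLIntegral W β β' x := by
  simp only [sliceLIntegral, enorm_mul, lintegral_const_mul' _ _ enorm_ne_top]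

theorem sliceLIntegral_of_le (h : β' x ≤ β x) : sliceLIntegral W β β' x = 0 := by
  rw [sliceLIntegral, Ioo_eq_empty (not_lt.2 h), setLIntegral_empty]

theorem sliceLIntegral_add (h : β x < γ x) (h' : γ x < β' x) :
    sliceLIntegral W β γ x + sliceLIntegral W γ β' x = sliceLIntegral W β β' x := by
  have hdisj : Disjoint (Ioc (β x) (γ x)) (Ioo (γ x) (β' x)) :=
    disjoint_left.2 fun _ hy hy' => hy.2.not_gt hy'.1
  simp only [sliceLIntegral]
  rw [← Ioc_union_Ioo_eq_Ioo h.le h', lintegral_union measurableSet_Ioo hdisj,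
    setLIntegral_congr Ioo_ae_eq_Ioc]

theorem sliceLIntegral_comp_sub (ψ : ℝ → ℝ) :
    sliceLIntegral (fun p => W (p.1, p.2 - ψ p.1)) β β' x =
      sliceLIntegral W (fun x => β x - ψ x) (fun x => β' x - ψ x) x := by
  have h := (measurePreserving_sub_right volume (ψ x)).setLIntegral_comp_preimage_emb
    (MeasurableEquiv.subRight (ψ x)).measurableEmbedding (fun y => ‖W (x, y)‖ₑ)
    (Ioo (β x - ψ x) (β' x - ψ x))
  simpa only [sliceLIntegral, preimage_sub_const_Ioo, sub_add_cancel] using h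

theorem sliceLIntegral_comp_neg :
    sliceLIntegral (fun p => W (p.1, -p.2)) β β' x =
      sliceLIntegral W (fun x => -β' x) (fun x => -β x) x := by
  have h := (Measure.measurePreserving_neg volume).setLIntegral_comp_preimage_emb
    (MeasurableEquiv.neg ℝ).measurableEmbedding (fun y => ‖W (x, y)‖ₑ) (Ioo (-β' x) (-β x))
  simpa only [sliceLIntegral, neg_preimage, neg_Ioo, neg_neg] using h

namespace Tame

theorem sliceLIntegral_of_le (h : β' ≤ᶠ[𝓝[>] 0] β) : Tame (sliceLIntegral W β β') :=
  of_eventually_eq_zero (h.mono fun _ => _root_.sliceLIntegral_of_le)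

theorem sliceLIntegral_congr (h : Tame (sliceLIntegral W' β β'))
    (hW : W =Θ[betweenFilter β β'] W') : Tame (sliceLIntegral W β β') :=
  h.congr (.sliceLIntegral hW)

theorem sliceLIntegral_split (hβ : ∀ᶠ x in 𝓝[>] (0 : ℝ), β x < γ x)
    (hβ' : ∀ᶠ x in 𝓝[>] (0 : ℝ), γ x < β' x) (h : Tame (sliceLIntegral W β γ))
    (h' : Tame (sliceLIntegral W γ β')) : Tame (sliceLIntegral W β β') :=
  (h.add h').congr' ((hβ.and hβ').mono fun _ hx => (sliceLIntegral_add hx.1 hx.2).symm)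

theorem sliceLIntegral_fst_mul {c : ℝ → ℝ} {r : ℝ} (h : Tame (sliceLIntegral W β β'))
    (hc : c =Θ[𝓝[>] 0] fun x => x ^ r) : Tame (sliceLIntegral (fun p => c p.1 * W p) β β') :=
  (h.enorm_mul hc).congr' (.of_forall fun _ => _root_.sliceLIntegral_fst_mul c)

theorem sliceLIntegral_rpow_zero (e : ℝ) (hB : IsPuiseux B)
    (hBpos : ∀ᶠ x in 𝓝[>] (0 : ℝ), 0 < B x) :
    Tame (sliceLIntegral (fun p => p.2 ^ e) (fun _ => 0) B) := by
  rcases lt_or_ge (-1) e with he | he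
  · obtain ⟨q, hq⟩ := hB.exists_isTheta_rpow hBpos
    have hpow := isTheta_rpow_of_isTheta_rpow (hBpos.mono fun _ h => h.le) hq (e + 1)
    have he' : (e + 1)⁻¹ ≠ 0 := inv_ne_zero (by linarith)
    refine (of_isTheta_rpow ((isTheta_const_mul_left he').2 hpow)).congr' ?_
    filter_upwards [hBpos] with x hx
    rw [sliceLIntegral, setLIntegral_Ioo_enorm_rpow le_rfl hx.le (.inl he),
      zero_rpow (by linarith), sub_zero, div_eq_inv_mul]
  · exact of_eventually_eq_top (hBpos.mono fun x hx =>
      setLIntegral_Ioo_zero_enorm_rpow_eq_top hx he)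

theorem sliceLIntegral_rpow_of_lt_two_mul (e : ℝ) (hA : IsPuiseux A) (hB : IsPuiseux B)
    (hApos : ∀ᶠ x in 𝓝[>] (0 : ℝ), 0 < A x) (hAB : ∀ᶠ x in 𝓝[>] (0 : ℝ), A x < B x)
    (hBA : ∀ᶠ x in 𝓝[>] (0 : ℝ), B x < 2 * A x) :
    Tame (sliceLIntegral (fun p => p.2 ^ e) A B) := by
  obtain ⟨q, hq⟩ := hA.exists_isTheta_rpow hApos
  obtain ⟨q', hq'⟩ := (hB.sub hA).exists_isTheta_rpow (hAB.mono fun x hx => sub_pos.2 hx)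
  have hlength : Tame (sliceLIntegral (fun _ => 1) A B) := by
    refine (of_isTheta_rpow hq').congr' (hAB.mono fun x hx => ?_)
    simp [sliceLIntegral, Real.enorm_of_nonneg (sub_pos.2 hx).le]
  have hev : ∀ᶠ p in betweenFilter A B, 0 < A p.1 ∧ A p.1 < p.2 ∧ p.2 < 2 * A p.1 := by
    filter_upwards [tendsto_fst_betweenFilter.eventually (hApos.and hBA),
      eventually_mem_betweenFilter] with p hp hp'
    exact ⟨hp.1, hp'.1, hp'.2.trans hp.2⟩
  have hsnd : (fun p : ℝ × ℝ => p.2) =Θ[betweenFilter A B] fun p => A p.1 := by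
    refine isTheta_of_eventually_bounds (c := 1) (C := 2) one_pos (hev.mono fun p hp => ?_)
    rw [norm_of_nonneg hp.1.le, norm_of_nonneg (hp.1.trans hp.2.1).le, one_mul]
    exact ⟨hp.2.1.le, hp.2.2.le⟩
  have hpow := hsnd.rpow (r := e) (hev.mono fun p hp => (hp.1.trans hp.2.1).le)
    (hev.mono fun p hp => hp.1.le)
  refine (hlength.sliceLIntegral_fst_mul
    (isTheta_rpow_of_isTheta_rpow (hApos.mono fun _ h => h.le) hq e)).sliceLIntegral_congr ?_
  simpa only [mul_one] using hpow

theorem sliceLIntegral_rpow_of_two_mul_le (e : ℝ) (hA : IsPuiseux A) (hB : IsPuiseux B)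
    (hApos : ∀ᶠ x in 𝓝[>] (0 : ℝ), 0 < A x) (hBA : ∀ᶠ x in 𝓝[>] (0 : ℝ), 2 * A x ≤ B x) :
    Tame (sliceLIntegral (fun p => p.2 ^ e) A B) := by
  have hpos : ∀ᶠ x in 𝓝[>] (0 : ℝ), 0 < A x ∧ 0 < B x ∧ A x ≤ B x ∧ 2 * A x ≤ B x := by
    filter_upwards [hApos, hBA] with x hAx hBAx
    exact ⟨hAx, by linarith, by linarith, hBAx⟩
  obtain ⟨q, hq⟩ := hA.exists_isTheta_rpow hApos
  obtain ⟨q', hq'⟩ := hB.exists_isTheta_rpow (hpos.mono fun x hx => hx.2.1)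
  rcases eq_or_ne e (-1) with rfl | he
  · obtain ⟨d, hd, hlog⟩ := exists_isTheta_powLog_log (f := fun x => B x / A x) (r := q' - q)
      (hpos.mono fun x hx => (le_div_iff₀ hx.1).2 hx.2.2.2) ((hq'.div hq).trans_eventuallyEq (by
        filter_upwards [self_mem_nhdsWithin] with x (hx : 0 < x)
        exact (rpow_sub hx q' q).symm))
    exact (of_isTheta_powLog hd hlog).congr' (hpos.mono fun x hx =>
      setLIntegral_Ioo_enorm_rpow_neg_one hx.1 hx.2.2.1)
  · have he' : e + 1 ≠ 0 := fun h => he (by linarith)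
    obtain ⟨s, hs⟩ : ∃ s : ℝ,
        (fun x => B x ^ (e + 1) - A x ^ (e + 1)) =Θ[𝓝[>] 0] fun x => x ^ s := by
      rcases he'.lt_or_gt with hneg | hpos'
      · have hsub := isTheta_sub_rpow_of_neg hneg hApos hBA
        exact ⟨_, hsub.trans (isTheta_rpow_of_isTheta_rpow (hpos.mono fun x hx => hx.1.le) hq _)⟩
      · have hsub := isTheta_sub_rpow_of_pos hpos' hApos hBA
        exact ⟨_, hsub.trans
          (isTheta_rpow_of_isTheta_rpow (hpos.mono fun x hx => hx.2.1.le) hq' _)⟩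
    refine (of_isTheta_rpow ((isTheta_const_mul_left (inv_ne_zero he')).2 hs)).congr' ?_
    filter_upwards [hpos] with x hx
    rw [sliceLIntegral, setLIntegral_Ioo_enorm_rpow hx.1.le hx.2.2.1 (.inr ⟨he, hx.1⟩),
      div_eq_inv_mul]

theorem sliceLIntegral_rpow (e : ℝ) (hA : IsPuiseux A) (hB : IsPuiseux B)
    (hA0 : ∀ᶠ x in 𝓝[>] (0 : ℝ), 0 ≤ A x) (hAB : ∀ᶠ x in 𝓝[>] (0 : ℝ), A x < B x) :
    Tame (sliceLIntegral (fun p => p.2 ^ e) A B) := by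
  rcases (IsPuiseux.const 0).eventually_lt_or_le hA with hApos | hAnonpos
  · rcases hB.eventually_lt_or_le ((IsPuiseux.const 2).mul hA) with hBA | hBA
    · exact sliceLIntegral_rpow_of_lt_two_mul e hA hB hApos hAB hBA
    · exact sliceLIntegral_rpow_of_two_mul_le e hA hB hApos hBA
  · have hzero : ∀ᶠ x in 𝓝[>] (0 : ℝ), A x = 0 :=
      (hA0.and hAnonpos).mono fun x hx => hx.2.antisymm hx.1
    refine (sliceLIntegral_rpow_zero e hB ((hA0.and hAB).mono fun x hx =>
      hx.1.trans_lt hx.2)).congr' (hzero.mono fun x hx => ?_)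
    rw [sliceLIntegral, sliceLIntegral, hx]

end Tame

end Slices

section Subdivision

variable {W : ℝ × ℝ → ℝ} {β β' γ γ' b : ℝ → ℝ}

/-- The graph of `b` avoids the open region between the graphs of `β` and `β'`. -/
def Outside (β β' b : ℝ → ℝ) : Prop :=
  b ≤ᶠ[𝓝[>] 0] β ∨ β' ≤ᶠ[𝓝[>] 0] b

theorem Outside.mono (h : Outside β β' b) (hβ : β ≤ᶠ[𝓝[>] 0] γ) (hβ' : γ' ≤ᶠ[𝓝[>] 0] β') :
    Outside γ γ' b :=
  h.imp (·.trans hβ) hβ'.trans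

theorem Outside.eventually_ne (h : Outside β β' b) :
    ∀ᶠ p in betweenFilter β β', p.2 ≠ b p.1 := by
  rcases h with h | h
  · filter_upwards [tendsto_fst_betweenFilter.eventually h, eventually_mem_betweenFilter]
      with p hp hp' using (hp.trans_lt hp'.1).ne'
  · filter_upwards [tendsto_fst_betweenFilter.eventually h, eventually_mem_betweenFilter]
      with p hp hp' using (hp'.2.trans_le hp).ne

theorem Tame.sliceLIntegral_of_subdivision {B : Multiset (ℝ → ℝ)} (hB : ∀ b ∈ B, IsPuiseux b)
    (hβ : IsPuiseux β) (hβ' : IsPuiseux β')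
    (hcell : ∀ γ γ', IsPuiseux γ → IsPuiseux γ' → β ≤ᶠ[𝓝[>] 0] γ →
      (∀ᶠ x in 𝓝[>] 0, γ x < γ' x) → γ' ≤ᶠ[𝓝[>] 0] β' → (∀ b ∈ B, Outside γ γ' b) →
        Tame (sliceLIntegral W γ γ')) :
    Tame (sliceLIntegral W β β') := by
  induction B using Multiset.induction_on with
  | empty =>
    rcases hβ.eventually_lt_or_le hβ' with hlt | hle
    · exact hcell β β' hβ hβ' .rfl hlt .rfl (by simp)
    · exact .sliceLIntegral_of_le hle
  | cons b B ih =>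
    refine ih (fun b' hb' => hB b' (Multiset.mem_cons_of_mem hb'))
      fun γ γ' hγ hγ' hβγ hlt hγβ' hout => ?_
    have hb := hB b (Multiset.mem_cons_self b B)
    have hsub : ∀ δ δ', IsPuiseux δ → IsPuiseux δ' → γ ≤ᶠ[𝓝[>] 0] δ →
        (∀ᶠ x in 𝓝[>] 0, δ x < δ' x) → δ' ≤ᶠ[𝓝[>] 0] γ' → Outside δ δ' b →
          Tame (sliceLIntegral W δ δ') := fun δ δ' hδ hδ' hγδ hlt hδγ' hb =>
      hcell δ δ' hδ hδ' (hβγ.trans hγδ) hlt (hδγ'.trans hγβ') <|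
        Multiset.forall_mem_cons.2 ⟨hb, fun b' hb' => (hout b' hb').mono hγδ hδγ'⟩
    rcases hγ.eventually_lt_or_le hb with hγb | hbγ
    · rcases hb.eventually_lt_or_le hγ' with hbγ' | hγ'b
      · exact .sliceLIntegral_split hγb hbγ'
          (hsub γ b hγ hb .rfl hγb (hbγ'.mono fun _ => le_of_lt) (.inr .rfl))
          (hsub b γ' hb hγ' (hγb.mono fun _ => le_of_lt) hbγ' .rfl (.inl .rfl))
      · exact hsub γ γ' hγ hγ' .rfl hlt .rfl (.inr hγ'b)
    · exact hsub γ γ' hγ hγ' .rfl hlt .rfl (.inl hbγ)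

end Subdivision

section PowerProducts

variable {β β' : ℝ → ℝ}

namespace PuiseuxFactor

/-- The factor `|y| + |ψ(x) - α(x)| + b(x)`, which measures the size of `|ψ(x) + y - α(x)| + b(x)`
as long as the graph of `ψ + y` stays well away from that of `α`. -/
def recenter {ψ : ℝ → ℝ} (hψ : IsPuiseux ψ) (ρ : PuiseuxFactor) : PuiseuxFactor where
  center _ := 0
  width x := |ψ x - ρ.center x| + ρ.width x
  isPuiseux_center := .const 0
  isPuiseux_width := (hψ.sub ρ.isPuiseux_center).abs.add ρ.isPuiseux_width
  width_nonneg := ρ.width_nonneg.mono fun _ hx => add_nonneg (abs_nonneg _) hx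

/-- The factor reflected in the `x`-axis. -/
def reflect (ρ : PuiseuxFactor) : PuiseuxFactor where
  center x := -ρ.center x
  width := ρ.width
  isPuiseux_center := ρ.isPuiseux_center.neg
  isPuiseux_width := ρ.isPuiseux_width
  width_nonneg := ρ.width_nonneg

theorem eval_reflect_neg (ρ : PuiseuxFactor) (p : ℝ × ℝ) :
    ρ.reflect.eval (p.1, -p.2) = ρ.eval p := by
  simp only [eval, reflect, ← neg_sub', abs_neg]

theorem eventually_eval_nonneg (ρ : PuiseuxFactor) {l : Filter (ℝ × ℝ)}
    (hl : Tendsto Prod.fst l (𝓝[>] 0)) (φ : ℝ × ℝ → ℝ) : ∀ᶠ p in l, 0 ≤ ρ.eval (p.1, φ p) :=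
  (hl.eventually ρ.width_nonneg).mono fun _ hp => add_nonneg (abs_nonneg _) hp

theorem isTheta_eval_recenter (ρ : PuiseuxFactor) (hβ : IsPuiseux β)
    (hout : Outside β β' ρ.center) :
    ρ.eval =Θ[betweenFilter β fun x => (β x + β' x) / 2]
      fun p => (ρ.recenter hβ).eval (p.1, p.2 - β p.1) := by
  refine isTheta_of_eventually_bounds (c := 1 / 3) (C := 1) (by norm_num) ?_
  have hout' : ∀ᶠ x in 𝓝[>] (0 : ℝ), ρ.center x ≤ β x ∨ β' x ≤ ρ.center x :=
    hout.elim (·.mono fun _ => .inl) (·.mono fun _ => .inr)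
  filter_upwards [tendsto_fst_betweenFilter.eventually (hout'.and ρ.width_nonneg),
    eventually_mem_betweenFilter] with p ⟨hcenter, hwidth⟩ hp
  have hβp : |p.2 - β p.1| = p.2 - β p.1 := abs_of_pos (sub_pos.2 hp.1)
  have hle : |p.2 - ρ.center p.1| ≤ |p.2 - β p.1| + |β p.1 - ρ.center p.1| := abs_sub_le _ _ _
  have hge : |p.2 - β p.1| + |β p.1 - ρ.center p.1| ≤ 3 * |p.2 - ρ.center p.1| := by
    rcases hcenter with h | h
    · rw [hβp, abs_of_nonneg (by linarith), abs_of_nonneg (by linarith [hp.1])]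
      linarith [hp.1]
    · rw [hβp, abs_of_nonpos (by linarith [hp.1, hp.2]),
        abs_of_nonpos (by linarith [hp.1, hp.2])]
      linarith [hp.2]
  simp only [eval, recenter, sub_zero]
  rw [norm_of_nonneg (by positivity), norm_of_nonneg (by positivity)]
  constructor <;> linarith

theorem exists_isTheta_eval_rpow (ρ : PuiseuxFactor) (e : ℝ)
    (hcenter : ∀ᶠ x in 𝓝[>] (0 : ℝ), ρ.center x = 0) (hβ : ∀ᶠ x in 𝓝[>] (0 : ℝ), 0 ≤ β x)
    (hlt : ∀ᶠ x in 𝓝[>] (0 : ℝ), β x < β' x) (hout : Outside β β' ρ.width) :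
    ∃ r s : ℝ, (fun p => ρ.eval p ^ e) =Θ[betweenFilter β β'] fun p => p.1 ^ r * p.2 ^ s := by
  have hev : ∀ᶠ p in betweenFilter β β', 0 < p.2 ∧ 0 ≤ ρ.width p.1 ∧
      ρ.eval p = p.2 + ρ.width p.1 := by
    filter_upwards [tendsto_fst_betweenFilter.eventually (hcenter.and (hβ.and ρ.width_nonneg)),
      eventually_mem_betweenFilter] with p hp hp'
    have hpos : 0 < p.2 := hp.2.1.trans_lt hp'.1
    exact ⟨hpos, hp.2.2, by rw [eval, hp.1, sub_zero, abs_of_pos hpos]⟩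
  have hnn := ρ.eventually_eval_nonneg (tendsto_fst_betweenFilter (β := β) (β' := β')) Prod.snd
  rcases hout with hle | hge
  · have hsnd : ρ.eval =Θ[betweenFilter β β'] fun p => p.2 := by
      refine isTheta_of_eventually_bounds (c := 1) (C := 2) one_pos ?_
      filter_upwards [hev, eventually_mem_betweenFilter,
        tendsto_fst_betweenFilter.eventually hle] with p ⟨hpos, hwidth, heval⟩ hp hple
      rw [heval, norm_of_nonneg hpos.le, norm_of_nonneg (by positivity)]
      constructor <;> linarith [hp.1]
    refine ⟨0, e, ?_⟩
    simpa only [rpow_zero, one_mul] using hsnd.rpow hnn (hev.mono fun p hp => hp.1.le)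
  · have hpos : ∀ᶠ x in 𝓝[>] (0 : ℝ), 0 < ρ.width x := by
      filter_upwards [hβ, hlt, hge] with x h0 h1 h2 using (h0.trans_lt h1).trans_le h2
    obtain ⟨q, hq⟩ := ρ.isPuiseux_width.exists_isTheta_rpow hpos
    have hfst : ρ.eval =Θ[betweenFilter β β'] fun p => ρ.width p.1 := by
      refine isTheta_of_eventually_bounds (c := 1) (C := 2) one_pos ?_
      filter_upwards [hev, eventually_mem_betweenFilter,
        tendsto_fst_betweenFilter.eventually hge] with p ⟨hpos, hwidth, heval⟩ hp hpge
      rw [heval, norm_of_nonneg hwidth, norm_of_nonneg (by positivity)]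
      constructor <;> linarith [hp.2]
    refine ⟨q * e, 0, ?_⟩
    simpa only [rpow_zero, mul_one] using
      (hfst.rpow hnn (hev.mono fun p hp => hp.2.1)).trans (isTheta_betweenFilter_comp_fst
        (isTheta_rpow_of_isTheta_rpow ρ.width_nonneg hq e))

end PuiseuxFactor

/-- The product of the real powers `(|y - α(x)| + b(x)) ^ e` over a multiset of factors paired with
exponents. -/
noncomputable def powProd (T : Multiset (PuiseuxFactor × ℝ)) (p : ℝ × ℝ) : ℝ :=
  (T.map fun τ => τ.1.eval p ^ τ.2).prod

theorem powProd_cons (τ : PuiseuxFactor × ℝ) (T : Multiset (PuiseuxFactor × ℝ)) (p : ℝ × ℝ) :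
    powProd (τ ::ₘ T) p = τ.1.eval p ^ τ.2 * powProd T p := by
  rw [powProd, Multiset.map_cons, Multiset.prod_cons, powProd]

variable {T : Multiset (PuiseuxFactor × ℝ)}

theorem exists_isTheta_powProd_rpow (hβ : ∀ᶠ x in 𝓝[>] (0 : ℝ), 0 ≤ β x)
    (hT : ∀ τ ∈ T, ∃ r s : ℝ,
      (fun p => τ.1.eval p ^ τ.2) =Θ[betweenFilter β β'] fun p => p.1 ^ r * p.2 ^ s) :
    ∃ r s : ℝ, powProd T =Θ[betweenFilter β β'] fun p => p.1 ^ r * p.2 ^ s := by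
  induction T using Multiset.induction_on with
  | empty => exact ⟨0, 0, EventuallyEq.isTheta (.of_forall fun p => by simp [powProd])⟩
  | cons τ T ih =>
    obtain ⟨⟨r, s, hτ⟩, hT⟩ := Multiset.forall_mem_cons.1 hT
    obtain ⟨r', s', hT⟩ := ih hT
    refine ⟨r + r', s + s', ?_⟩
    simp only [funext (powProd_cons τ T)]
    refine (hτ.mul hT).trans_eventuallyEq ?_
    filter_upwards [tendsto_fst_betweenFilter.eventually (hβ.and self_mem_nhdsWithin),
      eventually_mem_betweenFilter] with p ⟨hβp, (hp1 : 0 < p.1)⟩ hp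
    rw [rpow_add hp1, rpow_add (hβp.trans_lt hp.1), mul_mul_mul_comm]

namespace Tame

theorem sliceLIntegral_powProd_of_center_eq_zero
    (hT : ∀ τ ∈ T, ∀ᶠ x in 𝓝[>] (0 : ℝ), τ.1.center x = 0) (hβ : IsPuiseux β)
    (hβ' : IsPuiseux β') (hβ0 : ∀ᶠ x in 𝓝[>] (0 : ℝ), 0 ≤ β x) :
    Tame (sliceLIntegral (powProd T) β β') := by
  refine sliceLIntegral_of_subdivision (B := T.map fun τ => τ.1.width) ?_ hβ hβ'
    fun γ γ' hγ hγ' hβγ hlt _ hout => ?_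
  · exact Multiset.forall_mem_map_iff.2 fun τ _ => τ.1.isPuiseux_width
  have hγ0 : ∀ᶠ x in 𝓝[>] (0 : ℝ), 0 ≤ γ x := (hβ0.and hβγ).mono fun x hx => hx.1.trans hx.2
  obtain ⟨r, s, hth⟩ := exists_isTheta_powProd_rpow hγ0 fun τ hτ =>
    τ.1.exists_isTheta_eval_rpow τ.2 (hT τ hτ) hγ0 hlt (Multiset.forall_mem_map_iff.1 hout τ hτ)
  exact ((sliceLIntegral_rpow s hγ hγ' hγ0 hlt).sliceLIntegral_fst_mul
    (isTheta_refl (fun x => x ^ r) _)).sliceLIntegral_congr hth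

/-- On the lower half of a region which avoids all the centers, every factor is comparable to
`u + c(x)` in terms of the height `u = y - β(x)` above the lower graph. -/
theorem sliceLIntegral_powProd_lower_half (hβ : IsPuiseux β) (hβ' : IsPuiseux β')
    (hout : ∀ τ ∈ T, Outside β β' τ.1.center) :
    Tame (sliceLIntegral (powProd T) β fun x => (β x + β' x) / 2) := by
  let T' : Multiset (PuiseuxFactor × ℝ) := T.map fun τ => (τ.1.recenter hβ, τ.2)
  have hth : powProd T =Θ[betweenFilter β fun x => (β x + β' x) / 2]
      fun p => powProd T' (p.1, p.2 - β p.1) := by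
    simp only [powProd, T', Multiset.map_map, Function.comp_apply]
    exact IsTheta.multisetProd fun τ hτ => (τ.1.isTheta_eval_recenter hβ (hout τ hτ)).rpow
      (τ.1.eventually_eval_nonneg tendsto_fst_betweenFilter Prod.snd)
      ((τ.1.recenter hβ).eventually_eval_nonneg tendsto_fst_betweenFilter _)
  have hheight : IsPuiseux fun x => (β x + β' x) / 2 - β x := by
    simpa only [div_eq_mul_inv] using ((hβ.add hβ').mul (.const 2⁻¹)).sub hβ
  have hT' : ∀ τ ∈ T', ∀ᶠ x in 𝓝[>] (0 : ℝ), τ.1.center x = 0 :=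
    Multiset.forall_mem_map_iff.2 fun τ _ => .of_forall fun _ => rfl
  refine sliceLIntegral_congr ?_ hth
  refine (sliceLIntegral_powProd_of_center_eq_zero hT' (hβ.sub hβ) hheight
    (.of_forall fun x => (sub_self (β x)).ge)).congr' (.of_forall fun x => ?_)
  exact sliceLIntegral_comp_sub β

theorem sliceLIntegral_powProd (T : Multiset (PuiseuxFactor × ℝ)) (hβ : IsPuiseux β)
    (hβ' : IsPuiseux β') : Tame (sliceLIntegral (powProd T) β β') := by
  refine sliceLIntegral_of_subdivision (B := T.map fun τ => τ.1.center) ?_ hβ hβ'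
    fun γ γ' hγ hγ' _ hlt _ hout => ?_
  · exact Multiset.forall_mem_map_iff.2 fun τ _ => τ.1.isPuiseux_center
  replace hout := Multiset.forall_mem_map_iff.1 hout
  refine sliceLIntegral_split (γ := fun x => (γ x + γ' x) / 2)
    (hlt.mono fun x hx => by linarith) (hlt.mono fun x hx => by linarith)
    (sliceLIntegral_powProd_lower_half hγ hγ' hout) ?_
  have hreflect := sliceLIntegral_powProd_lower_half
    (T := T.map fun τ => (τ.1.reflect, τ.2)) hγ'.neg hγ.neg <|
    Multiset.forall_mem_map_iff.2 fun τ hτ => (hout τ hτ).symm.imp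
      (·.mono fun _ => neg_le_neg) (·.mono fun _ => neg_le_neg)
  refine hreflect.congr' (.of_forall fun x => ?_)
  have hW : powProd T =
      fun p => powProd (T.map fun τ => (τ.1.reflect, τ.2)) (p.1, -p.2) := by
    simp only [powProd, Multiset.map_map, Function.comp_apply, PuiseuxFactor.eval_reflect_neg]
    rfl
  rw [hW, sliceLIntegral_comp_neg]
  have hmid : (fun x => (-γ' x + -γ x) / 2) = fun x => -((γ x + γ' x) / 2) := by
    funext x
    ring
  rw [hmid]

end Tame

end PowerProducts

section Indicator

variable {E : Set (ℝ × ℝ)} {W : ℝ × ℝ → ℝ} {β β' : ℝ → ℝ}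

theorem isPreconnected_between {δ : ℝ} (hβ : ∀ x ∈ Ioo 0 δ, ContinuousAt β x)
    (hβ' : ∀ x ∈ Ioo 0 δ, ContinuousAt β' x) (hlt : ∀ x ∈ Ioo 0 δ, β x < β' x) :
    IsPreconnected {p : ℝ × ℝ | p.1 ∈ Ioo 0 δ ∧ p.2 ∈ Ioo (β p.1) (β' p.1)} := by
  have himg : {p : ℝ × ℝ | p.1 ∈ Ioo 0 δ ∧ p.2 ∈ Ioo (β p.1) (β' p.1)} =
      (fun q : ℝ × ℝ => (q.1, AffineMap.lineMap (β q.1) (β' q.1) q.2)) '' (Ioo 0 δ ×ˢ Ioo 0 1) := by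
    ext ⟨x, y⟩
    constructor
    · rintro ⟨hx, hy⟩
      rw [← openSegment_eq_Ioo (hlt x hx), openSegment_eq_image_lineMap] at hy
      obtain ⟨t, ht, rfl⟩ := hy
      exact ⟨(x, t), ⟨hx, ht⟩, rfl⟩
    · rintro ⟨⟨x, t⟩, ⟨hx, ht⟩, heq⟩
      obtain ⟨rfl, rfl⟩ := Prod.mk.inj heq
      refine ⟨hx, ?_⟩
      rw [← openSegment_eq_Ioo (hlt x hx), openSegment_eq_image_lineMap]
      exact mem_image_of_mem _ ht
  rw [himg]
  refine (isPreconnected_Ioo.prod isPreconnected_Ioo).image _ ?_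
  rintro ⟨x, t⟩ ⟨hx, -⟩
  have hlower : ContinuousAt (fun q : ℝ × ℝ => β q.1) (x, t) := (hβ x hx).comp continuousAt_fst
  have hupper : ContinuousAt (fun q : ℝ × ℝ => β' q.1) (x, t) := (hβ' x hx).comp continuousAt_fst
  simp only [AffineMap.lineMap_apply, vsub_eq_sub, smul_eq_mul, vadd_eq_add]
  exact (continuousAt_fst.prodMk
    ((continuousAt_snd.mul (hupper.sub hlower)).add hlower)).continuousWithinAt

theorem subset_or_disjoint_of_disjoint_frontier {X : Type*} [TopologicalSpace X] {R E : Set X}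
    (hR : IsPreconnected R) (hdisj : Disjoint R (frontier E)) : R ⊆ E ∨ Disjoint R E := by
  have hcover : R ⊆ interior E ∪ (closure E)ᶜ := fun p hp => by
    by_contra h
    rw [mem_union, mem_compl_iff, not_or, not_not] at h
    exact disjoint_left.1 hdisj hp ⟨h.2, h.1⟩
  have hdisj' : Disjoint (interior E) (closure E)ᶜ :=
    disjoint_compl_right.mono_left (interior_subset.trans subset_closure)
  refine (hR.subset_or_subset isOpen_interior isClosed_closure.isOpen_compl hdisj' hcover).imp
    (·.trans interior_subset) fun h => ?_
  exact disjoint_left.2 fun p hp hpE => h hp (subset_closure hpE)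

theorem eventually_mem_or_eventually_notMem_of_frontier (hβ : IsPuiseux β) (hβ' : IsPuiseux β')
    (hlt : ∀ᶠ x in 𝓝[>] 0, β x < β' x) (hE : ∀ᶠ p in betweenFilter β β', p ∉ frontier E) :
    (∀ᶠ p in betweenFilter β β', p ∈ E) ∨ ∀ᶠ p in betweenFilter β β', p ∉ E := by
  simp only [eventually_betweenFilter] at hE ⊢
  obtain ⟨δ, hδ, hsub⟩ := mem_nhdsGT_iff_exists_Ioo_subset.1
    (hE.and (hlt.and (hβ.eventually_continuousAt.and hβ'.eventually_continuousAt)))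
  have hR := isPreconnected_between (fun x hx => (hsub hx).2.2.1)
    (fun x hx => (hsub hx).2.2.2) fun x hx => (hsub hx).2.1
  have hdisj := disjoint_left.2 fun (p : ℝ × ℝ) hp => (hsub (And.left hp)).1 p.2 (And.right hp)
  refine (subset_or_disjoint_of_disjoint_frontier hR hdisj).imp (fun h => ?_) fun h => ?_
  · filter_upwards [Ioo_mem_nhdsGT hδ] with x hx y hy using h ⟨hx, hy⟩
  · filter_upwards [Ioo_mem_nhdsGT hδ] with x hx y hy using disjoint_left.1 h ⟨hx, hy⟩

theorem betweenFilter_mono {γ γ' : ℝ → ℝ} (h : ∀ᶠ x in 𝓝[>] 0, β x ≤ γ x)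
    (h' : ∀ᶠ x in 𝓝[>] 0, γ' x ≤ β' x) : betweenFilter γ γ' ≤ betweenFilter β β' := fun s hs => by
  refine eventually_betweenFilter.2 ?_
  filter_upwards [h, h', eventually_betweenFilter.1 hs] with x hx hx' hs y hy
  exact hs y (Ioo_subset_Ioo hx hx' hy)

theorem Tame.sliceLIntegral_indicator
    (hW : ∀ γ γ', IsPuiseux γ → IsPuiseux γ' → Tame (sliceLIntegral W γ γ'))
    {B : Multiset (ℝ → ℝ)} (hB : ∀ b ∈ B, IsPuiseux b) (hβ : IsPuiseux β) (hβ' : IsPuiseux β')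
    (hE : ∀ᶠ p in betweenFilter β β', p ∈ frontier E → ∃ b ∈ B, p.2 = b p.1) :
    Tame (sliceLIntegral (E.indicator W) β β') := by
  refine sliceLIntegral_of_subdivision hB hβ hβ' fun γ γ' hγ hγ' hβγ hlt hγβ' hout => ?_
  have hle : betweenFilter γ γ' ≤ betweenFilter β β' := betweenFilter_mono hβγ hγβ'
  have hfrontier : ∀ᶠ p in betweenFilter γ γ', p ∉ frontier E := by
    have hne := (eventually_all_finite B.finite_toSet).2 fun b hb => (hout b hb).eventually_ne
    filter_upwards [hE.filter_mono hle, hne] with p hp hpne hpE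
    obtain ⟨b, hb, hpb⟩ := hp hpE
    exact hpne b hb hpb
  rcases eventually_mem_or_eventually_notMem_of_frontier hγ hγ' hlt hfrontier with hmem | hmem
  · exact (hW γ γ' hγ hγ').sliceLIntegral_congr (EventuallyEq.isTheta (hmem.mono fun p hp =>
      indicator_of_mem hp W))
  · have hzero : Tame (sliceLIntegral 0 γ γ') :=
      of_eventually_eq_zero (.of_forall fun x => by simp [sliceLIntegral])
    exact hzero.sliceLIntegral_congr (EventuallyEq.isTheta (hmem.mono fun p hp =>
      indicator_of_notMem hp W))

end Indicator

section RadialIntegral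

variable {κ s x r : ℝ}

theorem abs_log_le_mul_div_rpow (hκ : 0 < κ) (hx : 0 < x) (hxr : x ≤ r) (hr : 1 ≤ |log r|) :
    |log x| ≤ (1 + κ⁻¹) * |log r| * (x / r) ^ (-κ) := by
  have hr0 : 0 < r := hx.trans_le hxr
  have ht0 : 0 < x / r := div_pos hx hr0
  have ht1 : x / r ≤ 1 := (div_le_one hr0).2 hxr
  have hone : 1 ≤ (x / r) ^ (-κ) :=
    one_le_rpow_of_pos_of_le_one_of_nonpos ht0 ht1 (neg_nonpos.2 hκ.le)
  have hlog : |log (x / r)| ≤ κ⁻¹ * (x / r) ^ (-κ) := by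
    have h := (abs_log_mul_self_rpow_lt _ κ ht0 ht1 hκ).le
    rwa [abs_mul, abs_of_pos (rpow_pos_of_pos ht0 κ), ← le_div_iff₀ (rpow_pos_of_pos ht0 κ),
      one_div, div_eq_mul_inv _ (_ ^ κ), ← rpow_neg ht0.le] at h
  calc |log x| = |log r + log (x / r)| := by rw [log_div hx.ne' hr0.ne', add_sub_cancel]
    _ ≤ |log r| + |log (x / r)| := abs_add_le _ _
    _ ≤ |log r| * (x / r) ^ (-κ) + |log r| * (κ⁻¹ * (x / r) ^ (-κ)) :=
      add_le_add (le_mul_of_one_le_right (abs_nonneg _) hone)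
        (hlog.trans (le_mul_of_one_le_left (by positivity) hr))
    _ = (1 + κ⁻¹) * |log r| * (x / r) ^ (-κ) := by ring

theorem abs_powLog_le (d : ℕ) (hκ : 0 < κ) (hx : 0 < x) (hxr : x ≤ r) (hr : 1 ≤ |log r|) :
    |powLog s d x| ≤ (1 + κ⁻¹) ^ d * powLog (κ * d) d r * x ^ (s - κ * d) := by
  have hr0 : 0 < r := hx.trans_le hxr
  have hpow : ((x / r) ^ (-κ)) ^ d = x ^ (-(κ * d)) * r ^ (κ * d) := by
    rw [← rpow_mul_natCast (div_pos hx hr0).le, neg_mul, div_rpow hx.le hr0.le, rpow_neg hr0.le,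
      div_inv_eq_mul]
  calc |powLog s d x| = x ^ s * |log x| ^ d :=
      abs_of_nonneg (mul_nonneg (rpow_nonneg hx.le s) (by positivity))
    _ ≤ x ^ s * ((1 + κ⁻¹) * |log r| * (x / r) ^ (-κ)) ^ d := by
      gcongr
      exact abs_log_le_mul_div_rpow hκ hx hxr hr
    _ = (1 + κ⁻¹) ^ d * powLog (κ * d) d r * x ^ (s - κ * d) := by
      rw [mul_pow, mul_pow, hpow, sub_eq_add_neg, rpow_add hx, powLog]
      ring

theorem eventually_forall_mem_Ioo {P : ℝ → Prop} (hP : ∀ᶠ x in 𝓝[>] (0 : ℝ), P x) :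
    ∀ᶠ r in 𝓝[>] (0 : ℝ), ∀ x ∈ Ioo 0 r, P x := by
  obtain ⟨δ, hδ, hsub⟩ := mem_nhdsGT_iff_exists_Ioo_subset.1 hP
  filter_upwards [Ioo_mem_nhdsGT hδ] with r hr x hx
  exact hsub ⟨hx.1, hx.2.trans hr.2⟩

theorem EComparable.setLIntegral_Ioo {J K : ℝ → ℝ≥0∞} (h : EComparable (𝓝[>] 0) J K) :
    EComparable (𝓝[>] 0) (fun r => ∫⁻ x in Ioo 0 r, J x) fun r => ∫⁻ x in Ioo 0 r, K x := by
  obtain ⟨C, hC⟩ := h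
  refine ⟨C, (eventually_forall_mem_Ioo hC).mono fun r hr => ⟨?_, ?_⟩⟩
  all_goals rw [← lintegral_const_mul' _ _ ENNReal.coe_ne_top]
  · exact setLIntegral_mono' measurableSet_Ioo fun x hx => (hr x hx).1
  · exact setLIntegral_mono' measurableSet_Ioo fun x hx => (hr x hx).2

theorem setLIntegral_powLog_le {d : ℕ} (hκ : 0 < κ) (hs : κ * d < s + 1) (hr0 : 0 < r)
    (hr : 1 ≤ |log r|) : ∫⁻ x in Ioo 0 r, ‖powLog s d x‖ₑ ≤
      ‖(1 + κ⁻¹) ^ d / (s + 1 - κ * d) * powLog (s + 1) d r‖ₑ := by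
  have hsplit : powLog (κ * d) d r * r ^ (s - κ * d + 1) = powLog (s + 1) d r := by
    rw [powLog, powLog, mul_right_comm, ← rpow_add hr0]
    ring_nf
  calc ∫⁻ x in Ioo 0 r, ‖powLog s d x‖ₑ
      ≤ ∫⁻ x in Ioo 0 r, ‖(1 + κ⁻¹) ^ d * powLog (κ * d) d r‖ₑ * ‖x ^ (s - κ * d)‖ₑ := by
        refine setLIntegral_mono' measurableSet_Ioo fun x hx => ?_
        rw [← enorm_mul, enorm_le_iff_norm_le, norm_eq_abs]
        exact (abs_powLog_le d hκ hx.1 hx.2.le hr).trans (le_abs_self _)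
    _ = ‖(1 + κ⁻¹) ^ d / (s + 1 - κ * d) * powLog (s + 1) d r‖ₑ := by
        rw [lintegral_const_mul' _ _ enorm_ne_top,
          setLIntegral_Ioo_enorm_rpow le_rfl hr0.le (.inl (by linarith)),
          zero_rpow (by linarith), sub_zero, ← enorm_mul, ← hsplit,
          show s - κ * d + 1 = s + 1 - κ * d by ring]
        ring_nf

theorem le_setLIntegral_powLog (hs : -1 < s) (d : ℕ) (hr0 : 0 < r) (hr1 : r < 1) :
    ‖(s + 1)⁻¹ * powLog (s + 1) d r‖ₑ ≤ ∫⁻ x in Ioo 0 r, ‖powLog s d x‖ₑ := by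
  calc ‖(s + 1)⁻¹ * powLog (s + 1) d r‖ₑ
      = ∫⁻ x in Ioo 0 r, ‖|log r| ^ d‖ₑ * ‖x ^ s‖ₑ := by
        rw [lintegral_const_mul' _ _ enorm_ne_top,
          setLIntegral_Ioo_enorm_rpow le_rfl hr0.le (.inl hs), zero_rpow (by linarith), sub_zero,
          ← enorm_mul, powLog, div_eq_inv_mul]
        ring_nf
    _ ≤ ∫⁻ x in Ioo 0 r, ‖powLog s d x‖ₑ := by
        refine setLIntegral_mono' measurableSet_Ioo fun x hx => ?_
        have hlog : |log r| ≤ |log x| := abs_le_abs_of_nonpos (log_neg hr0 hr1).le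
          (log_le_log hx.1 hx.2.le)
        rw [← enorm_mul, powLog, mul_comm]
        simp only [enorm_mul, enorm_pow, enorm_abs]
        gcongr
        exact enorm_le_iff_norm_le.2 hlog

theorem eComparable_setLIntegral_powLog (hs : -1 < s) (d : ℕ) :
    EComparable (𝓝[>] 0) (fun r => ∫⁻ x in Ioo 0 r, ‖powLog s d x‖ₑ)
      fun r => ‖powLog (s + 1) d r‖ₑ := by
  have hs1 : 0 < s + 1 := by linarith
  have hκ : 0 < (s + 1) / (d + 1) := by positivity
  have hκs : (s + 1) / (d + 1) * d < s + 1 := by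
    rw [div_mul_eq_mul_div, div_lt_iff₀ (by positivity)]
    nlinarith
  obtain ⟨C, hC⟩ : ∃ C, C = (1 + ((s + 1) / (d + 1))⁻¹) ^ d / (s + 1 - (s + 1) / (d + 1) * d) :=
    ⟨_, rfl⟩
  refine ⟨‖C‖₊ + ‖s + 1‖₊, ?_⟩
  filter_upwards [self_mem_nhdsWithin, Ioo_mem_nhdsGT one_pos, eventually_abs_log_ge 1]
    with r (hr0 : 0 < r) hr1 hr
  push_cast
  constructor
  · refine (setLIntegral_powLog_le hκ hκs hr0 hr).trans ?_
    rw [← hC, enorm_mul]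
    gcongr
    exact le_self_add
  · calc ‖powLog (s + 1) d r‖ₑ = ‖s + 1‖ₑ * ‖(s + 1)⁻¹ * powLog (s + 1) d r‖ₑ := by
          rw [← enorm_mul, mul_inv_cancel_left₀ hs1.ne']
      _ ≤ (‖C‖ₑ + ‖s + 1‖ₑ) * ∫⁻ x in Ioo 0 r, ‖powLog s d x‖ₑ := by
          gcongr
          · exact le_add_self
          · exact le_setLIntegral_powLog hs d hr0 hr1.2

theorem setLIntegral_powLog_eq_top (hs : s ≤ -1) (d : ℕ) :
    ∀ᶠ r in 𝓝[>] (0 : ℝ), ∫⁻ x in Ioo 0 r, ‖powLog s d x‖ₑ = ∞ := by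
  filter_upwards [eventually_forall_mem_Ioo (eventually_abs_log_ge 1), self_mem_nhdsWithin]
    with r hlog hr
  rw [← top_le_iff, ← setLIntegral_Ioo_zero_enorm_rpow_eq_top hr hs]
  refine setLIntegral_mono' measurableSet_Ioo fun x hx => ?_
  rw [powLog, enorm_le_iff_norm_le, norm_mul, norm_pow, norm_eq_abs |_|, abs_abs]
  exact le_mul_of_one_le_right (norm_nonneg _) (one_le_pow₀ (hlog x hx))

theorem Tame.setLIntegral_Ioo {J : ℝ → ℝ≥0∞} (hJ : Tame J) :
    Tame fun r => ∫⁻ x in Ioo 0 r, J x := by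
  rcases hJ with hJ | hJ | ⟨s, d, hd, hJ⟩
  · refine of_eventually_eq_zero ((eventually_forall_mem_Ioo hJ).mono fun r hr => ?_)
    rw [setLIntegral_congr_fun measurableSet_Ioo hr, lintegral_zero]
  · refine of_eventually_eq_top ?_
    filter_upwards [eventually_forall_mem_Ioo hJ, self_mem_nhdsWithin] with r hr (hr0 : 0 < r)
    rw [setLIntegral_congr_fun measurableSet_Ioo hr, setLIntegral_const, Real.volume_Ioo, sub_zero]
    exact ENNReal.top_mul (by simpa using hr0)
  · refine Tame.congr ?_ hJ.setLIntegral_Ioo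
    rcases le_or_gt s (-1) with hs | hs
    · exact of_eventually_eq_top (setLIntegral_powLog_eq_top hs d)
    · exact of_eComparable_powLog hd (eComparable_setLIntegral_powLog hs d)

theorem powLog_isBigO_comp_half (s : ℝ) (d : ℕ) :
    powLog s d =O[𝓝[>] 0] fun r => powLog s d (r / 2) := by
  refine IsBigO.of_bound (2 ^ s) ?_
  filter_upwards [Ioo_mem_nhdsGT one_pos] with r ⟨hr0, hr1⟩
  have hlog : |log r| ≤ |log (r / 2)| := abs_le_abs_of_nonpos (log_neg hr0 hr1).le
    (log_le_log (by positivity) (by linarith))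
  have hpow : r ^ s = 2 ^ s * (r / 2) ^ s := by
    rw [← mul_rpow two_pos.le (by positivity), mul_div_cancel₀ r two_ne_zero]
  rw [powLog, powLog, norm_of_nonneg (by positivity), norm_of_nonneg (by positivity), hpow,
    mul_assoc]
  gcongr

theorem Tame.of_half_le_of_le {U V : ℝ → ℝ≥0∞} (hU : Tame U)
    (hUV : ∀ᶠ r in 𝓝[>] (0 : ℝ), U (r / 2) ≤ V r) (hVU : ∀ᶠ r in 𝓝[>] (0 : ℝ), V r ≤ U r) :
    Tame V := by
  have hhalf : Tendsto (fun r : ℝ => r / 2) (𝓝[>] 0) (𝓝[>] 0) :=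
    tendsto_nhdsWithin_iff.2 ⟨(Continuous.tendsto' (by fun_prop) _ _ (by simp)).mono_left
      nhdsWithin_le_nhds,
      eventually_mem_nhdsWithin.mono fun _ hr => mem_Ioi.2 (half_pos (mem_Ioi.1 hr))⟩
  rcases hU with hU | hU | ⟨s, d, hd, C, hC⟩
  · refine of_eventually_eq_zero ?_
    filter_upwards [hVU, hU] with r hle hr
    exact le_zero_iff.1 (hle.trans hr.le)
  · refine of_eventually_eq_top ?_
    filter_upwards [hUV, hhalf.eventually hU] with r hle hr
    exact top_le_iff.1 (hr ▸ hle)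
  · obtain ⟨D, hD⟩ := (powLog_isBigO_comp_half s d).bound
    refine of_eComparable_powLog (s := s) hd ⟨C + D.toNNReal * C, ?_⟩
    filter_upwards [hUV, hVU, hC, hhalf.eventually hC, hD] with r hle hge hCr hCr2 hDr
    push_cast
    constructor
    · exact hge.trans (hCr.1.trans (by gcongr; exact le_self_add))
    · calc ‖powLog s d r‖ₑ ≤ D.toNNReal * ‖powLog s d (r / 2)‖ₑ := enorm_le_of_norm_le hDr
        _ ≤ D.toNNReal * (C * V r) := by
          gcongr
          exact hCr2.2.trans (by gcongr)
        _ ≤ (C + D.toNNReal * C) * V r := by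
          rw [← mul_assoc]
          gcongr
          exact le_add_self

end RadialIntegral

section AnalyticArcs

/-- Near the origin, `C` lies on a one-sided analytic arc issuing from the origin: arbitrarily short
pieces `c '' [0, η)` of a fixed analytic curve `c` contain all points of `C` close to the origin. -/
def IsAnalyticArc (C : Set (ℝ × ℝ)) : Prop :=
  ∃ c : ℝ → ℝ × ℝ, AnalyticAt ℝ c 0 ∧ c 0 = 0 ∧
    ∀ η > 0, ∀ᶠ p in 𝓝 (0 : ℝ × ℝ), p ∈ C → p ∈ c '' Ico 0 η

/-- Near the origin, the frontier of `E` is covered by finitely many analytic arcs. -/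
def HasAnalyticFrontier (E : Set (ℝ × ℝ)) : Prop :=
  ∃ 𝒞 : Set (Set (ℝ × ℝ)), 𝒞.Finite ∧ (∀ C ∈ 𝒞, IsAnalyticArc C) ∧
    ∀ᶠ p in 𝓝 (0 : ℝ × ℝ), p ∈ frontier E → ∃ C ∈ 𝒞, p ∈ C

theorem tendsto_continuousLinearEquiv_nhds_zero {E F : Type*} [NormedAddCommGroup E]
    [NormedSpace ℝ E] [NormedAddCommGroup F] [NormedSpace ℝ F] (Φ : E ≃L[ℝ] F) :
    Tendsto Φ (𝓝 0) (𝓝 0) :=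
  Φ.continuous.tendsto' 0 0 (map_zero Φ)

theorem IsAnalyticArc.preimage {C : Set (ℝ × ℝ)} (hC : IsAnalyticArc C)
    (Φ : (ℝ × ℝ) ≃L[ℝ] (ℝ × ℝ)) : IsAnalyticArc (Φ ⁻¹' C) := by
  obtain ⟨c, hc, hc0, h⟩ := hC
  refine ⟨fun t => Φ.symm (c t), (Φ.symm.toContinuousLinearMap.analyticAt _).comp hc,
    by simp [hc0], fun η hη => ?_⟩
  filter_upwards [(tendsto_continuousLinearEquiv_nhds_zero Φ).eventually (h η hη)] with p hp hpC
  obtain ⟨t, ht, hpt⟩ := hp hpC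
  exact ⟨t, ht, by simp [hpt]⟩

theorem HasAnalyticFrontier.preimage {E : Set (ℝ × ℝ)} (hE : HasAnalyticFrontier E)
    (Φ : (ℝ × ℝ) ≃L[ℝ] (ℝ × ℝ)) : HasAnalyticFrontier (Φ ⁻¹' E) := by
  obtain ⟨𝒞, hfin, hC, h⟩ := hE
  refine ⟨(Φ ⁻¹' ·) '' 𝒞, hfin.image _, forall_mem_image.2 fun C hC' => (hC C hC').preimage Φ, ?_⟩
  filter_upwards [(tendsto_continuousLinearEquiv_nhds_zero Φ).eventually h] with p hp hpE
  obtain ⟨C, hC', hpC⟩ := hp ((Φ.toHomeomorph.preimage_frontier E).symm.subset hpE)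
  exact ⟨_, mem_image_of_mem _ hC', hpC⟩

/-- Writing `a = t ^ k * v` with `v 0 > 0`, the function `t * v ^ (1 / k)` is a `k`-th root of `a`
with nonzero derivative, hence locally invertible. -/
theorem exists_leftInverse_rpow_inv_of_eq_pow_mul {a v : ℝ → ℝ} {k : ℕ} (hk : 0 < k)
    (hv : AnalyticAt ℝ v 0) (hv0 : 0 < v 0) (hav : ∀ᶠ t in 𝓝 (0 : ℝ), a t = t ^ k * v t) :
    ∃ φ : ℝ → ℝ, AnalyticAt ℝ φ 0 ∧ φ 0 = 0 ∧
      ∀ᶠ t in 𝓝[≥] (0 : ℝ), φ (a t ^ (k : ℝ)⁻¹) = t := by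
  have hroot : AnalyticAt ℝ (fun t => v t ^ (k : ℝ)⁻¹) 0 :=
    AnalyticAt.fun_comp (g := fun s : ℝ => s ^ (k : ℝ)⁻¹)
      (contDiffAt_rpow_const_of_ne (n := ⊤) hv0.ne').analyticAt hv
  have hw : AnalyticAt ℝ (fun t => t * v t ^ (k : ℝ)⁻¹) 0 := analyticAt_id.mul hroot
  have hderiv : deriv (fun t => t * v t ^ (k : ℝ)⁻¹) 0 ≠ 0 := by
    rw [((hasDerivAt_id' (0 : ℝ)).fun_mul hroot.differentiableAt.hasDerivAt).deriv]
    simpa using (rpow_pos_of_pos hv0 _).ne'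
  have hleft := hw.hasStrictDerivAt.eventually_left_inverse hderiv
  refine ⟨_, by simpa using hw.analyticAt_localInverse hderiv,
    by simpa using hleft.self_of_nhds, ?_⟩
  filter_upwards [nhdsWithin_le_nhds hav, nhdsWithin_le_nhds hleft,
    nhdsWithin_le_nhds (hv.continuousAt.eventually_const_lt hv0),
    self_mem_nhdsWithin] with t hat ht hvt (ht0 : 0 ≤ t)
  rwa [hat, mul_rpow (pow_nonneg ht0 k) hvt.le, pow_rpow_inv_natCast ht0 hk.ne']

theorem eventually_nonpos_or_exists_leftInverse_rpow_inv {a : ℝ → ℝ} (ha : AnalyticAt ℝ a 0)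
    (ha0 : a 0 = 0) : (∀ᶠ t in 𝓝[≥] (0 : ℝ), a t ≤ 0) ∨
      ∃ k : ℕ, 0 < k ∧ ∃ φ : ℝ → ℝ, AnalyticAt ℝ φ 0 ∧ φ 0 = 0 ∧
        ∀ᶠ t in 𝓝[≥] (0 : ℝ), φ (a t ^ (k : ℝ)⁻¹) = t := by
  by_cases htop : analyticOrderAt a 0 = ⊤
  · exact .inl ((analyticOrderAt_eq_top.1 htop).filter_mono nhdsWithin_le_nhds |>.mono
      fun _ ht => ht.le)
  obtain ⟨k, hk⟩ := ENat.ne_top_iff_exists.1 htop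
  obtain ⟨v, hv, hv0, hav⟩ := ha.analyticOrderAt_eq_natCast.1 hk.symm
  simp only [sub_zero, smul_eq_mul] at hav
  have hkpos : 0 < k := by
    rw [Nat.pos_iff_ne_zero]
    rintro rfl
    exact hv0 (by simpa [ha0] using hav.self_of_nhds.symm)
  rcases lt_or_gt_of_ne hv0 with hneg | hpos
  · left
    filter_upwards [nhdsWithin_le_nhds (hav.and (hv.continuousAt.eventually_lt_const hneg)),
      self_mem_nhdsWithin] with t ⟨hat, hvt⟩ (ht0 : 0 ≤ t)
    exact hat ▸ mul_nonpos_of_nonneg_of_nonpos (pow_nonneg ht0 k) hvt.le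
  · exact .inr ⟨k, hkpos, exists_leftInverse_rpow_inv_of_eq_pow_mul hkpos hv hpos hav⟩

theorem IsAnalyticArc.eventually_exists {C : Set (ℝ × ℝ)} {c : ℝ → ℝ × ℝ} {P : ℝ → Prop}
    (hC : ∀ η > 0, ∀ᶠ p in 𝓝 (0 : ℝ × ℝ), p ∈ C → p ∈ c '' Ico 0 η)
    (hP : ∀ᶠ t in 𝓝[≥] (0 : ℝ), P t) :
    ∀ᶠ p in 𝓝 (0 : ℝ × ℝ), p ∈ C → ∃ t, P t ∧ c t = p := by
  obtain ⟨η, hη, hηP⟩ := mem_nhdsGE_iff_exists_Ico_subset.1 hP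
  filter_upwards [hC η hη] with p hp hpC
  obtain ⟨t, ht, rfl⟩ := hp hpC
  exact ⟨t, hηP ht, rfl⟩

theorem IsAnalyticArc.exists_isPuiseux_snd_eq {C : Set (ℝ × ℝ)} (hC : IsAnalyticArc C) :
    ∃ β : ℝ → ℝ, IsPuiseux β ∧ ∀ᶠ p in 𝓝 (0 : ℝ × ℝ), 0 < p.1 → p ∈ C → p.2 = β p.1 := by
  obtain ⟨c, hc, hc0, harc⟩ := hC
  rcases eventually_nonpos_or_exists_leftInverse_rpow_inv (analyticAt_fst.comp hc)
    (congrArg Prod.fst hc0) with hnonpos | ⟨k, hk, φ, hφ, hφ0, hinv⟩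
  · refine ⟨fun _ => 0, IsPuiseux.const 0, ?_⟩
    filter_upwards [eventually_exists harc hnonpos] with p hp hpos hpC
    obtain ⟨t, ht, rfl⟩ := hp hpC
    exact absurd hpos ht.not_gt
  · refine ⟨fun x => (c (φ (x ^ (k : ℝ)⁻¹))).2, (IsPuiseux.of_analyticAt
      (a := fun s => (c (φ s)).2) (analyticAt_snd.comp (hc.comp_of_eq hφ hφ0))).comp_root hk, ?_⟩
    filter_upwards [eventually_exists harc hinv] with p hp _ hpC
    obtain ⟨t, ht, rfl⟩ := hp hpC
    exact congrArg (fun s => (c s).2) ht.symm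

end AnalyticArcs

section SectorIntegral

theorem isOpen_disk2 (r : ℝ) : IsOpen (disk2 r) :=
  isOpen_lt (by fun_prop) continuous_const

theorem disk2_subset_prod {r : ℝ} (hr : 0 < r) : disk2 r ⊆ Ioo (-r) r ×ˢ Ioo (-r) r := by
  intro p hp
  have hp' : p.1 ^ 2 + p.2 ^ 2 < r ^ 2 := hp
  exact ⟨abs_lt.1 (abs_lt_of_sq_lt_sq (by nlinarith) hr.le),
    abs_lt.1 (abs_lt_of_sq_lt_sq (by nlinarith) hr.le)⟩

theorem eventually_prod_subset {U : Set (ℝ × ℝ)} (hU : U ∈ 𝓝 (0 : ℝ × ℝ)) :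
    ∀ᶠ r in 𝓝[>] (0 : ℝ), Ioo (-r) r ×ˢ Ioo (-(2 * r)) (2 * r) ⊆ U := by
  obtain ⟨δ, hδ, hsub⟩ := Metric.mem_nhds_iff.1 hU
  filter_upwards [Ioo_mem_nhdsGT (half_pos hδ)] with r ⟨hr0, hrδ⟩ p hp
  refine hsub ?_
  rw [Metric.mem_ball, dist_zero_right, Prod.norm_def, sup_lt_iff]
  exact ⟨(abs_lt.2 hp.1).trans (by linarith), (abs_lt.2 hp.2).trans (by linarith)⟩

theorem eventually_disk2_subset {U : Set (ℝ × ℝ)} (hU : U ∈ 𝓝 (0 : ℝ × ℝ)) :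
    ∀ᶠ r in 𝓝[>] (0 : ℝ), disk2 r ⊆ U := by
  filter_upwards [eventually_prod_subset hU, self_mem_nhdsWithin] with r hr (hr0 : 0 < r)
  exact (disk2_subset_prod hr0).trans
    ((Set.prod_mono le_rfl (Ioo_subset_Ioo (by linarith) (by linarith))).trans hr)

/-- The open sector `|y| < 3x/2`. Any slope exceeding `1` would do: the reflected sectors have to
cover the punctured plane. -/
def sector : Set (ℝ × ℝ) := {p | p.2 ∈ Ioo (-(3 / 2) * p.1) (3 / 2 * p.1)}

theorem isOpen_sector : IsOpen sector :=
  (isOpen_lt (by fun_prop) (by fun_prop)).and (isOpen_lt (by fun_prop) (by fun_prop))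

theorem fst_pos_of_mem_sector {p : ℝ × ℝ} (hp : p ∈ sector) : 0 < p.1 := by
  linarith [hp.1.trans hp.2]

theorem betweenFilter_sector_le :
    betweenFilter (fun x => -(3 / 2) * x) (fun x => 3 / 2 * x) ≤ 𝓝[>] (0 : ℝ) ×ˢ 𝓝 (0 : ℝ) := by
  have hlim (c : ℝ) : Tendsto (fun p : ℝ × ℝ => c * p.1)
      (betweenFilter (fun x => -(3 / 2) * x) fun x => 3 / 2 * x) (𝓝 0) := by
    simpa using (tendsto_fst_betweenFilter.mono_right nhdsWithin_le_nhds).const_mul c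
  exact le_prod.2 ⟨tendsto_fst_betweenFilter, tendsto_of_tendsto_of_tendsto_of_le_of_le'
    (hlim _) (hlim _) (eventually_mem_betweenFilter.mono fun _ h => h.1.le)
    (eventually_mem_betweenFilter.mono fun _ h => h.2.le)⟩

variable {W : ℝ × ℝ → ℝ}

theorem setLIntegral_sector_inter_fst_lt {r : ℝ}
    (hW : AEStronglyMeasurable W (volume.restrict (sector ∩ {p | p.1 < r}))) :
    ∫⁻ p in sector ∩ {p | p.1 < r}, ‖W p‖ₑ =
      ∫⁻ x in Ioo 0 r, sliceLIntegral W (fun x => -(3 / 2) * x) (fun x => 3 / 2 * x) x := by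
  have hmeas : MeasurableSet (sector ∩ {p : ℝ × ℝ | p.1 < r}) :=
    (isOpen_sector.inter (isOpen_lt continuous_fst continuous_const)).measurableSet
  rw [← lintegral_indicator hmeas, Measure.volume_eq_prod, lintegral_prod _
    ((aemeasurable_indicator_iff hmeas).2 hW.enorm), ← lintegral_indicator measurableSet_Ioo]
  refine lintegral_congr fun x => ?_
  by_cases hx : x ∈ Ioo 0 r
  · rw [indicator_of_mem hx, sliceLIntegral, ← lintegral_indicator measurableSet_Ioo]
    refine lintegral_congr fun y => ?_
    have hiff : (x, y) ∈ sector ∩ {p : ℝ × ℝ | p.1 < r} ↔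
        y ∈ Ioo (-(3 / 2) * x) (3 / 2 * x) := ⟨fun hp => hp.1, fun hy => ⟨hy, hx.2⟩⟩
    simp only [indicator, hiff]
  · rw [indicator_of_notMem hx]
    exact (lintegral_congr fun y => indicator_of_notMem
      (fun hp => hx ⟨fst_pos_of_mem_sector hp.1, hp.2⟩) _).trans lintegral_zero

theorem Tame.setLIntegral_disk2_inter_sector (hW : StronglyMeasurableAtFilter W (𝓝 0))
    (h : Tame (sliceLIntegral W (fun x => -(3 / 2) * x) fun x => 3 / 2 * x)) :
    Tame fun r => ∫⁻ p in disk2 r ∩ sector, ‖W p‖ₑ := by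
  have htriangle : Tame fun r => ∫⁻ p in sector ∩ {p | p.1 < r}, ‖W p‖ₑ := by
    refine h.setLIntegral_Ioo.congr' ?_
    obtain ⟨U, hU, hWU⟩ := hW
    filter_upwards [eventually_prod_subset hU] with r hr
    refine setLIntegral_sector_inter_fst_lt (hWU.mono_set ?_)
    rintro p ⟨hp, hpr : p.1 < r⟩
    have hp0 := fst_pos_of_mem_sector hp
    exact hr ⟨⟨by linarith, hpr⟩, ⟨by linarith [hp.1], by linarith [hp.2]⟩⟩
  refine htriangle.of_half_le_of_le ?_ ?_
  · refine .of_forall fun r => lintegral_mono_set ?_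
    rintro p ⟨hp, hpr : p.1 < r / 2⟩
    have hp0 := fst_pos_of_mem_sector hp
    have hy : p.2 ^ 2 ≤ (3 / 2 * p.1) ^ 2 := sq_le_sq' (by linarith [hp.1]) hp.2.le
    refine ⟨show p.1 ^ 2 + p.2 ^ 2 < r ^ 2 from ?_, hp⟩
    nlinarith
  · filter_upwards [self_mem_nhdsWithin] with r hr
    exact lintegral_mono_set fun p ⟨hpr, hp⟩ => ⟨hp, (disk2_subset_prod hr hpr).1.2⟩

theorem Tame.setLIntegral_inter_union {α : Type*} [MeasurableSpace α] {μ : Measure α}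
    {D : ℝ → Set α} {A B : Set α} {g : α → ℝ≥0∞} (hA : Tame fun r => ∫⁻ p in D r ∩ A, g p ∂μ)
    (hB : Tame fun r => ∫⁻ p in D r ∩ B, g p ∂μ) :
    Tame fun r => ∫⁻ p in D r ∩ (A ∪ B), g p ∂μ := by
  refine (hA.add hB).congr ⟨2, .of_forall fun r => ⟨?_, ?_⟩⟩
  · simp only [inter_union_distrib_left]
    exact (lintegral_union_le _ _ _).trans (le_mul_of_one_le_left' (by norm_num))
  · rw [ENNReal.coe_ofNat, two_mul]
    exact add_le_add (lintegral_mono_set (inter_subset_inter_right _ subset_union_left))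
      (lintegral_mono_set (inter_subset_inter_right _ subset_union_right))

end SectorIntegral

section LocalForm

theorem isBigO_indicator {α E F : Type*} [SeminormedAddCommGroup E] [SeminormedAddCommGroup F]
    {l : Filter α} {f : α → E} {g : α → F} (h : f =O[l] g) (s : Set α) :
    s.indicator f =O[l] s.indicator g := by
  obtain ⟨c, hc⟩ := h.bound
  refine IsBigO.of_bound c (hc.mono fun p hp => ?_)
  by_cases hps : p ∈ s <;> simp [hps, hp]

theorem isTheta_indicator {α E F : Type*} [SeminormedAddCommGroup E] [SeminormedAddCommGroup F]
    {l : Filter α} {f : α → E} {g : α → F} (h : f =Θ[l] g) (s : Set α) :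
    s.indicator f =Θ[l] s.indicator g :=
  ⟨isBigO_indicator h.1 s, isBigO_indicator h.2 s⟩

theorem exists_isTheta_rpow_fst_mul_powProd {f : ℝ × ℝ → ℝ} (hf : AnalyticAt ℝ f 0)
    (hf0 : ¬ ∀ᶠ p in 𝓝 0, f p = 0) (γ : ℝ) :
    ∃ (s : ℝ) (T : Multiset (PuiseuxFactor × ℝ)),
      (fun p => |f p| ^ γ) =Θ[𝓝[>] 0 ×ˢ 𝓝 0] fun p => p.1 ^ s * powProd T p := by
  obtain ⟨k, M, hM⟩ := exists_isTheta_pow_fst_mul_rootProd hf hf0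
  have hpos : ∀ᶠ p : ℝ × ℝ in 𝓝[>] 0 ×ˢ 𝓝 0, 0 < p.1 :=
    tendsto_fst.eventually self_mem_nhdsWithin
  have hfac : ∀ᶠ p : ℝ × ℝ in 𝓝[>] 0 ×ˢ 𝓝 0, ∀ ρ ∈ {ρ | ρ ∈ M}, 0 ≤ ρ.eval p :=
    (eventually_all_finite M.finite_toSet).2 fun ρ _ =>
      ρ.eventually_eval_nonneg tendsto_fst Prod.snd
  have hprod : ∀ᶠ p : ℝ × ℝ in 𝓝[>] 0 ×ˢ 𝓝 0, 0 ≤ p.1 ^ k * rootProd M p := by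
    filter_upwards [hpos, hfac] with p hp hfac
    exact mul_nonneg (pow_nonneg hp.le k) (Multiset.prod_map_nonneg hfac)
  refine ⟨k * γ, M.map fun ρ => (ρ, γ), (IsTheta.rpow (r := γ)
    (.of_forall fun p => abs_nonneg _) hprod hM.norm_left).trans_eventuallyEq ?_⟩
  filter_upwards [hpos, hfac] with p hp hfac
  rw [rootProd, mul_rpow (pow_nonneg hp.le k) (Multiset.prod_map_nonneg hfac), rpow_mul hp.le,
    rpow_natCast, powProd, Multiset.map_map, ← multiset_prod_map_rpow M _ hfac]
  rfl

theorem powProd_sum {ι : Type*} (s : Finset ι) (T : ι → Multiset (PuiseuxFactor × ℝ))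
    (p : ℝ × ℝ) : powProd (∑ i ∈ s, T i) p = ∏ i ∈ s, powProd (T i) p := by
  classical
  induction s using Finset.induction_on with
  | empty => simp [powProd]
  | insert i s hi ih =>
    rw [Finset.sum_insert hi, Finset.prod_insert hi, ← ih]
    simp [powProd]

variable {n : ℕ} {f : Fin n → ℝ × ℝ → ℝ} {γ : Fin n → ℝ} {E : Set (ℝ × ℝ)}

/-- The properties of `χ_E ∏ |fᵢ| ^ γᵢ` at the origin that determine how its mass in small disks
behaves. Unlike `StandardForm` they are preserved by linear isomorphisms of the plane, and they
allow the mass to be zero or infinite. -/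
structure LocalForm (n : ℕ) (f : Fin n → ℝ × ℝ → ℝ) (γ : Fin n → ℝ) (E : Set (ℝ × ℝ)) :
    Prop where
  analytic : ∀ i, AnalyticAt ℝ (f i) 0
  nontriv : ∀ i, ¬ ∀ᶠ p in 𝓝 (0 : ℝ × ℝ), f i p = 0
  measurable : StronglyMeasurableAtFilter (stdFun n f γ E) (𝓝 0)
  frontier : HasAnalyticFrontier E

theorem stdFun_comp (n : ℕ) (f : Fin n → ℝ × ℝ → ℝ) (γ : Fin n → ℝ) (E : Set (ℝ × ℝ))
    (Φ : ℝ × ℝ → ℝ × ℝ) :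
    stdFun n (fun i => f i ∘ Φ) γ (Φ ⁻¹' E) = stdFun n f γ E ∘ Φ :=
  funext fun p => by by_cases h : Φ p ∈ E <;> simp [stdFun, indicator, h]

theorem LocalForm.comp (h : LocalForm n f γ E) (Φ : (ℝ × ℝ) ≃L[ℝ] (ℝ × ℝ))
    (hΦ : MeasurePreserving Φ) : LocalForm n (fun i => f i ∘ Φ) γ (Φ ⁻¹' E) where
  analytic i := (h.analytic i).comp_of_eq (Φ.toContinuousLinearMap.analyticAt 0) (map_zero Φ)
  nontriv i hi := h.nontriv i <| by
    filter_upwards [(tendsto_continuousLinearEquiv_nhds_zero Φ.symm).eventually hi] with p hp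
    simpa using hp
  measurable := by
    obtain ⟨U, hU, hm⟩ := h.measurable
    refine ⟨Φ ⁻¹' U, tendsto_continuousLinearEquiv_nhds_zero Φ hU, ?_⟩
    rw [stdFun_comp]
    exact hm.comp_measurePreserving
      (hΦ.restrict_preimage_emb Φ.toHomeomorph.measurableEmbedding U)
  frontier := h.frontier.preimage Φ

theorem exists_stdFun_isTheta (hf : ∀ i, AnalyticAt ℝ (f i) 0)
    (hf0 : ∀ i, ¬ ∀ᶠ p in 𝓝 (0 : ℝ × ℝ), f i p = 0) (γ : Fin n → ℝ) (E : Set (ℝ × ℝ)) :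
    ∃ (s : ℝ) (T : Multiset (PuiseuxFactor × ℝ)),
      stdFun n f γ E =Θ[𝓝[>] 0 ×ˢ 𝓝 0] fun p => p.1 ^ s * E.indicator (powProd T) p := by
  choose s T hT using fun i => exists_isTheta_rpow_fst_mul_powProd (hf i) (hf0 i) (γ i)
  have hprod : (fun p => ∏ i, |f i p| ^ γ i) =Θ[𝓝[>] 0 ×ˢ 𝓝 0]
      fun p => p.1 ^ (∑ i, s i) * powProd (∑ i, T i) p := by
    refine (IsTheta.finsetProd fun i _ => hT i).trans_eventuallyEq ?_
    filter_upwards [tendsto_fst.eventually self_mem_nhdsWithin] with p (hp : 0 < p.1)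
    rw [Finset.prod_mul_distrib, powProd_sum, rpow_sum_of_pos hp]
  refine ⟨∑ i, s i, ∑ i, T i, (isTheta_indicator hprod E).trans_eventuallyEq (.of_forall ?_)⟩
  exact fun p => indicator_mul_right E (fun p : ℝ × ℝ => p.1 ^ ∑ i, s i) _

theorem HasAnalyticFrontier.exists_isPuiseux (hE : HasAnalyticFrontier E) :
    ∃ B : Multiset (ℝ → ℝ), (∀ b ∈ B, IsPuiseux b) ∧
      ∀ᶠ p in 𝓝[>] 0 ×ˢ 𝓝 0, p ∈ frontier E → ∃ b ∈ B, p.2 = b p.1 := by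
  obtain ⟨𝒞, hfin, hC, hcover⟩ := hE
  choose! b hb hbC using fun C hC' => (hC C hC').exists_isPuiseux_snd_eq
  refine ⟨hfin.toFinset.val.map b, ?_, ?_⟩
  · simpa using hb
  · filter_upwards [nhdsGT_zero_prod_nhds_zero_le hcover,
      nhdsGT_zero_prod_nhds_zero_le ((eventually_all_finite hfin).2 hbC),
      tendsto_fst.eventually self_mem_nhdsWithin] with p hcov hgraph hpos hp
    obtain ⟨C, hmem, hpC⟩ := hcov hp
    exact ⟨b C, Multiset.mem_map_of_mem b (by simpa using hmem), hgraph C hmem hpos hpC⟩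

namespace LocalForm

theorem tame_sliceLIntegral (h : LocalForm n f γ E) :
    Tame (sliceLIntegral (stdFun n f γ E) (fun x => -(3 / 2) * x) fun x => 3 / 2 * x) := by
  obtain ⟨s, T, hT⟩ := exists_stdFun_isTheta h.analytic h.nontriv γ E
  obtain ⟨B, hB, hE⟩ := h.frontier.exists_isPuiseux
  have hlinear (c : ℝ) : IsPuiseux fun x => c * x := (IsPuiseux.const c).mul IsPuiseux.id
  have htame : Tame (sliceLIntegral (E.indicator (powProd T)) (fun x => -(3 / 2) * x)
      fun x => 3 / 2 * x) :=
    .sliceLIntegral_indicator (fun _ _ => .sliceLIntegral_powProd T) hB (hlinear _) (hlinear _)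
      (betweenFilter_sector_le hE)
  exact (htame.sliceLIntegral_fst_mul (c := fun x => x ^ s) (isTheta_refl _ _)).sliceLIntegral_congr
    (hT.mono betweenFilter_sector_le)

theorem tame_setLIntegral_disk2_inter_sector (h : LocalForm n f γ E) :
    Tame fun r => ∫⁻ p in disk2 r ∩ sector, ‖stdFun n f γ E p‖ₑ :=
  .setLIntegral_disk2_inter_sector h.measurable h.tame_sliceLIntegral

theorem tame_setLIntegral_inter_union_preimage {A : Set (ℝ × ℝ)}
    (hA : ∀ {f E}, LocalForm n f γ E → Tame fun r => ∫⁻ p in disk2 r ∩ A, ‖stdFun n f γ E p‖ₑ)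
    (Φ : (ℝ × ℝ) ≃L[ℝ] (ℝ × ℝ)) (hΦ : MeasurePreserving Φ) (hinv : Function.Involutive Φ)
    (hdisk : ∀ r, Φ ⁻¹' disk2 r = disk2 r) (h : LocalForm n f γ E) :
    Tame fun r => ∫⁻ p in disk2 r ∩ (A ∪ Φ ⁻¹' A), ‖stdFun n f γ E p‖ₑ := by
  refine (hA h).setLIntegral_inter_union ((hA (h.comp Φ hΦ)).congr' (.of_forall fun r => ?_))
  beta_reduce
  have hpre : Φ ⁻¹' (disk2 r ∩ Φ ⁻¹' A) = disk2 r ∩ A := by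
    rw [preimage_inter, hdisk, ← preimage_comp, hinv.comp_self, preimage_id]
  rw [← hΦ.setLIntegral_comp_preimage_emb Φ.toHomeomorph.measurableEmbedding, hpre]
  simp only [stdFun_comp, Function.comp_apply]

/-- Four reflected copies of `sector` cover the punctured plane: adjoin first the image under
`(x, y) ↦ (-x, y)`, then that of the union under `(x, y) ↦ (y, x)`. -/
theorem tame_setLIntegral_disk2 (h : LocalForm n f γ E) :
    Tame fun r => ∫⁻ p in disk2 r, ‖stdFun n f γ E p‖ₑ := by
  let N : (ℝ × ℝ) ≃L[ℝ] (ℝ × ℝ) := (ContinuousLinearEquiv.neg ℝ).prodCongr (.refl ℝ ℝ)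
  let S : (ℝ × ℝ) ≃L[ℝ] (ℝ × ℝ) := .prodComm ℝ ℝ ℝ
  have hN : MeasurePreserving N :=
    (Measure.measurePreserving_neg volume).prod (MeasurePreserving.id volume)
  have hS : MeasurePreserving S := Measure.measurePreserving_swap
  have htame := tame_setLIntegral_inter_union_preimage
    (tame_setLIntegral_inter_union_preimage tame_setLIntegral_disk2_inter_sector N hN
      (fun p => by simp [N]) fun r => by ext p; simp [N, disk2])
    S hS (fun p => by simp [S]) (fun r => by ext p; simp [S, disk2, add_comm]) h
  refine htame.congr' (.of_forall fun r => setLIntegral_congr ?_)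
  have hdouble {p : ℝ × ℝ} (hp : |p.2| < 3 / 2 * |p.1|) : p ∈ sector ∪ N ⁻¹' sector := by
    rcases abs_cases p.1 with ⟨h1, -⟩ | ⟨h1, -⟩ <;> rw [h1, abs_lt] at hp
    · exact .inl ⟨by linarith [hp.1], hp.2⟩
    · exact .inr ⟨show -(3 / 2) * -p.1 < p.2 by linarith [hp.1], hp.2⟩
  have hcover : {0}ᶜ ⊆ (sector ∪ N ⁻¹' sector) ∪ S ⁻¹' (sector ∪ N ⁻¹' sector) := by
    refine fun p hp => or_iff_not_imp_left.2 fun hp' => hdouble (show |p.1| < 3 / 2 * |p.2| from ?_)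
    have hle := not_lt.1 (mt hdouble hp')
    by_contra! hle'
    exact hp (Prod.ext (abs_nonpos_iff.1 (by linarith)) (abs_nonpos_iff.1 (by linarith)))
  have hae : ∀ᵐ p : ℝ × ℝ, p ∈ (sector ∪ N ⁻¹' sector) ∪ S ⁻¹' (sector ∪ N ⁻¹' sector) :=
    (measure_eq_zero_iff_ae_notMem.1 (measure_singleton (0 : ℝ × ℝ))).mono fun p hp => hcover hp
  filter_upwards [hae] with p hp
  exact propext (iff_self_and.2 fun _ => hp)

end LocalForm

end LocalForm

section Nonvanishing

variable {𝕜 E F A : Type*} [NontriviallyNormedField 𝕜] [NormedAddCommGroup E] [NormedSpace 𝕜 E]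
  [NormedSpace ℝ E] [NormedAddCommGroup F] [NormedSpace 𝕜 F] [CompleteSpace F]
  [NormedCommRing A] [NormedAlgebra 𝕜 A] [CompleteSpace A] [IsDomain A] {x : E}

theorem eventually_frequently_ne_zero {f : E → F} (hf : AnalyticAt 𝕜 f x)
    (h0 : ¬ ∀ᶠ p in 𝓝 x, f p = 0) : ∀ᶠ q in 𝓝 x, ∃ᶠ p in 𝓝 q, f p ≠ 0 := by
  obtain ⟨δ, hδ, hball⟩ := hf.exists_ball_analyticOnNhd
  filter_upwards [Metric.ball_mem_nhds x hδ] with q hq hzero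
  have hz := hball.eqOn_zero_of_preconnected_of_eventuallyEq_zero
    (convex_ball x δ).isPreconnected hq (hzero.mono fun p hp => not_not.1 hp)
  exact h0 (hz.eventuallyEq_of_mem (Metric.ball_mem_nhds x hδ))

theorem not_eventually_prod_eq_zero {ι : Type*} {f : ι → E → A}
    (hf : ∀ i, AnalyticAt 𝕜 (f i) x) (h0 : ∀ i, ¬ ∀ᶠ p in 𝓝 x, f i p = 0) (s : Finset ι) :
    ¬ ∀ᶠ p in 𝓝 x, ∏ i ∈ s, f i p = 0 := by
  classical
  induction s using Finset.induction_on with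
  | empty => simpa using (𝓝 x).neBot_iff.1 inferInstance
  | insert i s his ih =>
    simp only [Finset.prod_insert his]
    intro hzero
    refine ih ?_
    have hcont : ∀ᶠ q in 𝓝 x, ContinuousAt (fun p => ∏ i ∈ s, f i p) q :=
      (s.analyticAt_fun_prod fun i _ => hf i).eventually_analyticAt.mono
        fun q hq => hq.continuousAt
    filter_upwards [hcont, eventually_frequently_ne_zero (hf i) (h0 i),
      hzero.eventually_nhds] with q hq hne hz
    by_contra hq0
    obtain ⟨p, hp, hp0, hpz⟩ := (hne.and_eventually ((hq.eventually_ne hq0).and hz)).exists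
    exact mul_ne_zero hp hp0 hpz

end Nonvanishing

section Mass

theorem zero_mem_disk2 {r : ℝ} (hr : 0 < r) : (0 : ℝ × ℝ) ∈ disk2 r := by
  simpa [disk2] using pow_pos hr 2

variable {n : ℕ} {f : Fin n → ℝ × ℝ → ℝ} {γ : Fin n → ℝ} {E : Set (ℝ × ℝ)}

theorem stdFun_nonneg (f : Fin n → ℝ × ℝ → ℝ) (γ : Fin n → ℝ) (E : Set (ℝ × ℝ)) (p : ℝ × ℝ) :
    0 ≤ stdFun n f γ E p :=
  indicator_nonneg (fun _ _ => Finset.prod_nonneg fun _ _ => rpow_nonneg (abs_nonneg _) _) p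

theorem frequently_eventually_stdFun_ne_zero (hf : ∀ i, AnalyticAt ℝ (f i) 0)
    (hf0 : ∀ i, ¬ ∀ᶠ p in 𝓝 0, f i p = 0) (hE : 0 ∈ closure (interior E)) :
    ∃ᶠ p in 𝓝 0, ∀ᶠ q in 𝓝 p, stdFun n f γ E q ≠ 0 := by
  have hprod : AnalyticAt ℝ (fun p => ∏ i, f i p) 0 :=
    Finset.univ.analyticAt_fun_prod fun i _ => hf i
  have hne := eventually_frequently_ne_zero hprod (not_eventually_prod_eq_zero hf hf0 Finset.univ)
  rw [← frequently_frequently_nhds]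
  refine ((mem_closure_iff_frequently.1 hE).and_eventually
    (hne.and hprod.eventually_analyticAt.eventually_nhds)).mono fun q ⟨hqE, hq, hqa⟩ => ?_
  refine (hq.and_eventually (hqa.and (isOpen_interior.mem_nhds hqE))).mono
    fun p ⟨hp, hpa, hpE⟩ => ?_
  filter_upwards [hpa.continuousAt.eventually_ne hp, isOpen_interior.mem_nhds hpE] with z hz hzE
  rw [stdFun, indicator_of_mem (interior_subset hzE)]
  refine Finset.prod_ne_zero_iff.2 fun i hi => (rpow_pos_of_pos (abs_pos.2 ?_) _).ne'
  exact Finset.prod_ne_zero_iff.1 hz i hi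

theorem setLIntegral_enorm_ne_zero {X F : Type*} [TopologicalSpace X] [MeasurableSpace X]
    [OpensMeasurableSpace X] [NormedAddCommGroup F] [MeasurableSpace F] [OpensMeasurableSpace F]
    {μ : Measure X} [μ.IsOpenPosMeasure] {g : X → F} {x : X} {U : Set X} (hU : U ∈ 𝓝 x)
    (hg : AEMeasurable g (μ.restrict U)) (h : ∃ᶠ p in 𝓝 x, ∀ᶠ q in 𝓝 p, g q ≠ 0) :
    ∫⁻ p in U, ‖g p‖ₑ ∂μ ≠ 0 := by
  intro hzero
  rw [lintegral_eq_zero_iff' hg.enorm] at hzero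
  obtain ⟨p, hp, hpU⟩ := (h.and_eventually (eventually_mem_nhds_iff.2 hU)).exists
  obtain ⟨W, hWsub, hW, hpW⟩ := mem_nhds_iff.1 (inter_mem hp hpU)
  have hnull : μ.restrict U W = 0 :=
    measure_mono_null (fun q hq => by simpa using (hWsub hq).1) (ae_iff.1 hzero)
  rw [Measure.restrict_apply hW.measurableSet,
    inter_eq_left.2 fun q hq => (hWsub hq).2] at hnull
  exact (hW.measure_pos μ ⟨p, hpW⟩).ne' hnull

theorem tendsto_volume_disk2 : Tendsto (fun r => volume (disk2 r)) (𝓝[>] 0) (𝓝 0) := by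
  have hlim : Tendsto (fun r : ℝ => ENNReal.ofReal (2 * r) * ENNReal.ofReal (2 * r)) (𝓝[>] 0)
      (𝓝 0) := by
    have h2r : Tendsto (fun r : ℝ => ENNReal.ofReal (2 * r)) (𝓝[>] 0) (𝓝 0) :=
      ((ENNReal.continuous_ofReal.comp (by fun_prop)).tendsto' _ _ (by simp)).mono_left
        nhdsWithin_le_nhds
    simpa using ENNReal.Tendsto.mul h2r (.inr ENNReal.zero_ne_top) h2r (.inr ENNReal.zero_ne_top)
  refine tendsto_of_tendsto_of_tendsto_of_le_of_le' tendsto_const_nhds hlim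
    (.of_forall fun _ => zero_le) ?_
  filter_upwards [self_mem_nhdsWithin] with r hr
  refine (measure_mono (disk2_subset_prod hr)).trans_eq ?_
  rw [Measure.volume_eq_prod, Measure.prod_prod, Real.volume_Ioo]
  ring_nf

theorem tendsto_setIntegral_disk2_zero {F : Type*} [NormedAddCommGroup F] [NormedSpace ℝ F]
    {g : ℝ × ℝ → F} (hg : IntegrableAtFilter g (𝓝 0)) :
    Tendsto (fun r => ∫ p in disk2 r, g p) (𝓝[>] 0) (𝓝 0) := by
  obtain ⟨U, hU, hint⟩ := hg
  have hvol : Tendsto (volume.restrict U ∘ disk2) (𝓝[>] 0) (𝓝 0) :=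
    tendsto_of_tendsto_of_tendsto_of_le_of_le tendsto_const_nhds tendsto_volume_disk2
      (fun _ => zero_le) fun r => Measure.restrict_apply_le U _
  refine (hint.tendsto_setIntegral_nhds_zero hvol).congr' ?_
  filter_upwards [eventually_disk2_subset hU] with r hr
  rw [Measure.restrict_restrict (isOpen_disk2 r).measurableSet, inter_eq_left.2 hr]

theorem exists_isTheta_setIntegral_stdFun (hf : ∀ i, AnalyticAt ℝ (f i) 0)
    (hf0 : ∀ i, ¬ ∀ᶠ p in 𝓝 0, f i p = 0) (hint : IntegrableAtFilter (stdFun n f γ E) (𝓝 0))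
    (hE : HasAnalyticFrontier E) (hE0 : 0 ∈ closure (interior E)) :
    ∃ (ε : ℝ) (d : ℕ), 0 < ε ∧ d ≤ 1 ∧
      (fun r => ∫ p in disk2 r, stdFun n f γ E p) =Θ[𝓝[>] 0] powLog ε d := by
  obtain ⟨U, hU, hintU⟩ := id hint
  have hlocal : LocalForm n f γ E := ⟨hf, hf0, ⟨U, hU, hintU.aestronglyMeasurable⟩, hE⟩
  have hdisk : ∀ᶠ r in 𝓝[>] (0 : ℝ), 0 < r ∧ IntegrableOn (stdFun n f γ E) (disk2 r) := by
    filter_upwards [self_mem_nhdsWithin, eventually_disk2_subset hU] with r hr hrU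
    exact ⟨hr, hintU.mono_set hrU⟩
  rcases hlocal.tame_setLIntegral_disk2 with hzero | htop | ⟨s, d, hd, hcomp⟩
  · obtain ⟨r, hr, hr0, hrint⟩ := (hzero.and hdisk).exists
    exact absurd hr <| setLIntegral_enorm_ne_zero ((isOpen_disk2 r).mem_nhds (zero_mem_disk2 hr0))
      hrint.aemeasurable (frequently_eventually_stdFun_ne_zero hf hf0 hE0)
  · obtain ⟨r, hr, -, hrint⟩ := (htop.and hdisk).exists
    exact absurd hr hrint.2.ne
  · have htheta : (fun r => ∫ p in disk2 r, stdFun n f γ E p) =Θ[𝓝[>] 0] powLog s d := by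
      refine EComparable.isTheta ((EComparable.of_eventuallyEq ?_).trans hcomp)
      filter_upwards [hdisk] with r hr
      rw [← ofReal_integral_norm_eq_lintegral_enorm hr.2,
        enorm_of_nonneg (integral_nonneg (stdFun_nonneg f γ E))]
      simp only [norm_of_nonneg (stdFun_nonneg f γ E _)]
    exact ⟨s, d, pos_of_tendsto_powLog_zero
      (htheta.tendsto_zero_iff.1 (tendsto_setIntegral_disk2_zero hint)), hd, htheta⟩

end Mass

section StandardDomain

variable {r₀ : ℝ} {C E : Set (ℝ × ℝ)}

theorem frontier_iUnion_subset_iUnion_frontier {X ι : Type*} [TopologicalSpace X] [Finite ι]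
    (s : ι → Set X) : frontier (⋃ i, s i) ⊆ ⋃ i, frontier (s i) := by
  rintro p ⟨hcl, hint⟩
  rw [closure_iUnion_of_finite] at hcl
  obtain ⟨i, hi⟩ := mem_iUnion.1 hcl
  exact mem_iUnion.2 ⟨i, hi, fun h => hint (interior_mono (subset_iUnion s i) h)⟩

theorem eventually_notMem_circle2 (hr₀ : 0 < r₀) : ∀ᶠ p in 𝓝 (0 : ℝ × ℝ), p ∉ circle2 r₀ :=
  mem_of_superset ((isOpen_disk2 r₀).mem_nhds (zero_mem_disk2 hr₀)) fun _ hp hpc => hp.ne hpc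

theorem IsPuiseuxBdryCurve.zero_mem (hC : IsPuiseuxBdryCurve r₀ C) : (0 : ℝ × ℝ) ∈ C := by
  obtain ⟨N, h, σ, a, c, hN, -, ha, -, h0, hc, -, -, rfl⟩ := hC
  refine ⟨0, ⟨le_rfl, ha.le⟩, ?_⟩
  have hroot : (0 : ℝ) ^ ((N : ℝ)⁻¹) = 0 := zero_rpow (by positivity)
  rcases hc with hc | hc <;> simp [hc, hroot, h0]

theorem IsPuiseuxBdryCurve.isAnalyticArc (hC : IsPuiseuxBdryCurve r₀ C) : IsAnalyticArc C := by
  obtain ⟨N, h, σ, a, c, hN, hσ, ha, hh, h0, hc, -, -, rfl⟩ := hC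
  have hh0 : AnalyticAt ℝ h 0 := hh 0 ⟨le_rfl, rpow_nonneg ha.le _⟩
  have hpow : AnalyticAt ℝ (fun s : ℝ => σ * s ^ N) 0 := by fun_prop
  have hroot {η t : ℝ} (hη : 0 < η) (ht : 0 ≤ t) (hlt : |σ * t| < η ^ N) :
      t ^ (N : ℝ)⁻¹ ∈ Ico 0 η ∧ (t ^ (N : ℝ)⁻¹) ^ N = t := by
    have hrootpow := rpow_inv_natCast_pow ht hN.ne'
    refine ⟨⟨rpow_nonneg ht _, lt_of_pow_lt_pow_left₀ N hη.le ?_⟩, hrootpow⟩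
    rw [hrootpow]
    rcases hσ with rfl | rfl <;> simpa [abs_of_nonneg ht] using hlt
  have hnhds (η : ℝ) (hη : 0 < η) : ∀ᶠ p in 𝓝 (0 : ℝ × ℝ), |p.1| < η ^ N ∧ |p.2| < η ^ N :=
    ((continuous_fst.abs.tendsto' 0 0 (by simp)).eventually_lt_const (pow_pos hη N)).and
      ((continuous_snd.abs.tendsto' 0 0 (by simp)).eventually_lt_const (pow_pos hη N))
  rcases hc with hc | hc
  · refine ⟨fun s => (σ * s ^ N, h s), hpow.prod hh0, by simp [hN.ne', h0], fun η hη => ?_⟩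
    filter_upwards [hnhds η hη] with p hp
    rintro ⟨t, ht, rfl⟩
    rw [hc] at hp ⊢
    obtain ⟨hmem, hrootpow⟩ := hroot hη ht.1 hp.1
    exact ⟨_, hmem, by simp only [hrootpow]⟩
  · refine ⟨fun s => (h s, σ * s ^ N), hh0.prod hpow, by simp [hN.ne', h0], fun η hη => ?_⟩
    filter_upwards [hnhds η hη] with p hp
    rintro ⟨t, ht, rfl⟩
    rw [hc] at hp ⊢
    obtain ⟨hmem, hrootpow⟩ := hroot hη ht.1 hp.2
    exact ⟨_, hmem, by simp only [hrootpow]⟩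

theorem IsStdDomain.hasAnalyticFrontier (hE : IsStdDomain E) : HasAnalyticFrontier E := by
  obtain ⟨r₀, hr₀, rfl | ⟨m, Es, Cs, -, rfl, -, hC, hreg, -⟩⟩ := hE
  · refine ⟨∅, finite_empty, by simp, ?_⟩
    filter_upwards [(isOpen_disk2 r₀).mem_nhds (zero_mem_disk2 hr₀)] with p hp hfr
    exact absurd ((isOpen_disk2 r₀).interior_eq.symm ▸ hp) hfr.2
  · refine ⟨range fun q : Fin m × Fin 2 => Cs q.1 q.2, finite_range _, ?_, ?_⟩
    · rintro _ ⟨q, rfl⟩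
      exact (hC q.1 q.2).isAnalyticArc
    · filter_upwards [eventually_notMem_circle2 hr₀] with p hp hfr
      obtain ⟨i, hi⟩ := mem_iUnion.1 (frontier_iUnion_subset_iUnion_frontier _ hfr)
      obtain ⟨-, -, -, A, hA, -, hfrA⟩ := hreg i
      rw [hfrA] at hi
      rcases hi with (hi | hi) | hi
      · exact ⟨_, ⟨(i, 0), rfl⟩, hi⟩
      · exact ⟨_, ⟨(i, 1), rfl⟩, hi⟩
      · exact absurd (hA hi) hp

theorem IsStdDomain.isOpen (hE : IsStdDomain E) : IsOpen E := by
  obtain ⟨r₀, -, rfl | ⟨m, Es, Cs, -, rfl, -, -, hreg, -⟩⟩ := hE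
  · exact isOpen_disk2 r₀
  · exact isOpen_iUnion fun i => (hreg i).1

theorem IsStdDomain.zero_mem_closure (hE : IsStdDomain E) : (0 : ℝ × ℝ) ∈ closure E := by
  obtain ⟨r₀, hr₀, rfl | ⟨m, Es, Cs, hm, rfl, -, hC, hreg, -⟩⟩ := hE
  · exact subset_closure (zero_mem_disk2 hr₀)
  · obtain ⟨-, -, -, A, -, -, hfr⟩ := hreg ⟨0, hm⟩
    have h0 : (0 : ℝ × ℝ) ∈ frontier (Es ⟨0, hm⟩) := by
      rw [hfr]
      exact .inl (.inl (hC _ _).zero_mem)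
    exact closure_mono (subset_iUnion Es _) (frontier_subset_closure h0)

end StandardDomain

theorem ball_integral_bound_general {n : ℕ} (f : Fin n → ℝ × ℝ → ℝ) (γ : Fin n → ℝ)
    (E : Set (ℝ × ℝ)) (hf : ∀ i, AnalyticAt ℝ (f i) 0)
    (hf0 : ∀ i, ¬ ∀ᶠ p in 𝓝 0, f i p = 0) (hint : IntegrableAtFilter (stdFun n f γ E) (𝓝 0))
    (hE : HasAnalyticFrontier E) (hE0 : 0 ∈ closure (interior E)) :
    ∃ (c₁ c₂ c₃ ε : ℝ) (d : ℕ), 0 < c₁ ∧ 0 < c₂ ∧ 0 < c₃ ∧ 0 < ε ∧ (d = 0 ∨ d = 1) ∧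
      ∀ r : ℝ, 0 < r → r < c₃ →
        c₁ * r ^ ε * |Real.log r| ^ d ≤ (∫ p in disk2 r, stdFun n f γ E p) ∧
        (∫ p in disk2 r, stdFun n f γ E p) ≤ c₂ * r ^ ε * |Real.log r| ^ d := by
  obtain ⟨ε, d, hε, hd, hle, hge⟩ := exists_isTheta_setIntegral_stdFun hf hf0 hint hE hE0
  obtain ⟨c₂, hc₂, hle⟩ := hle.exists_pos
  obtain ⟨c₁, hc₁, hge⟩ := hge.exists_pos
  obtain ⟨c₃, hc₃, hsub⟩ := mem_nhdsGT_iff_exists_Ioo_subset.1 (hle.bound.and hge.bound)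
  refine ⟨c₁⁻¹, c₂, c₃, ε, d, inv_pos.2 hc₁, hc₂, hc₃, hε, by lia, fun r hr hrc => ?_⟩
  obtain ⟨hupper, hlower⟩ := hsub ⟨hr, hrc⟩
  rw [norm_of_nonneg (integral_nonneg (stdFun_nonneg f γ E)),
    norm_of_nonneg (by unfold powLog; positivity)] at hupper hlower
  rw [mul_assoc, mul_assoc, inv_mul_le_iff₀ hc₁]
  exact ⟨hlower, hupper⟩

theorem ball_integral_bound {n : ℕ} (f : Fin n → ℝ × ℝ → ℝ) (γ : Fin n → ℝ)
    (E : Set (ℝ × ℝ)) (hsf : StandardForm n f γ E) :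
    ∃ (c₁ c₂ c₃ ε : ℝ) (d : ℕ), 0 < c₁ ∧ 0 < c₂ ∧ 0 < c₃ ∧ 0 < ε ∧ (d = 0 ∨ d = 1) ∧
      ∀ r : ℝ, 0 < r → r < c₃ →
        c₁ * r ^ ε * |Real.log r| ^ d ≤ (∫ p in disk2 r, stdFun n f γ E p) ∧
        (∫ p in disk2 r, stdFun n f γ E p) ≤ c₂ * r ^ ε * |Real.log r| ^ d := by
  obtain ⟨U, hU, hf⟩ := hsf.analytic
  exact ball_integral_bound_general f γ E (fun i => hf i 0 (mem_of_mem_nhds hU)) hsf.nontriv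
    hsf.integ hsf.domain.hasAnalyticFrontier
    (hsf.domain.isOpen.interior_eq.symm ▸ hsf.domain.zero_mem_closure)
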